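/- arXiv:2203.09274 — 5 statements merged into one kernel-verified Lean document; each statement's English description precedes it below -/
import Mathlib

section
/- Let a ∈ ℝ, b = 8π, and let ρ > 0 be a real number whose square root √ρ is rational. Then the ℂ-vector space 𝒮_ρ(a,b) has dimension 4 if √ρ is an integer, and dimension 2 if √ρ ∈ ℚ\ℤ. In particular, there exist almost Kähler metrics compatible with the same almost complex structure J_{a,8π} on the Kodaira–Thurston manifold whose associated Hodge numbers h^{0,1} differ. -/
/-!
Write `T, X, Z` for the coordinate derivatives and `D = ∂/∂y + x ∂/∂z`, so that `[X, D] = Z` is the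
only nontrivial commutator, and let `r = √ρ`. In the variables `p = r f + g`, `q = r f - g` the
system (with `b = 8π`) becomes `B p = (r(T + 2π) - E) q`, `B* q = (r(T + 2π) + E) p`, where
`E = (i/8π) Z`, `B = i r (X - 2πi) - (D - (a/8π) Z)`, and `B*` is the formal adjoint of `B`; moreover
`B B* = B* B + 2 i r Z`. Eliminating one unknown gives
`B* B p = (r²(T + 2π)² - E²) p` and `B B* q = (r²(T + 2π)² - E²) q`.

* Pairing with `T p` and taking real parts shows `T p = 0`, and likewise `T q = 0` (`T_elim`).
* On the `n`-th Fourier mode in `z`, `E` is the scalar `-n/4` and `2 i r Z` is `-4π r n`. For `n ≠ 0`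
  this is a harmonic oscillator: applying `B*` repeatedly to `p` (or `B` to `q` if `n < 0`)
  multiplies squared norms by `4π²r² - n²/16 - 4π r |n| (j + 1)`, `j = 0, 1, …`. These numbers
  are eventually negative, and they never vanish because `π` is not a root of a rational quadratic
  (`no_resonance`). Squared norms being nonnegative, the mode vanishes (`ladder`, `PQ.nn_zero`).
* The mode `n = 0` lives on the 3-torus, where each Fourier coefficient satisfies a `2 × 2` linear
  system, singular exactly at the frequencies `(0,0,0)`, `(0,2,0)` and, if `r` is an integer,
  `(0,1,±r)` (`zero_mode_cases`). Each singular frequency contributes one solution, hence the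
  dimensions `2` and `4` (`dim_two`, `dim_four`).

That `π` is not quadratic over `ℚ` is proved by Lindemann's argument from Mathlib's
`LindemannWeierstrass.exp_polynomial_approx`.
-/

open Complex MeasureTheory

noncomputable section

/-- Functions of four real variables `(t, x, y, z)` with complex values. -/
abbrev F4 : Type := ℝ → ℝ → ℝ → ℝ → ℂ

/-- Smoothness of a function of four real variables. -/
def Smooth4 (f : F4) : Prop :=
  ContDiff ℝ (⊤ : ℕ∞) (fun p : ℝ × ℝ × ℝ × ℝ => f p.1 p.2.1 p.2.2.1 p.2.2.2)

/-- The invariance properties identifying smooth functions on `ℝ⁴` with smooth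
functions on the Kodaira–Thurston manifold `KT⁴`. -/
def KTPeriodic (f : F4) : Prop :=
  ∀ t x y z : ℝ,
    f (t + 1) x y z = f t x y z ∧
    f t (x + 1) y (z + y) = f t x y z ∧
    f t x (y + 1) z = f t x y z ∧
    f t x y (z + 1) = f t x y z

/-- Partial derivative in `t`. -/
def pT (f : F4) (t x y z : ℝ) : ℂ := deriv (fun s => f s x y z) t
/-- Partial derivative in `x`. -/
def pX (f : F4) (t x y z : ℝ) : ℂ := deriv (fun s => f t s y z) x
/-- Partial derivative in `y`. -/
def pY (f : F4) (t x y z : ℝ) : ℂ := deriv (fun s => f t x s z) y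
/-- Partial derivative in `z`. -/
def pZ (f : F4) (t x y z : ℝ) : ℂ := deriv (fun s => f t x y s) z

/-- The vector field `V₁ = (1/2)(∂/∂t − i ∂/∂x)`. -/
def V₁ (f : F4) (t x y z : ℝ) : ℂ :=
  (1 / 2) * (pT f t x y z - Complex.I * pX f t x y z)

/-- The conjugate vector field `V̄₁ = (1/2)(∂/∂t + i ∂/∂x)`. -/
def V₁c (f : F4) (t x y z : ℝ) : ℂ :=
  (1 / 2) * (pT f t x y z + Complex.I * pX f t x y z)

/-- The vector field `V₂ = (1/2)(∂/∂y + x ∂/∂z − ((a−i)/b) ∂/∂z)`. -/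
def V₂ (a b : ℝ) (f : F4) (t x y z : ℝ) : ℂ :=
  (1 / 2) * (pY f t x y z + (x : ℂ) * pZ f t x y z -
    (((a : ℂ) - Complex.I) / (b : ℂ)) * pZ f t x y z)

/-- The conjugate vector field `V̄₂ = (1/2)(∂/∂y + x ∂/∂z − ((a+i)/b) ∂/∂z)`. -/
def V₂c (a b : ℝ) (f : F4) (t x y z : ℝ) : ℂ :=
  (1 / 2) * (pY f t x y z + (x : ℂ) * pZ f t x y z -
    (((a : ℂ) + Complex.I) / (b : ℂ)) * pZ f t x y z)

/-- The space `𝒮(a,b)` of pairs `(f,g)` of smooth KT-periodic functions satisfying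
`−V̄₂(f) + V̄₁(g) + (b/4)g = 0` and `V₁(f) + V₂(g) = 0`. -/
def Sol (a b : ℝ) : Set (F4 × F4) :=
  {fg | Smooth4 fg.1 ∧ Smooth4 fg.2 ∧ KTPeriodic fg.1 ∧ KTPeriodic fg.2 ∧
    (∀ t x y z : ℝ,
      -V₂c a b fg.1 t x y z + V₁c fg.2 t x y z + ((b : ℂ) / 4) * fg.2 t x y z = 0) ∧
    (∀ t x y z : ℝ, V₁ fg.1 t x y z + V₂ a b fg.2 t x y z = 0)}

/-- `S` is a `ℂ`-subspace of dimension exactly `n`: there are `n` linearly independent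
elements whose span is exactly `S`. -/
def HasDimOver {V : Type*} [AddCommGroup V] [Module ℂ V] (S : Set V) (n : ℕ) : Prop :=
  ∃ v : Fin n → V, LinearIndependent ℂ v ∧
    (Submodule.span ℂ (Set.range v) : Set V) = S

end

/-- The space `𝒮_ρ(a,b)` of pairs `(f,g)` of smooth KT-periodic functions satisfying
`−V̄₂(f) + V̄₁(g) + (b/4)g = 0` and `ρ·V₁(f) + V₂(g) = 0`; its dimension is the Hodge
number `h^{0,1}` for the almost Kähler metric `h_{a,b,ρ}`. -/
def SolRho (a b ρ : ℝ) : Set (F4 × F4) :=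
  {fg | Smooth4 fg.1 ∧ Smooth4 fg.2 ∧ KTPeriodic fg.1 ∧ KTPeriodic fg.2 ∧
    (∀ t x y z : ℝ,
      -V₂c a b fg.1 t x y z + V₁c fg.2 t x y z + ((b : ℂ) / 4) * fg.2 t x y z = 0) ∧
    (∀ t x y z : ℝ, (ρ : ℂ) * V₁ fg.1 t x y z + V₂ a b fg.2 t x y z = 0)}

/-! ### `π` is not quadratic -/

section PiPart
open Polynomial
open scoped Nat

/-- Newton's recursion: power sums of two numbers lie in every ring containing their sum and
their product. -/
theorem powersum_mem (R : Subring ℂ) (x y : ℂ) (hs : x + y ∈ R) (hp : x * y ∈ R) (k : ℕ) :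
    x ^ k + y ^ k ∈ R := by
  induction k using Nat.strong_induction_on with
  | _ k ih =>
    match k with
    | 0 => simpa using R.add_mem R.one_mem R.one_mem
    | 1 => simpa using hs
    | k + 2 =>
      have h : x ^ (k + 2) + y ^ (k + 2)
          = (x + y) * (x ^ (k + 1) + y ^ (k + 1)) - x * y * (x ^ k + y ^ k) := by ring
      rw [h]
      exact R.sub_mem (R.mul_mem hs (ih _ (by omega))) (R.mul_mem hp (ih _ (by omega)))

/-- Homogenization of an integer polynomial: multiplying `g(x)` by a high power of `d` turns it
into an integer polynomial expression in `d` and `d x`. -/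
theorem clear_denominators (g : ℤ[X]) (d : ℂ) (m : ℕ) (hm : g.natDegree ≤ m) (x : ℂ) :
    d ^ m * aeval x g = ∑ k ∈ Finset.range (m + 1), (g.coeff k : ℂ) * d ^ (m - k) * (d * x) ^ k := by
  rw [aeval_eq_sum_range' (Nat.lt_succ_of_le hm), Finset.mul_sum]
  refine Finset.sum_congr rfl fun k hk => ?_
  have hk' : k ≤ m := by simpa [Nat.lt_succ_iff] using hk
  have : d ^ m = d ^ (m - k) * d ^ k := by rw [← pow_add, Nat.sub_add_cancel hk']
  rw [this, zsmul_eq_mul]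
  ring

/-- `π` is not a root of the rational quadratic with sum of roots `S/D ≠ 0` and product of roots
`P/D² ≠ 0`. This is Lindemann's argument: if `β` is the other root, then
`0 = (1 + e^{iπ})(1 + e^{iβ}) = 1 + e^{iπ} + e^{iβ} + e^{i(π+β)}`, and the simultaneous
approximation of the three exponentials by `aeval · g / n`, symmetrized and cleared of
denominators, makes an integer that is nonzero modulo a large prime have absolute value below
`1`. -/
theorem pi_not_quadratic_aux (D S P : ℤ) (hD : 0 < D) (hS : S ≠ 0) (hP : P ≠ 0) (β : ℝ)
    (hs : (D : ℝ) * (Real.pi + β) = S) (ht : (D : ℝ) ^ 2 * (Real.pi * β) = P) : False := by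
  have hD0 : (D : ℂ) ≠ 0 := by exact_mod_cast hD.ne'
  have hsC : (D : ℂ) * ((Real.pi : ℂ) + β) = S := by exact_mod_cast hs
  have htC : (D : ℂ) ^ 2 * ((Real.pi : ℂ) * β) = P := by exact_mod_cast ht
  set α : ℂ := (Real.pi : ℂ) with hα
  -- the integer polynomial with roots `±iπ`, `±iβ`, `±i(π+β)`
  set f : ℤ[X] := (C (D ^ 4) * X ^ 4 + C (D ^ 2 * (S ^ 2 - 2 * P)) * X ^ 2 + C (P ^ 2)) *
    (C (D ^ 2) * X ^ 2 + C (S ^ 2)) with hf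
  have hf0 : f.eval 0 ≠ 0 := by
    simp [hf, hS, hP]
  have hfne : f ≠ 0 := by
    intro h; apply hf0; simp [h]
  have hdeg : f.natDegree ≤ 6 := by
    rw [hf]; compute_degree
  have haev : ∀ w : ℂ, aeval w f = ((D : ℂ) ^ 4 * w ^ 4 + D ^ 2 * (S ^ 2 - 2 * P) * w ^ 2 + P ^ 2) *
      (D ^ 2 * w ^ 2 + S ^ 2) := by
    intro w
    have h2 : aeval w (2 : ℤ[X]) = 2 := map_ofNat _ 2
    simp [hf, h2]
  have hI4 : I ^ 4 = 1 := by rw [show (4 : ℕ) = 2 * 2 from rfl, pow_mul, I_sq]; norm_num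
  have hr1 : I * α ∈ f.aroots ℂ := by
    rw [mem_aroots]; refine ⟨hfne, ?_⟩
    rw [haev, mul_pow, mul_pow, hI4, I_sq, ← hsC, ← htC]; ring
  have hr2 : I * (β : ℂ) ∈ f.aroots ℂ := by
    rw [mem_aroots]; refine ⟨hfne, ?_⟩
    rw [haev, mul_pow, mul_pow, hI4, I_sq, ← hsC, ← htC]; ring
  have hr3 : I * (α + β) ∈ f.aroots ℂ := by
    rw [mem_aroots]; refine ⟨hfne, ?_⟩
    rw [haev, mul_pow, mul_pow, hI4, I_sq, ← hsC, ← htC]; ring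
  obtain ⟨c, hc⟩ := LindemannWeierstrass.exp_polynomial_approx f hf0
  -- a prime so large that the approximation error is below `1` after clearing denominators
  set M : ℝ := (D : ℝ) ^ 6 * |c| with hM
  have hlim : Filter.Tendsto (fun n : ℕ => 3 * M * (M ^ n / n !)) Filter.atTop (nhds (3 * M * 0)) :=
    (FloorSemiring.tendsto_pow_div_factorial_atTop M).const_mul _
  rw [mul_zero] at hlim
  obtain ⟨N, hN⟩ := Filter.eventually_atTop.1 (hlim.eventually (gt_mem_nhds one_pos))
  obtain ⟨p, hpge, hp⟩ := Nat.exists_infinite_primes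
    (N + 1 + (f.eval 0).natAbs + 1 + D.natAbs + 1)
  obtain ⟨n, hpn, g, hgdeg, hg⟩ := hc p (by omega) hp
  have hpD : ¬ (p : ℤ) ∣ D := by
    intro h
    have := Nat.le_of_dvd (by omega) (Int.natCast_dvd.mp h)
    omega
  have hsmall : 3 * (D : ℝ) ^ (6 * p) * (c ^ p / (p - 1)!) < 1 := by
    have h1 := hN (p - 1) (by omega)
    refine lt_of_le_of_lt ?_ h1
    have h2 : 3 * M * (M ^ (p - 1) / (p - 1)!) = 3 * (M ^ p / (p - 1)!) := by
      conv_rhs => rw [← Nat.sub_add_cancel hp.one_le, pow_succ]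
      simp only [Nat.add_sub_cancel]; ring
    have hD' : (0 : ℝ) ≤ (D : ℝ) ^ (6 * p) := by
      have : (0 : ℝ) ≤ D := by exact_mod_cast hD.le
      positivity
    have hcp : c ^ p ≤ |c| ^ p := (le_abs_self _).trans (abs_pow c p).le
    rw [h2, hM, mul_pow, ← pow_mul, mul_assoc, mul_div_assoc]
    gcongr
  set R : Subring ℂ := GaussianInt.toComplex.range with hR
  have hnum : ∀ k : ℤ, (k : ℂ) ∈ R := fun k => ⟨k, by simp⟩
  have hIR : I ∈ R := ⟨⟨0, 1⟩, by simp [GaussianInt.toComplex_def]⟩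
  have hdeg' : g.natDegree ≤ 6 * p := by
    refine hgdeg.trans ?_
    calc p * f.natDegree - 1 ≤ p * f.natDegree := Nat.sub_le _ _
      _ ≤ p * 6 := Nat.mul_le_mul_left _ hdeg
      _ = 6 * p := mul_comm _ _
  have hG : (D : ℂ) ^ (6 * p) * (aeval (I * α) g + aeval (I * (β : ℂ)) g + aeval (I * (α + β)) g)
      ∈ R := by
    rw [mul_add, mul_add]
    refine R.add_mem ?_ ?_
    · rw [clear_denominators g D _ hdeg', clear_denominators g D _ hdeg', ← Finset.sum_add_distrib]
      refine R.sum_mem fun k _ => ?_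
      rw [← mul_add]
      refine R.mul_mem (R.mul_mem (hnum _) (R.pow_mem (hnum _) _)) (powersum_mem R _ _ ?_ ?_ k)
      · rw [show (D : ℂ) * (I * α) + D * (I * β) = I * S by rw [← hsC]; ring]
        exact R.mul_mem hIR (hnum _)
      · rw [show (D : ℂ) * (I * α) * (D * (I * β)) = I * I * P by rw [← htC]; ring]
        exact R.mul_mem (R.mul_mem hIR hIR) (hnum _)
    · rw [clear_denominators g D _ hdeg']
      refine R.sum_mem fun k _ => ?_
      refine R.mul_mem (R.mul_mem (hnum _) (R.pow_mem (hnum _) _)) (R.pow_mem ?_ _)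
      rw [show (D : ℂ) * (I * (α + β)) = I * S by rw [← hsC]; ring]
      exact R.mul_mem hIR (hnum _)
  obtain ⟨⟨u, v⟩, huv⟩ := hG
  have hexp : 1 + exp (I * α) + exp (I * (β : ℂ)) + exp (I * (α + β)) = 0 := by
    rw [mul_add, exp_add, mul_comm I α, exp_pi_mul_I]; ring
  have e1 := hg hr1
  have e2 := hg hr2
  have e3 := hg hr3
  have key : (D : ℂ) ^ (6 * p) * n + p * GaussianInt.toComplex ⟨u, v⟩ =
      -((D : ℂ) ^ (6 * p) * ((n • exp (I * α) - p • aeval (I * α) g) +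
        (n • exp (I * (β : ℂ)) - p • aeval (I * (β : ℂ)) g) +
        (n • exp (I * (α + β)) - p • aeval (I * (α + β)) g))) := by
    rw [huv]
    simp only [zsmul_eq_mul, nsmul_eq_mul]
    linear_combination ((D : ℂ) ^ (6 * p) * n) * hexp
  have hle : ‖(D : ℂ) ^ (6 * p) * n + p * GaussianInt.toComplex ⟨u, v⟩‖ < 1 := by
    rw [key, norm_neg, norm_mul, norm_pow]
    have hDn : ‖(D : ℂ)‖ = D := by
      rw [Complex.norm_intCast, abs_of_pos (by exact_mod_cast hD)]
    rw [hDn]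
    refine lt_of_le_of_lt ?_ hsmall
    have : (0 : ℝ) ≤ (D : ℝ) ^ (6 * p) := by
      have : (0 : ℝ) ≤ D := by exact_mod_cast hD.le
      positivity
    calc _ ≤ (D : ℝ) ^ (6 * p) * (c ^ p / (p - 1)! + c ^ p / (p - 1)! + c ^ p / (p - 1)!) := by
          gcongr
          exact norm_add₃_le.trans (by gcongr)
      _ = _ := by ring
  have hre := (Complex.abs_re_le_norm _).trans_lt hle
  have hre2 : ((D : ℂ) ^ (6 * p) * n + p * GaussianInt.toComplex ⟨u, v⟩).re
      = ((D ^ (6 * p) * n + p * u : ℤ) : ℝ) := by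
    have : (D : ℂ) ^ (6 * p) * n + p * GaussianInt.toComplex ⟨u, v⟩
        = ((D ^ (6 * p) * n + p * u : ℤ) : ℂ) + ((p * v : ℤ) : ℂ) * I := by
      rw [GaussianInt.toComplex_def]; push_cast; ring
    rw [this]
    simp only [add_re, mul_re, I_re, I_im, intCast_re, intCast_im]; ring
  rw [hre2, ← Int.cast_abs] at hre
  have hz : D ^ (6 * p) * n + p * u = 0 := by
    have : |D ^ (6 * p) * n + p * u| < 1 := by exact_mod_cast hre
    exact Int.abs_lt_one_iff.1 this
  have hdvd : (p : ℤ) ∣ D ^ (6 * p) * n := ⟨-u, by linarith⟩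
  rcases (Nat.prime_iff_prime_int.1 hp).dvd_or_dvd hdvd with h | h
  · exact hpD ((Nat.prime_iff_prime_int.1 hp).dvd_of_dvd_pow h)
  · exact hpn h

/-- The ladder factors do not vanish: an equality would make `π` a root of a rational quadratic,
which is excluded by `irrational_pi` when `j = 0` and by `pi_not_quadratic_aux` otherwise. -/
theorem no_resonance (r : ℚ) (hr : 0 < r) (n : ℤ) (hn : n ≠ 0) (j : ℤ) :
    4 * Real.pi ^ 2 * (r : ℝ) ^ 2 - (n : ℝ) ^ 2 / 16 - 4 * Real.pi * r * n * j ≠ 0 := by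
  intro h
  have hr0 : (r : ℝ) ≠ 0 := by exact_mod_cast hr.ne'
  have hn0 : (n : ℝ) ≠ 0 := by exact_mod_cast hn
  have hpi := Real.pi_ne_zero
  have hd0 : (r.den : ℝ) ≠ 0 := by exact_mod_cast r.den_nz
  have hm0 : (r.num : ℝ) ≠ 0 := by exact_mod_cast (Rat.num_pos.2 hr).ne'
  have hrd : (r : ℝ) = r.num / r.den := by exact_mod_cast (Rat.num_div_den r).symm
  by_cases hj : j = 0
  · subst hj
    have h1 : (8 * Real.pi * r - n) * (8 * Real.pi * r + n) = 0 := by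
      push_cast at h; linear_combination 16 * h
    apply irrational_pi
    rcases mul_eq_zero.1 h1 with h2 | h2
    · refine ⟨n / (8 * r), ?_⟩
      push_cast
      field_simp; linarith
    · refine ⟨-n / (8 * r), ?_⟩
      push_cast
      field_simp; linarith
  -- `n j / r - π` is the conjugate root of the quadratic
  · refine pi_not_quadratic_aux (8 * r.num) (8 * n * j * r.den) (-(n * r.den) ^ 2)
      (by have := Rat.num_pos.2 hr; positivity) ?_ ?_ (n * j / r - Real.pi) ?_ ?_
    · have := r.den_nz; simp [hn, hj]
    · have := r.den_nz; simp [hn]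
    · push_cast; rw [hrd]; field_simp; ring
    · push_cast
      rw [hrd] at h ⊢
      field_simp at h ⊢
      linear_combination (-1 : ℝ) * h
end PiPart

noncomputable section

/-! ### One-variable facts -/

/-- The character `s ↦ exp (2πi n s)` of `ℝ / ℤ`. -/
def ex (n : ℤ) (s : ℝ) : ℂ := exp (2 * Real.pi * I * n * s)

@[fun_prop]
theorem continuous_ex (n : ℤ) : Continuous (ex n) := by unfold ex; fun_prop

theorem ex_zero_left (s : ℝ) : ex 0 s = 1 := by simp [ex]

theorem ex_zero_right (n : ℤ) : ex n 0 = 1 := by simp [ex]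

theorem ex_add (n : ℤ) (s u : ℝ) : ex n (s + u) = ex n s * ex n u := by
  unfold ex; rw [← exp_add]; push_cast; ring_nf

theorem ex_one (n : ℤ) : ex n 1 = 1 := by
  unfold ex; rw [exp_eq_one_iff]; exact ⟨n, by push_cast; ring⟩

theorem ex_add_one (n : ℤ) (s : ℝ) : ex n (s + 1) = ex n s := by
  rw [ex_add, ex_one, mul_one]

theorem conj_ex (n : ℤ) (s : ℝ) : (starRingEnd ℂ) (ex n s) = ex (-n) s := by
  unfold ex; rw [← exp_conj]; congr 1
  have h2 : (starRingEnd ℂ) 2 = 2 := map_ofNat _ 2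
  simp [h2]

theorem ex_mul_ex_neg (n : ℤ) (s : ℝ) : ex n s * ex (-n) s = 1 := by
  unfold ex; rw [← exp_add, exp_eq_one_iff]; exact ⟨0, by push_cast; ring⟩

theorem hasDerivAt_ex (n : ℤ) (s : ℝ) : HasDerivAt (ex n) (2 * Real.pi * I * n * ex n s) s := by
  have h : HasDerivAt (fun s : ℝ => (2 * Real.pi * I * n * s : ℂ)) (2 * Real.pi * I * n) s := by
    simpa using (Complex.ofRealCLM.hasDerivAt (x := s)).const_mul (2 * Real.pi * I * n : ℂ)
  have := h.cexp
  unfold ex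
  rw [mul_comm (2 * Real.pi * I * n : ℂ)]
  exact this

/-- A continuous 1-periodic function with vanishing Fourier coefficients is zero. -/
theorem eq_zero_of_fourier (φ : ℝ → ℂ) (hc : Continuous φ) (hp : ∀ s, φ (s + 1) = φ s)
    (h : ∀ n : ℤ, ∫ s in (0 : ℝ)..1, φ s * ex (-n) s = 0) (s : ℝ) : φ s = 0 := by
  have : Fact ((0 : ℝ) < 1) := ⟨one_pos⟩
  have hper : Function.Periodic φ 1 := hp
  have hcl : Continuous (hper.lift : AddCircle (1 : ℝ) → ℂ) := by
    refine continuous_coinduced_dom.mpr ?_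
    exact hc
  let F : C(AddCircle (1 : ℝ), ℂ) := ⟨hper.lift, hcl⟩
  have hF : fourierCoeff F = fun _ => 0 := by
    funext n
    rw [fourierCoeff_eq_intervalIntegral _ n 0]
    rw [one_div_one, one_smul, zero_add, ← h n]
    refine intervalIntegral.integral_congr fun u _ => ?_
    simp only [smul_eq_mul, fourier_coe_apply, ex]
    rw [mul_comm]
    congr 1
    simp
  have := has_pointwise_sum_fourier_series_of_summable (f := F) (by rw [hF]; exact summable_zero)
    (s : AddCircle (1 : ℝ))
  rw [hF] at this
  simp only [zero_smul] at this
  exact (this.unique hasSum_zero)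

theorem swap01 (F : ℝ → ℝ → ℂ) (hF : Continuous F.uncurry) :
    ∫ x in (0 : ℝ)..1, ∫ y in (0 : ℝ)..1, F x y = ∫ y in (0 : ℝ)..1, ∫ x in (0 : ℝ)..1, F x y := by
  refine intervalIntegral_intervalIntegral_swap ?_
  have : IntegrableOn F.uncurry (Set.Icc (0 : ℝ) 1 ×ˢ Set.Icc (0 : ℝ) 1) :=
    hF.continuousOn.integrableOn_compact (isCompact_Icc.prod isCompact_Icc)
  refine this.mono_set ?_
  rw [Set.uIoc_of_le zero_le_one]
  exact Set.prod_mono Set.Ioc_subset_Icc_self Set.Ioc_subset_Icc_self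

/-- Differentiation under the integral sign over `[0, 1]`. -/
theorem hasDerivAt_integral01 (F F' : ℝ → ℝ → ℂ) (hF : Continuous F.uncurry)
    (hF' : Continuous F'.uncurry) (h : ∀ s z, HasDerivAt (fun u => F u z) (F' s z) s) (s₀ : ℝ) :
    HasDerivAt (fun s => ∫ z in (0 : ℝ)..1, F s z) (∫ z in (0 : ℝ)..1, F' s₀ z) s₀ := by
  obtain ⟨C, hC⟩ := ((isCompact_Icc (a := s₀ - 1) (b := s₀ + 1)).prod
    (isCompact_Icc (a := (0 : ℝ)) (b := 1))).exists_bound_of_continuousOn hF'.continuousOn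
  refine (intervalIntegral.hasDerivAt_integral_of_dominated_loc_of_deriv_le
    (s := Set.Icc (s₀ - 1) (s₀ + 1)) (bound := fun _ => C) (F := F) (F' := F')
    (Icc_mem_nhds (by linarith) (by linarith)) ?_ ?_ ?_ ?_ ?_ ?_).2
  · exact Filter.Eventually.of_forall fun x => (hF.uncurry_left x).aestronglyMeasurable
  · exact (hF.uncurry_left s₀).intervalIntegrable _ _
  · exact (hF'.uncurry_left s₀).aestronglyMeasurable
  · refine Filter.Eventually.of_forall fun z hz x hx => hC (x, z) ⟨hx, ?_⟩
    rw [Set.uIoc_of_le zero_le_one] at hz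
    exact Set.Ioc_subset_Icc_self hz
  · exact intervalIntegrable_const
  · exact Filter.Eventually.of_forall fun z _ x _ => h x z

theorem eq_zero_of_integral_zero (φ : ℝ → ℝ) (hc : Continuous φ) (hp : ∀ s, φ (s + 1) = φ s)
    (h0 : ∀ s, 0 ≤ φ s) (h : ∫ s in (0 : ℝ)..1, φ s = 0) (s : ℝ) : φ s = 0 := by
  by_contra hne
  have hpos : 0 < φ s := lt_of_le_of_ne (h0 s) (Ne.symm hne)
  have hper : Function.Periodic φ 1 := hp
  have h1 : ∫ u in s..s + 1, φ u = 0 := by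
    rw [hper.intervalIntegral_add_eq s 0, zero_add]; exact h
  have h2 : 0 < ∫ u in s..s + 1, φ u :=
    intervalIntegral.integral_pos (by linarith) hc.continuousOn (fun x _ => h0 x)
      ⟨s, ⟨le_rfl, by linarith⟩, hpos⟩
  linarith

/-! ### Smooth functions on the Kodaira–Thurston manifold -/

/-- The uncurried form of a function of four variables. -/
def un (f : F4) : ℝ × ℝ × ℝ × ℝ → ℂ := fun p => f p.1 p.2.1 p.2.2.1 p.2.2.2

theorem Smooth4.un {f : F4} (hf : Smooth4 f) : ContDiff ℝ (⊤ : ℕ∞) (un f) := hf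

theorem Smooth4.diff {f : F4} (hf : Smooth4 f) : Differentiable ℝ (_root_.un f) :=
  hf.un.differentiable (by simp)

theorem hasDerivAt_line {f : F4} (hf : Smooth4 f) (γ : ℝ → ℝ × ℝ × ℝ × ℝ) (s : ℝ)
    (v : ℝ × ℝ × ℝ × ℝ) (hγ : HasDerivAt γ v s) :
    HasDerivAt (fun s => un f (γ s)) (fderiv ℝ (un f) (γ s) v) s :=
  (hf.diff (γ s)).hasFDerivAt.comp_hasDerivAt s hγ

theorem lineT {f : F4} (hf : Smooth4 f) (t x y z : ℝ) : HasDerivAt (fun s => f s x y z) (fderiv ℝ (un f) (t, x, y, z) (1, 0, 0, 0)) t :=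
  hasDerivAt_line hf (fun s => (s, x, y, z)) t _
    ((hasDerivAt_id t).prodMk (hasDerivAt_const t _))
theorem lineX {f : F4} (hf : Smooth4 f) (t x y z : ℝ) : HasDerivAt (fun s => f t s y z) (fderiv ℝ (un f) (t, x, y, z) (0, 1, 0, 0)) x :=
  hasDerivAt_line hf (fun s => (t, s, y, z)) x _
    ((hasDerivAt_const x _).prodMk ((hasDerivAt_id x).prodMk (hasDerivAt_const x _)))
theorem lineY {f : F4} (hf : Smooth4 f) (t x y z : ℝ) : HasDerivAt (fun s => f t x s z) (fderiv ℝ (un f) (t, x, y, z) (0, 0, 1, 0)) y :=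
  hasDerivAt_line hf (fun s => (t, x, s, z)) y _
    ((hasDerivAt_const y _).prodMk ((hasDerivAt_const y _).prodMk
      ((hasDerivAt_id y).prodMk (hasDerivAt_const y _))))
theorem lineZ {f : F4} (hf : Smooth4 f) (t x y z : ℝ) : HasDerivAt (fun s => f t x y s) (fderiv ℝ (un f) (t, x, y, z) (0, 0, 0, 1)) z :=
  hasDerivAt_line hf (fun s => (t, x, y, s)) z _
    ((hasDerivAt_const z _).prodMk ((hasDerivAt_const z _).prodMk
      ((hasDerivAt_const z _).prodMk (hasDerivAt_id z))))
theorem lineYZ {f : F4} (hf : Smooth4 f) (t x y z : ℝ) : HasDerivAt (fun s => f t x s (z + s))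
    (fderiv ℝ (un f) (t, x, y, z + y) (0, 0, 1, 1)) y :=
  hasDerivAt_line hf (fun s => (t, x, s, z + s)) y _
    ((hasDerivAt_const y _).prodMk ((hasDerivAt_const y _).prodMk
      ((hasDerivAt_id y).prodMk ((hasDerivAt_id y).const_add z))))

theorem pT_eq {f : F4} (hf : Smooth4 f) (t x y z : ℝ) :
    pT f t x y z = fderiv ℝ (un f) (t, x, y, z) (1, 0, 0, 0) :=
  (lineT hf t x y z).deriv
theorem pX_eq {f : F4} (hf : Smooth4 f) (t x y z : ℝ) :
    pX f t x y z = fderiv ℝ (un f) (t, x, y, z) (0, 1, 0, 0) :=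
  (lineX hf t x y z).deriv
theorem pY_eq {f : F4} (hf : Smooth4 f) (t x y z : ℝ) :
    pY f t x y z = fderiv ℝ (un f) (t, x, y, z) (0, 0, 1, 0) :=
  (lineY hf t x y z).deriv
theorem pZ_eq {f : F4} (hf : Smooth4 f) (t x y z : ℝ) :
    pZ f t x y z = fderiv ℝ (un f) (t, x, y, z) (0, 0, 0, 1) :=
  (lineZ hf t x y z).deriv

theorem hasT {f : F4} (hf : Smooth4 f) (t x y z : ℝ) :
    HasDerivAt (fun s => f s x y z) (pT f t x y z) t :=
  pT_eq hf t x y z ▸ lineT hf t x y z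
theorem hasX {f : F4} (hf : Smooth4 f) (t x y z : ℝ) :
    HasDerivAt (fun s => f t s y z) (pX f t x y z) x :=
  pX_eq hf t x y z ▸ lineX hf t x y z
theorem hasY {f : F4} (hf : Smooth4 f) (t x y z : ℝ) :
    HasDerivAt (fun s => f t x s z) (pY f t x y z) y :=
  pY_eq hf t x y z ▸ lineY hf t x y z
theorem hasZ {f : F4} (hf : Smooth4 f) (t x y z : ℝ) :
    HasDerivAt (fun s => f t x y s) (pZ f t x y z) z :=
  pZ_eq hf t x y z ▸ lineZ hf t x y z
theorem hasYZ {f : F4} (hf : Smooth4 f) (t x y z : ℝ) : HasDerivAt (fun s => f t x s (z + s))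
    (pY f t x y (z + y) + pZ f t x y (z + y)) y := by
  rw [pY_eq hf, pZ_eq hf, ← map_add]
  simpa using lineYZ hf t x y z

theorem smooth_dir {f : F4} (hf : Smooth4 f) (v : ℝ × ℝ × ℝ × ℝ) :
    ContDiff ℝ (⊤ : ℕ∞) (fun p => fderiv ℝ (un f) p v) :=
  (hf.un.fderiv_right (m := (⊤ : ℕ∞)) (by simp)).clm_apply contDiff_const

theorem un_pT {f : F4} (hf : Smooth4 f) : un (pT f) = fun p => fderiv ℝ (un f) p (1, 0, 0, 0) := by
  funext p; exact pT_eq hf _ _ _ _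
theorem un_pX {f : F4} (hf : Smooth4 f) : un (pX f) = fun p => fderiv ℝ (un f) p (0, 1, 0, 0) := by
  funext p; exact pX_eq hf _ _ _ _
theorem un_pY {f : F4} (hf : Smooth4 f) : un (pY f) = fun p => fderiv ℝ (un f) p (0, 0, 1, 0) := by
  funext p; exact pY_eq hf _ _ _ _
theorem un_pZ {f : F4} (hf : Smooth4 f) : un (pZ f) = fun p => fderiv ℝ (un f) p (0, 0, 0, 1) := by
  funext p; exact pZ_eq hf _ _ _ _

theorem smooth_of_un {f : F4} (h : ContDiff ℝ (⊤ : ℕ∞) (un f)) : Smooth4 f := h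

theorem smooth_pT {f : F4} (hf : Smooth4 f) : Smooth4 (pT f) := by
  apply smooth_of_un; rw [un_pT hf]; exact smooth_dir hf _
theorem smooth_pX {f : F4} (hf : Smooth4 f) : Smooth4 (pX f) := by
  apply smooth_of_un; rw [un_pX hf]; exact smooth_dir hf _
theorem smooth_pY {f : F4} (hf : Smooth4 f) : Smooth4 (pY f) := by
  apply smooth_of_un; rw [un_pY hf]; exact smooth_dir hf _
theorem smooth_pZ {f : F4} (hf : Smooth4 f) : Smooth4 (pZ f) := by
  apply smooth_of_un; rw [un_pZ hf]; exact smooth_dir hf _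

theorem dir_comm {f : F4} (hf : Smooth4 f) (v w p : ℝ × ℝ × ℝ × ℝ) :
    fderiv ℝ (fun q => fderiv ℝ (un f) q v) p w = fderiv ℝ (fun q => fderiv ℝ (un f) q w) p v := by
  have hs : IsSymmSndFDerivAt ℝ (un f) p :=
    hf.un.contDiffAt.isSymmSndFDerivAt (by simpa using WithTop.coe_le_coe.2 (le_top : (2 : ℕ∞) ≤ ⊤))
  have hd : DifferentiableAt ℝ (fderiv ℝ (un f)) p :=
    (hf.un.fderiv_right (m := (⊤ : ℕ∞)) (by simp)).differentiable (by simp) p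
  rw [fderiv_clm_apply hd (differentiableAt_const _), fderiv_clm_apply hd (differentiableAt_const _)]
  simpa using hs w v

/-- The invariant vector field `∂/∂y + x ∂/∂z`. -/
def pD (f : F4) (t x y z : ℝ) : ℂ := pY f t x y z + x * pZ f t x y z

theorem smooth_pD {f : F4} (hf : Smooth4 f) : Smooth4 (pD f) := by
  have h1 := smooth_pY hf
  have h2 := smooth_pZ hf
  unfold Smooth4 at *
  unfold pD
  refine h1.add (ContDiff.mul ?_ h2)
  exact Complex.ofRealCLM.contDiff.comp (contDiff_fst.comp contDiff_snd)

theorem comm_TX {f : F4} (hf : Smooth4 f) : pX (pT f) = pT (pX f) := by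
  funext t x y z
  rw [pX_eq (smooth_pT hf), pT_eq (smooth_pX hf), un_pT hf, un_pX hf, dir_comm hf]
theorem comm_TY {f : F4} (hf : Smooth4 f) : pY (pT f) = pT (pY f) := by
  funext t x y z
  rw [pY_eq (smooth_pT hf), pT_eq (smooth_pY hf), un_pT hf, un_pY hf, dir_comm hf]
theorem comm_TZ {f : F4} (hf : Smooth4 f) : pZ (pT f) = pT (pZ f) := by
  funext t x y z
  rw [pZ_eq (smooth_pT hf), pT_eq (smooth_pZ hf), un_pT hf, un_pZ hf, dir_comm hf]
theorem comm_XY {f : F4} (hf : Smooth4 f) : pX (pY f) = pY (pX f) := by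
  funext t x y z
  rw [pX_eq (smooth_pY hf), pY_eq (smooth_pX hf), un_pY hf, un_pX hf, dir_comm hf]
theorem comm_XZ {f : F4} (hf : Smooth4 f) : pX (pZ f) = pZ (pX f) := by
  funext t x y z
  rw [pX_eq (smooth_pZ hf), pZ_eq (smooth_pX hf), un_pZ hf, un_pX hf, dir_comm hf]
theorem comm_YZ {f : F4} (hf : Smooth4 f) : pY (pZ f) = pZ (pY f) := by
  funext t x y z
  rw [pY_eq (smooth_pZ hf), pZ_eq (smooth_pY hf), un_pZ hf, un_pY hf, dir_comm hf]

theorem comm_TD {f : F4} (hf : Smooth4 f) : pD (pT f) = pT (pD f) := by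
  funext t x y z
  unfold pD
  rw [comm_TY hf, comm_TZ hf]
  exact ((hasT (smooth_pY hf) t x y z).add ((hasT (smooth_pZ hf) t x y z).const_mul (x : ℂ))).deriv.symm
theorem comm_ZD {f : F4} (hf : Smooth4 f) : pD (pZ f) = pZ (pD f) := by
  funext t x y z
  unfold pD
  rw [comm_YZ hf]
  exact ((hasZ (smooth_pY hf) t x y z).add ((hasZ (smooth_pZ hf) t x y z).const_mul (x : ℂ))).deriv.symm
theorem comm_XD {f : F4} (hf : Smooth4 f) : pX (pD f) = pD (pX f) + pZ f := by
  funext t x y z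
  have h := ((hasX (smooth_pY hf) t x y z).add
    ((Complex.ofRealCLM.hasDerivAt (x := x)).mul (hasX (smooth_pZ hf) t x y z))).deriv
  change pX (pD f) t x y z = _ at h
  rw [h]
  simp only [Pi.add_apply, pD, comm_XY hf, comm_XZ hf, Complex.ofRealCLM_apply]
  push_cast
  ring

theorem per_pT {f : F4} (hp : KTPeriodic f) : KTPeriodic (pT f) := by
  intro t x y z
  refine ⟨?_, ?_, ?_, ?_⟩ <;> unfold pT
  · rw [← deriv_comp_add_const]; simp only [(hp _ _ _ _).1]
  · simp only [(hp _ _ _ _).2.1]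
  · simp only [(hp _ _ _ _).2.2.1]
  · simp only [(hp _ _ _ _).2.2.2]
theorem per_pX {f : F4} (hp : KTPeriodic f) : KTPeriodic (pX f) := by
  intro t x y z
  refine ⟨?_, ?_, ?_, ?_⟩ <;> unfold pX
  · simp only [(hp _ _ _ _).1]
  · rw [← deriv_comp_add_const]; simp only [(hp _ _ _ _).2.1]
  · simp only [(hp _ _ _ _).2.2.1]
  · simp only [(hp _ _ _ _).2.2.2]
theorem per_pZ {f : F4} (hp : KTPeriodic f) : KTPeriodic (pZ f) := by
  intro t x y z
  refine ⟨?_, ?_, ?_, ?_⟩ <;> unfold pZ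
  · simp only [(hp _ _ _ _).1]
  · rw [← deriv_comp_add_const]; simp only [(hp _ _ _ _).2.1]
  · simp only [(hp _ _ _ _).2.2.1]
  · rw [← deriv_comp_add_const]; simp only [(hp _ _ _ _).2.2.2]
theorem per_pD {f : F4} (hf : Smooth4 f) (hp : KTPeriodic f) : KTPeriodic (pD f) := by
  have hz := per_pZ hp
  intro t x y z
  refine ⟨?_, ?_, ?_, ?_⟩ <;> unfold pD
  · rw [(hz _ _ _ _).1]; unfold pY; simp only [(hp _ _ _ _).1]
  · have h := hasYZ hf t (x + 1) y z
    simp only [(hp _ _ _ _).2.1] at h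
    have h2 := h.unique (hasY hf t x y z)
    rw [(hz _ _ _ _).2.1] at h2 ⊢
    rw [← h2]; push_cast; ring
  · rw [(hz _ _ _ _).2.2.1]; unfold pY; rw [← deriv_comp_add_const]; simp only [(hp _ _ _ _).2.2.1]
  · rw [(hz _ _ _ _).2.2.2]; unfold pY; simp only [(hp _ _ _ _).2.2.2]

/-- The space of smooth functions on the Kodaira–Thurston manifold. -/
def KTS : Submodule ℂ F4 where
  carrier := {f | Smooth4 f ∧ KTPeriodic f}
  zero_mem' := ⟨contDiff_const, fun _ _ _ _ => ⟨rfl, rfl, rfl, rfl⟩⟩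
  add_mem' := by
    rintro f g ⟨hf, hf'⟩ ⟨hg, hg'⟩
    refine ⟨ContDiff.add hf hg, fun t x y z => ?_⟩
    simp only [Pi.add_apply, hf' t x y z, hg' t x y z, and_self]
  smul_mem' := by
    rintro c f ⟨hf, hf'⟩
    refine ⟨ContDiff.const_smul c hf, fun t x y z => ?_⟩
    simp only [Pi.smul_apply, hf' t x y z, and_self]

/-- `∂/∂t` on the Kodaira–Thurston manifold. -/
def opT : KTS →ₗ[ℂ] KTS where
  toFun f := ⟨pT f.1, smooth_pT f.2.1, per_pT f.2.2⟩
  map_add' f g := by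
    ext t x y z; exact ((hasT f.2.1 t x y z).add (hasT g.2.1 t x y z)).deriv
  map_smul' c f := by
    ext t x y z; exact ((hasT f.2.1 t x y z).const_smul c).deriv

/-- `∂/∂x` on the Kodaira–Thurston manifold. -/
def opX : KTS →ₗ[ℂ] KTS where
  toFun f := ⟨pX f.1, smooth_pX f.2.1, per_pX f.2.2⟩
  map_add' f g := by
    ext t x y z; exact ((hasX f.2.1 t x y z).add (hasX g.2.1 t x y z)).deriv
  map_smul' c f := by
    ext t x y z; exact ((hasX f.2.1 t x y z).const_smul c).deriv

/-- `∂/∂z` on the Kodaira–Thurston manifold. -/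
def opZ : KTS →ₗ[ℂ] KTS where
  toFun f := ⟨pZ f.1, smooth_pZ f.2.1, per_pZ f.2.2⟩
  map_add' f g := by
    ext t x y z; exact ((hasZ f.2.1 t x y z).add (hasZ g.2.1 t x y z)).deriv
  map_smul' c f := by
    ext t x y z; exact ((hasZ f.2.1 t x y z).const_smul c).deriv

/-- `∂/∂y + x ∂/∂z` on the Kodaira–Thurston manifold. -/
def opD : KTS →ₗ[ℂ] KTS where
  toFun f := ⟨pD f.1, smooth_pD f.2.1, per_pD f.2.1 f.2.2⟩
  map_add' f g := by
    ext t x y z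
    have h1 := ((hasY f.2.1 t x y z).add (hasY g.2.1 t x y z)).deriv
    have h2 := ((hasZ f.2.1 t x y z).add (hasZ g.2.1 t x y z)).deriv
    change pY (f.1 + g.1) t x y z = _ at h1
    change pZ (f.1 + g.1) t x y z = _ at h2
    change pY (f.1 + g.1) t x y z + x * pZ (f.1 + g.1) t x y z = pD f.1 t x y z + pD g.1 t x y z
    rw [h1, h2]; unfold pD; ring
  map_smul' c f := by
    ext t x y z
    have h1 := ((hasY f.2.1 t x y z).const_smul c).deriv
    have h2 := ((hasZ f.2.1 t x y z).const_smul c).deriv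
    change pY (c • f.1) t x y z = _ at h1
    change pZ (c • f.1) t x y z = _ at h2
    change pY (c • f.1) t x y z + x * pZ (c • f.1) t x y z = c • pD f.1 t x y z
    rw [h1, h2]; unfold pD; simp only [smul_eq_mul]; ring

theorem op_TX (f : KTS) : opX (opT f) = opT (opX f) := Subtype.ext (comm_TX f.2.1)
theorem op_TZ (f : KTS) : opZ (opT f) = opT (opZ f) := Subtype.ext (comm_TZ f.2.1)
theorem op_TD (f : KTS) : opD (opT f) = opT (opD f) := Subtype.ext (comm_TD f.2.1)
theorem op_XZ (f : KTS) : opX (opZ f) = opZ (opX f) := Subtype.ext (comm_XZ f.2.1)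
theorem op_DZ (f : KTS) : opD (opZ f) = opZ (opD f) := Subtype.ext (comm_ZD f.2.1)
theorem op_XD (f : KTS) : opX (opD f) = opD (opX f) + opZ f := Subtype.ext (comm_XD f.2.1)

/-! ### Fourier modes along the central circle -/

/-- The `n`-th Fourier coefficient in the central variable `z`. -/
def md (n : ℤ) (f : KTS) (t x y : ℝ) : ℂ := ∫ z in (0 : ℝ)..1, f.1 t x y z * ex (-n) z

theorem cont_int {X : Type*} [TopologicalSpace X] (F : X → ℝ → ℂ) (h : Continuous F.uncurry) :
    Continuous fun x => ∫ y in (0 : ℝ)..1, F x y :=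
  intervalIntegral.continuous_parametric_intervalIntegral_of_continuous' h 0 1

theorem KTS_cont (f : KTS) :
    Continuous fun p : ℝ × ℝ × ℝ × ℝ => f.1 p.1 p.2.1 p.2.2.1 p.2.2.2 :=
  f.2.1.continuous

theorem Smooth4.cont_comp {f : F4} (hf : Smooth4 f) {X : Type*} [TopologicalSpace X]
    {t x y z : X → ℝ} (ht : Continuous t) (hx : Continuous x) (hy : Continuous y)
    (hz : Continuous z) : Continuous fun p => f (t p) (x p) (y p) (z p) :=
  hf.continuous.comp (ht.prodMk (hx.prodMk (hy.prodMk hz)))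

theorem md_cont (n : ℤ) (f : KTS) :
    Continuous fun p : ℝ × ℝ × ℝ => md n f p.1 p.2.1 p.2.2 := by
  unfold md
  refine cont_int (fun (p : ℝ × ℝ × ℝ) z => f.1 p.1 p.2.1 p.2.2 z * ex (-n) z) ?_
  exact (f.2.1.cont_comp (by fun_prop) (by fun_prop) (by fun_prop) (by fun_prop)).mul (by fun_prop)

theorem md_cont_comp (n : ℤ) (f : KTS) {X : Type*} [TopologicalSpace X]
    {t x y : X → ℝ} (ht : Continuous t) (hx : Continuous x) (hy : Continuous y) :
    Continuous fun p => md n f (t p) (x p) (y p) :=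
  (md_cont n f).comp (ht.prodMk (hx.prodMk hy))

theorem md_integrable (n : ℤ) {f : F4} (hf : Smooth4 f) (t x y : ℝ) :
    IntervalIntegrable (fun z => f t x y z * ex (-n) z) volume 0 1 :=
  ((hf.cont_comp (by fun_prop) (by fun_prop) (by fun_prop) (by fun_prop)).mul
    (by fun_prop)).intervalIntegrable _ _

theorem md_add (n : ℤ) (f g : KTS) (t x y : ℝ) :
    md n (f + g) t x y = md n f t x y + md n g t x y := by
  unfold md
  rw [← intervalIntegral.integral_add (md_integrable n f.2.1 t x y) (md_integrable n g.2.1 t x y)]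
  congr 1; funext z
  change (f.1 t x y z + g.1 t x y z) * _ = _
  ring

theorem md_smul (n : ℤ) (c : ℂ) (f : KTS) (t x y : ℝ) :
    md n (c • f) t x y = c * md n f t x y := by
  unfold md
  rw [← intervalIntegral.integral_const_mul]
  congr 1; funext z
  change (c * f.1 t x y z) * _ = _
  ring

theorem md_hasT (n : ℤ) (f : KTS) (t x y : ℝ) :
    HasDerivAt (fun s => md n f s x y) (md n (opT f) t x y) t :=
  hasDerivAt_integral01 (fun s z => f.1 s x y z * ex (-n) z)
    (fun s z => (opT f).1 s x y z * ex (-n) z)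
    ((f.2.1.cont_comp (by fun_prop) (by fun_prop) (by fun_prop) (by fun_prop)).mul (by fun_prop))
    (((opT f).2.1.cont_comp (by fun_prop) (by fun_prop) (by fun_prop) (by fun_prop)).mul
      (by fun_prop))
    (fun s z => (hasT f.2.1 s x y z).mul_const _) t

theorem md_hasX (n : ℤ) (f : KTS) (t x y : ℝ) :
    HasDerivAt (fun s => md n f t s y) (md n (opX f) t x y) x :=
  hasDerivAt_integral01 (fun s z => f.1 t s y z * ex (-n) z)
    (fun s z => (opX f).1 t s y z * ex (-n) z)
    ((f.2.1.cont_comp (by fun_prop) (by fun_prop) (by fun_prop) (by fun_prop)).mul (by fun_prop))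
    (((opX f).2.1.cont_comp (by fun_prop) (by fun_prop) (by fun_prop) (by fun_prop)).mul
      (by fun_prop))
    (fun s z => (hasX f.2.1 t s y z).mul_const _) x

/-- Integration by parts over the circle in `z`. -/
theorem md_Z (n : ℤ) (f : KTS) (t x y : ℝ) :
    md n (opZ f) t x y = 2 * Real.pi * I * n * md n f t x y := by
  have hd : ∀ z : ℝ, HasDerivAt (fun z => f.1 t x y z * ex (-n) z)
      ((opZ f).1 t x y z * ex (-n) z + f.1 t x y z * (2 * Real.pi * I * (-n : ℤ) * ex (-n) z)) z :=
    fun z => (hasZ f.2.1 t x y z).mul (hasDerivAt_ex (-n) z)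
  have i1 := md_integrable n (opZ f).2.1 t x y
  have i2 : IntervalIntegrable
      (fun z => f.1 t x y z * (2 * Real.pi * I * (-n : ℤ) * ex (-n) z)) volume 0 1 :=
    ((f.2.1.cont_comp (by fun_prop) (by fun_prop) (by fun_prop) (by fun_prop)).mul
      (by fun_prop)).intervalIntegrable _ _
  have h := intervalIntegral.integral_eq_sub_of_hasDerivAt (a := 0) (b := 1)
    (fun z _ => hd z) (i1.add i2)
  rw [intervalIntegral.integral_add i1 i2] at h
  have hper := (f.2.2 t x y 0).2.2.2
  rw [zero_add] at hper
  rw [hper, ex_one, ex_zero_right, sub_self] at h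
  have h3 : ∫ z in (0 : ℝ)..1, f.1 t x y z * (2 * Real.pi * I * (-n : ℤ) * ex (-n) z)
      = -(2 * Real.pi * I * n) * md n f t x y := by
    unfold md
    rw [← intervalIntegral.integral_const_mul]
    congr 1; funext z; push_cast; ring
  rw [h3] at h
  unfold md at *
  linear_combination h

/-- On the `n`-th mode, `∂/∂y` differs from `D = ∂/∂y + x ∂/∂z` by the multiplication operator
`2πi n x`. -/
theorem md_hasY (n : ℤ) (f : KTS) (t x y : ℝ) :
    HasDerivAt (fun s => md n f t x s)
      (md n (opD f) t x y - x * (2 * Real.pi * I * n * md n f t x y)) y := by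
  have h := hasDerivAt_integral01 (fun s z => f.1 t x s z * ex (-n) z)
    (fun s z => pY f.1 t x s z * ex (-n) z)
    ((f.2.1.cont_comp (by fun_prop) (by fun_prop) (by fun_prop) (by fun_prop)).mul (by fun_prop))
    (((smooth_pY f.2.1).cont_comp (by fun_prop) (by fun_prop) (by fun_prop) (by fun_prop)).mul
      (by fun_prop))
    (fun s z => (hasY f.2.1 t x s z).mul_const _) y
  have e : ∫ z in (0 : ℝ)..1, pY f.1 t x y z * ex (-n) z =
      md n (opD f) t x y - x * (2 * Real.pi * I * n * md n f t x y) := by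
    rw [← md_Z]
    unfold md
    rw [← intervalIntegral.integral_const_mul, ← intervalIntegral.integral_sub
      (md_integrable n (opD f).2.1 t x y) ((md_integrable n (opZ f).2.1 t x y).const_mul _)]
    congr 1; funext z
    change _ = (pY f.1 t x y z + x * pZ f.1 t x y z) * _ - x * (pZ f.1 t x y z * _)
    ring
  rw [← e]; exact h

theorem md_perT (n : ℤ) (f : KTS) (t x y : ℝ) : md n f (t + 1) x y = md n f t x y := by
  unfold md; simp only [(f.2.2 _ _ _ _).1]

theorem md_perY (n : ℤ) (f : KTS) (t x y : ℝ) : md n f t x (y + 1) = md n f t x y := by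
  unfold md; simp only [(f.2.2 _ _ _ _).2.2.1]

/-- The modes are quasi-periodic in `x`: the shear `z ↦ z + y` becomes a phase in `y`. -/
theorem md_perX (n : ℤ) (f : KTS) (t x y : ℝ) :
    md n f t (x + 1) y = ex (-n) y * md n f t x y := by
  unfold md
  have hper : Function.Periodic (fun w => f.1 t x y w * ex (-n) (w + y)) 1 := by
    intro w
    simp only [(f.2.2 t x y w).2.2.2]
    rw [show w + 1 + y = w + y + 1 by ring, ex_add_one]
  have h1 : ∀ z, f.1 t (x + 1) y z * ex (-n) z
      = (fun w => f.1 t x y w * ex (-n) (w + y)) (z - y) := by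
    intro z
    have := (f.2.2 t x y (z - y)).2.1
    rw [sub_add_cancel] at this
    simp only [this, sub_add_cancel]
  simp_rw [h1]
  rw [intervalIntegral.integral_comp_sub_right (fun w => f.1 t x y w * ex (-n) (w + y)) y,
    show (1 : ℝ) - y = (0 - y) + 1 by ring, hper.intervalIntegral_add_eq (0 - y) 0, zero_add,
    ← intervalIntegral.integral_const_mul]
  congr 1; funext w; rw [ex_add]; ring

/-! ### The mode inner products -/

/-- Integration over the unit cube. -/
def I3 (G : ℝ → ℝ → ℝ → ℂ) : ℂ :=
  ∫ t in (0 : ℝ)..1, ∫ x in (0 : ℝ)..1, ∫ y in (0 : ℝ)..1, G t x y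

/-- Joint continuity of a function of three variables. -/
def C3 (G : ℝ → ℝ → ℝ → ℂ) : Prop := Continuous fun p : ℝ × ℝ × ℝ => G p.1 p.2.1 p.2.2

theorem C3.comp {G : ℝ → ℝ → ℝ → ℂ} (hG : C3 G) {X : Type*} [TopologicalSpace X]
    {t x y : X → ℝ} (ht : Continuous t) (hx : Continuous x) (hy : Continuous y) :
    Continuous fun p => G (t p) (x p) (y p) :=
  Continuous.comp hG (ht.prodMk (hx.prodMk hy))

theorem C3.int1 {G : ℝ → ℝ → ℝ → ℂ} (hG : C3 G) :
    Continuous fun p : ℝ × ℝ => ∫ y in (0 : ℝ)..1, G p.1 p.2 y :=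
  cont_int (fun (p : ℝ × ℝ) y => G p.1 p.2 y) (hG.comp (by fun_prop) (by fun_prop) (by fun_prop))

theorem C3.int2 {G : ℝ → ℝ → ℝ → ℂ} (hG : C3 G) :
    Continuous fun t => ∫ x in (0 : ℝ)..1, ∫ y in (0 : ℝ)..1, G t x y :=
  cont_int (fun t x => ∫ y in (0 : ℝ)..1, G t x y) hG.int1

theorem I3_add {G H : ℝ → ℝ → ℝ → ℂ} (hG : C3 G) (hH : C3 H) :
    I3 (fun t x y => G t x y + H t x y) = I3 G + I3 H := by
  unfold I3
  rw [← intervalIntegral.integral_add (hG.int2.intervalIntegrable _ _)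
    (hH.int2.intervalIntegrable _ _)]
  congr 1; funext t
  have aux : ∀ {K : ℝ → ℝ → ℝ → ℂ}, C3 K →
      IntervalIntegrable (fun x => ∫ y in (0 : ℝ)..1, K t x y) volume 0 1 := fun hK =>
    (hK.int1.comp (by fun_prop : Continuous fun x : ℝ => (t, x))).intervalIntegrable _ _
  rw [← intervalIntegral.integral_add (aux hG) (aux hH)]
  congr 1; funext x
  exact intervalIntegral.integral_add
    ((hG.comp continuous_const continuous_const continuous_id).intervalIntegrable _ _)
    ((hH.comp continuous_const continuous_const continuous_id).intervalIntegrable _ _)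

theorem I3_smul (c : ℂ) (G : ℝ → ℝ → ℝ → ℂ) : I3 (fun t x y => c * G t x y) = c * I3 G := by
  unfold I3; simp only [intervalIntegral.integral_const_mul]

theorem int_conj (F : ℝ → ℂ) :
    ∫ x in (0 : ℝ)..1, (starRingEnd ℂ) (F x) = (starRingEnd ℂ) (∫ x in (0 : ℝ)..1, F x) := by
  rw [intervalIntegral.integral_of_le zero_le_one, intervalIntegral.integral_of_le zero_le_one,
    integral_conj]

theorem I3_conj (G : ℝ → ℝ → ℝ → ℂ) :
    I3 (fun t x y => (starRingEnd ℂ) (G t x y)) = (starRingEnd ℂ) (I3 G) := by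
  unfold I3; simp only [int_conj]

theorem ftc_periodic {F F' : ℝ → ℂ} (h : ∀ s, HasDerivAt F (F' s) s) (hc : Continuous F')
    (hp : ∀ s, F (s + 1) = F s) : ∫ s in (0 : ℝ)..1, F' s = 0 := by
  rw [intervalIntegral.integral_eq_sub_of_hasDerivAt (fun s _ => h s) (hc.intervalIntegrable _ _)]
  have := hp 0
  rw [zero_add] at this
  rw [this, sub_self]

theorem I3_dy {G G' : ℝ → ℝ → ℝ → ℂ} (hc : C3 G')
    (h : ∀ t x y, HasDerivAt (fun s => G t x s) (G' t x y) y)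
    (hp : ∀ t x y, G t x (y + 1) = G t x y) : I3 G' = 0 := by
  unfold I3
  have : ∀ t x, ∫ y in (0 : ℝ)..1, G' t x y = 0 := fun t x =>
    ftc_periodic (h t x) (hc.comp continuous_const continuous_const continuous_id) (hp t x)
  simp [this]

theorem I3_dx {G G' : ℝ → ℝ → ℝ → ℂ} (hc : C3 G')
    (h : ∀ t x y, HasDerivAt (fun s => G t s y) (G' t x y) x)
    (hp : ∀ t x y, G t (x + 1) y = G t x y) : I3 G' = 0 := by
  unfold I3
  have : ∀ t y, ∫ x in (0 : ℝ)..1, G' t x y = 0 := fun t y =>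
    ftc_periodic (fun x => h t x y) (hc.comp continuous_const continuous_id continuous_const)
      (fun x => hp t x y)
  have h2 : ∀ t, ∫ x in (0 : ℝ)..1, ∫ y in (0 : ℝ)..1, G' t x y = 0 := fun t => by
    rw [swap01 (fun x y => G' t x y) (hc.comp (by fun_prop) (by fun_prop) (by fun_prop))]
    simp [this]
  simp [h2]

theorem I3_dt {G G' : ℝ → ℝ → ℝ → ℂ} (hc : C3 G')
    (h : ∀ t x y, HasDerivAt (fun s => G s x y) (G' t x y) t)
    (hp : ∀ t x y, G (t + 1) x y = G t x y) : I3 G' = 0 := by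
  unfold I3
  have : ∀ x y, ∫ t in (0 : ℝ)..1, G' t x y = 0 := fun x y =>
    ftc_periodic (fun t => h t x y) (hc.comp continuous_id continuous_const continuous_const)
      (fun t => hp t x y)
  have h2 : ∀ x, ∫ t in (0 : ℝ)..1, ∫ y in (0 : ℝ)..1, G' t x y = 0 := fun x => by
    rw [swap01 (fun t y => G' t x y) (hc.comp (by fun_prop) (by fun_prop) (by fun_prop))]
    simp [this]
  rw [swap01 (fun t x => ∫ y in (0 : ℝ)..1, G' t x y) hc.int1]
  simp [h2]

/-- The `L²` inner product of the `n`-th modes: a positive semidefinite Hermitian form on smooth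
functions, linear in the first argument. -/
def ip (n : ℤ) (f h : KTS) : ℂ := I3 fun t x y => md n f t x y * (starRingEnd ℂ) (md n h t x y)

theorem C3_ip (n : ℤ) (f h : KTS) :
    C3 fun t x y => md n f t x y * (starRingEnd ℂ) (md n h t x y) :=
  (md_cont n f).mul (Complex.continuous_conj.comp (md_cont n h))

theorem ip_add_left (n : ℤ) (f g h : KTS) : ip n (f + g) h = ip n f h + ip n g h := by
  unfold ip
  rw [← I3_add (C3_ip n f h) (C3_ip n g h)]
  simp only [md_add, add_mul]

theorem ip_smul_left (n : ℤ) (c : ℂ) (f h : KTS) : ip n (c • f) h = c * ip n f h := by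
  unfold ip
  rw [← I3_smul]
  simp only [md_smul, mul_assoc]

theorem ip_conj (n : ℤ) (f h : KTS) : (starRingEnd ℂ) (ip n f h) = ip n h f := by
  unfold ip
  rw [← I3_conj]
  simp only [map_mul, Complex.conj_conj, mul_comm]

theorem ip_add_right (n : ℤ) (f g h : KTS) : ip n f (g + h) = ip n f g + ip n f h := by
  rw [← ip_conj, ip_add_left, map_add, ip_conj, ip_conj]

theorem ip_smul_right (n : ℤ) (c : ℂ) (f h : KTS) :
    ip n f (c • h) = (starRingEnd ℂ) c * ip n f h := by
  rw [← ip_conj, ip_smul_left, map_mul, ip_conj]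

theorem ip_sub_left (n : ℤ) (f g h : KTS) : ip n (f - g) h = ip n f h - ip n g h := by
  rw [sub_eq_add_neg, ← neg_one_smul ℂ g, ip_add_left, ip_smul_left]; ring

theorem ip_sub_right (n : ℤ) (f g h : KTS) : ip n f (g - h) = ip n f g - ip n f h := by
  rw [sub_eq_add_neg, ← neg_one_smul ℂ h, ip_add_right, ip_smul_right]; simp; ring

theorem ip_T (n : ℤ) (f h : KTS) : ip n (opT f) h = -ip n f (opT h) := by
  rw [eq_neg_iff_add_eq_zero]
  unfold ip
  rw [← I3_add (C3_ip n _ h) (C3_ip n f _)]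
  refine I3_dt (G := fun t x y => md n f t x y * (starRingEnd ℂ) (md n h t x y)) ?_ ?_ ?_
  · exact Continuous.add (C3_ip n _ h) (C3_ip n f _)
  · intro t x y
    exact (md_hasT n f t x y).mul (md_hasT n h t x y).star
  · intro t x y; simp only [md_perT]

/-- The phases in the quasi-periodicity of both arguments cancel, so there is no boundary term. -/
theorem ip_X (n : ℤ) (f h : KTS) : ip n (opX f) h = -ip n f (opX h) := by
  rw [eq_neg_iff_add_eq_zero]
  unfold ip
  rw [← I3_add (C3_ip n _ h) (C3_ip n f _)]
  refine I3_dx (G := fun t x y => md n f t x y * (starRingEnd ℂ) (md n h t x y)) ?_ ?_ ?_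
  · exact Continuous.add (C3_ip n _ h) (C3_ip n f _)
  · intro t x y
    exact (md_hasX n f t x y).mul (md_hasX n h t x y).star
  · intro t x y; simp only [md_perX, map_mul, conj_ex]
    linear_combination (md n f t x y * (starRingEnd ℂ) (md n h t x y)) * ex_mul_ex_neg (-n) y

theorem ip_D (n : ℤ) (f h : KTS) : ip n (opD f) h = -ip n f (opD h) := by
  rw [eq_neg_iff_add_eq_zero]
  unfold ip
  rw [← I3_add (C3_ip n _ h) (C3_ip n f _)]
  refine I3_dy (G := fun t x y => md n f t x y * (starRingEnd ℂ) (md n h t x y)) ?_ ?_ ?_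
  · exact Continuous.add (C3_ip n _ h) (C3_ip n f _)
  · intro t x y
    refine ((md_hasY n f t x y).mul (md_hasY n h t x y).star).congr_deriv ?_
    have h2 : (starRingEnd ℂ) 2 = 2 := map_ofNat _ 2
    simp only [Complex.star_def, map_sub, map_mul, conj_I, conj_ofReal, h2, map_intCast]
    ring
  · intro t x y; simp only [md_perY]

theorem ip_Z (n : ℤ) (f h : KTS) : ip n (opZ f) h = 2 * Real.pi * I * n * ip n f h := by
  unfold ip
  rw [← I3_smul]
  simp only [md_Z, mul_assoc]

theorem ip_Z_right (n : ℤ) (f h : KTS) : ip n f (opZ h) = -(2 * Real.pi * I * n) * ip n f h := by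
  rw [← ip_conj, ip_Z, map_mul, ip_conj]
  have h2 : (starRingEnd ℂ) 2 = 2 := map_ofNat _ 2
  simp [h2]

/-- The squared norm of the `n`-th mode. -/
def nn (n : ℤ) (f : KTS) : ℝ :=
  ∫ t in (0 : ℝ)..1, ∫ x in (0 : ℝ)..1, ∫ y in (0 : ℝ)..1, ‖md n f t x y‖ ^ 2

theorem ip_self (n : ℤ) (f : KTS) : ip n f f = (nn n f : ℂ) := by
  unfold ip I3 nn
  simp only [Complex.mul_conj, Complex.normSq_eq_norm_sq, intervalIntegral.integral_ofReal]

theorem nn_nonneg (n : ℤ) (f : KTS) : 0 ≤ nn n f := by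
  unfold nn
  refine intervalIntegral.integral_nonneg zero_le_one fun t _ => ?_
  refine intervalIntegral.integral_nonneg zero_le_one fun x _ => ?_
  exact intervalIntegral.integral_nonneg zero_le_one fun y _ => by positivity

theorem norm_md_perX (n : ℤ) (f : KTS) (t x y : ℝ) : ‖md n f t (x + 1) y‖ = ‖md n f t x y‖ := by
  rw [md_perX, norm_mul]
  have : ‖ex (-n) y‖ = 1 := by
    unfold ex
    rw [show (2 * Real.pi * I * (-n : ℤ) * y : ℂ) = ((2 * Real.pi * (-n : ℤ) * y : ℝ) : ℂ) * I by
      push_cast; ring]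
    exact Complex.norm_exp_ofReal_mul_I _
  rw [this, one_mul]

theorem cont_intR {X : Type*} [TopologicalSpace X] (F : X → ℝ → ℝ) (h : Continuous F.uncurry) :
    Continuous fun x => ∫ y in (0 : ℝ)..1, F x y :=
  intervalIntegral.continuous_parametric_intervalIntegral_of_continuous' h 0 1

theorem md_eq_zero_of_nn (n : ℤ) (f : KTS) (h : nn n f = 0) (t x y : ℝ) : md n f t x y = 0 := by
  have c1 : Continuous fun p : ℝ × ℝ => ∫ y in (0 : ℝ)..1, ‖md n f p.1 p.2 y‖ ^ 2 :=
    cont_intR (fun (p : ℝ × ℝ) y => ‖md n f p.1 p.2 y‖ ^ 2)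
      ((md_cont_comp n f (by fun_prop) (by fun_prop) (by fun_prop)).norm.pow 2)
  have c2 : Continuous fun t => ∫ x in (0 : ℝ)..1, ∫ y in (0 : ℝ)..1, ‖md n f t x y‖ ^ 2 :=
    cont_intR (fun t x => ∫ y in (0 : ℝ)..1, ‖md n f t x y‖ ^ 2) c1
  have n1 : ∀ t x, 0 ≤ ∫ y in (0 : ℝ)..1, ‖md n f t x y‖ ^ 2 := fun t x =>
    intervalIntegral.integral_nonneg zero_le_one fun y _ => by positivity
  have z1 := eq_zero_of_integral_zero _ c2 (fun s => by simp only [md_perT])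
    (fun t => intervalIntegral.integral_nonneg zero_le_one fun x _ => n1 t x) h t
  have z2 := eq_zero_of_integral_zero _ (c1.comp (by fun_prop : Continuous fun x : ℝ => (t, x)))
    (fun s => by simp only [Function.comp, norm_md_perX]) (fun x => n1 t x) z1 x
  have z3 := eq_zero_of_integral_zero (fun y => ‖md n f t x y‖ ^ 2)
    ((md_cont_comp n f (by fun_prop) (by fun_prop) (by fun_prop)).norm.pow 2)
    (fun s => by simp only [md_perY]) (fun y => by positivity) z2 y
  simpa using z3

theorem KTS_eq_zero_of_md (f : KTS) (h : ∀ n t x y, md n f t x y = 0) : f = 0 := by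
  ext t x y z
  exact eq_zero_of_fourier (fun z => f.1 t x y z)
    (f.2.1.cont_comp (by fun_prop) (by fun_prop) (by fun_prop) (by fun_prop))
    (fun s => (f.2.2 t x y s).2.2.2) (fun n => h n t x y) z

/-! ### Characters in `t, x, y` -/

theorem contDiff_ex (n : ℤ) : ContDiff ℝ (⊤ : ℕ∞) (ex n) := by
  unfold ex
  have : ContDiff ℝ (⊤ : ℕ∞) (fun s : ℝ => (2 * Real.pi * I * n * s : ℂ)) :=
    contDiff_const.mul Complex.ofRealCLM.contDiff
  exact this.cexp

/-- The function `exp (2πi (k t + l x + m y))` on the Kodaira–Thurston manifold. -/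
def eK (k l m : ℤ) : KTS :=
  ⟨fun t x y _ => ex k t * ex l x * ex m y, by
    refine ⟨?_, fun t x y z => ?_⟩
    · exact (((contDiff_ex k).comp contDiff_fst).mul
        ((contDiff_ex l).comp (contDiff_fst.comp contDiff_snd))).mul
        ((contDiff_ex m).comp (contDiff_fst.comp (contDiff_snd.comp contDiff_snd)))
    · simp only [ex_add_one, and_self]⟩

theorem eK_T (k l m : ℤ) : opT (eK k l m) = (2 * Real.pi * I * k : ℂ) • eK k l m := by
  ext t x y z
  refine (((hasDerivAt_ex k t).mul_const _).mul_const _).deriv.trans ?_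
  change _ = (2 * Real.pi * I * k : ℂ) * (ex k t * ex l x * ex m y)
  ring

theorem eK_X (k l m : ℤ) : opX (eK k l m) = (2 * Real.pi * I * l : ℂ) • eK k l m := by
  ext t x y z
  refine (((hasDerivAt_ex l x).const_mul _).mul_const _).deriv.trans ?_
  change _ = (2 * Real.pi * I * l : ℂ) * (ex k t * ex l x * ex m y)
  ring

theorem eK_Z (k l m : ℤ) : opZ (eK k l m) = 0 := by
  ext t x y z
  exact deriv_const _ _

theorem eK_D (k l m : ℤ) : opD (eK k l m) = (2 * Real.pi * I * m : ℂ) • eK k l m := by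
  ext t x y z
  have h1 : pY (eK k l m).1 t x y z = _ := ((hasDerivAt_ex m y).const_mul (ex k t * ex l x)).deriv
  have h2 : pZ (eK k l m).1 t x y z = 0 := deriv_const _ _
  change pY _ t x y z + x * pZ _ t x y z = (2 * Real.pi * I * m : ℂ) * (ex k t * ex l x * ex m y)
  rw [h1, h2]
  ring

theorem md_eK (k l m : ℤ) (t x y : ℝ) : md 0 (eK k l m) t x y = ex k t * ex l x * ex m y := by
  unfold md eK
  simp [ex_zero_left]

theorem ip_eK (f : KTS) (k l m : ℤ) : ip 0 f (eK k l m) =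
    ∫ t in (0 : ℝ)..1, (∫ x in (0 : ℝ)..1, (∫ y in (0 : ℝ)..1, md 0 f t x y * ex (-m) y)
      * ex (-l) x) * ex (-k) t := by
  unfold ip I3
  simp only [← intervalIntegral.integral_mul_const, md_eK, map_mul, conj_ex]
  congr 1; funext t; congr 1; funext x; congr 1; funext y
  ring

theorem ip_eK_self (k l m : ℤ) : ip 0 (eK k l m) (eK k l m) = 1 := by
  unfold ip I3
  have : ∀ t x y, md 0 (eK k l m) t x y * (starRingEnd ℂ) (md 0 (eK k l m) t x y) = 1 := by
    intro t x y
    simp only [md_eK, map_mul, conj_ex]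
    calc _ = (ex k t * ex (-k) t) * (ex l x * ex (-l) x) * (ex m y * ex (-m) y) := by ring
      _ = 1 := by simp only [ex_mul_ex_neg, mul_one]
  simp [this]

/-- Fourier uniqueness on the Kodaira–Thurston manifold: a smooth function vanishes as soon as its
nonzero central modes and the Fourier coefficients of its zeroth mode, a function on the 3-torus,
vanish. -/
theorem KTS_eq_zero (f : KTS) (h : ∀ n, n ≠ 0 → nn n f = 0)
    (h0 : ∀ k l m, ip 0 f (eK k l m) = 0) : f = 0 := by
  refine KTS_eq_zero_of_md f fun n t x y => ?_
  by_cases hn : n = 0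
  · subst hn
    have hc : ∀ l m, C3 fun t x y => md 0 f t x y * ex (-m) y * ex (-l) x := fun l m => by
      exact ((md_cont 0 f).mul (by fun_prop)).mul (by fun_prop)
    have hc' : ∀ m, C3 fun t x y => md 0 f t x y * ex (-m) y := fun m => by
      exact ((md_cont 0 f).mul (by fun_prop))
    have h1 : ∀ l m t, (∫ x in (0 : ℝ)..1, (∫ y in (0 : ℝ)..1, md 0 f t x y * ex (-m) y)
        * ex (-l) x) = 0 := fun l m t => by
      refine eq_zero_of_fourier (fun t => ∫ x in (0 : ℝ)..1,
        (∫ y in (0 : ℝ)..1, md 0 f t x y * ex (-m) y) * ex (-l) x) ?_ ?_ ?_ t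
      · have := (hc l m).int2
        simpa only [intervalIntegral.integral_mul_const] using this
      · intro s; simp only [md_perT]
      · intro k; rw [← ip_eK]; exact h0 k l m
    have h2 : ∀ m t x, (∫ y in (0 : ℝ)..1, md 0 f t x y * ex (-m) y) = 0 := fun m t x => by
      refine eq_zero_of_fourier (fun x => ∫ y in (0 : ℝ)..1, md 0 f t x y * ex (-m) y) ?_ ?_ ?_ x
      · exact (hc' m).int1.comp (by fun_prop : Continuous fun x : ℝ => (t, x))
      · intro s; simp only [md_perX, neg_zero, ex_zero_left, one_mul]
      · intro l; exact h1 l m t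
    exact eq_zero_of_fourier (fun y => md 0 f t x y)
      (md_cont_comp 0 f (by fun_prop) (by fun_prop) (by fun_prop)) (fun s => md_perY 0 f t x s)
      (fun m => h2 m t x) y
  · exact md_eq_zero_of_nn n f (h n hn) t x y

/-! ### The system as a pair of adjoint first-order operators -/

/-- The operator `B = i r (X - 2πi) - (D - (a/8π) Z)`. -/
def opB (a r : ℝ) : KTS →ₗ[ℂ] KTS :=
  (I * r : ℂ) • opX + (2 * Real.pi * r : ℂ) • LinearMap.id - opD
    + ((a / (8 * Real.pi) : ℝ) : ℂ) • opZ

/-- The operator `i r (X - 2πi) + (D - (a/8π) Z)`, the formal adjoint of `opB`. -/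
def opBs (a r : ℝ) : KTS →ₗ[ℂ] KTS :=
  (I * r : ℂ) • opX + (2 * Real.pi * r : ℂ) • LinearMap.id + opD
    - ((a / (8 * Real.pi) : ℝ) : ℂ) • opZ

theorem opB_apply (a r : ℝ) (f : KTS) : opB a r f =
    (I * r : ℂ) • opX f + (2 * Real.pi * r : ℂ) • f - opD f
      + ((a / (8 * Real.pi) : ℝ) : ℂ) • opZ f := rfl

theorem opBs_apply (a r : ℝ) (f : KTS) : opBs a r f =
    (I * r : ℂ) • opX f + (2 * Real.pi * r : ℂ) • f + opD f
      - ((a / (8 * Real.pi) : ℝ) : ℂ) • opZ f := rfl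

theorem ip_B (a r : ℝ) (n : ℤ) (f h : KTS) : ip n (opB a r f) h = ip n f (opBs a r h) := by
  have h2 : (starRingEnd ℂ) 2 = 2 := map_ofNat _ 2
  simp only [opB_apply, opBs_apply, ip_add_left, ip_sub_left, ip_smul_left, ip_add_right,
    ip_sub_right, ip_smul_right, ip_X, ip_D, ip_Z, ip_Z_right, map_mul, conj_I, conj_ofReal, h2]
  ring

theorem ip_Bs (a r : ℝ) (n : ℤ) (f h : KTS) : ip n (opBs a r f) h = ip n f (opB a r h) := by
  rw [← ip_conj, ← ip_B, ip_conj]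

theorem opT_B (a r : ℝ) (f : KTS) : opT (opB a r f) = opB a r (opT f) := by
  simp only [opB_apply, map_add, map_sub, map_smul, op_TX, op_TD, op_TZ]

theorem opT_Bs (a r : ℝ) (f : KTS) : opT (opBs a r f) = opBs a r (opT f) := by
  simp only [opBs_apply, map_add, map_sub, map_smul, op_TX, op_TD, op_TZ]

theorem opZ_B (a r : ℝ) (f : KTS) : opZ (opB a r f) = opB a r (opZ f) := by
  simp only [opB_apply, map_add, map_sub, map_smul, op_XZ, op_DZ]

theorem opZ_Bs (a r : ℝ) (f : KTS) : opZ (opBs a r f) = opBs a r (opZ f) := by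
  simp only [opBs_apply, map_add, map_sub, map_smul, op_XZ, op_DZ]

theorem opB_comm (a r : ℝ) (f : KTS) :
    opB a r (opBs a r f) = opBs a r (opB a r f) + (2 * I * r : ℂ) • opZ f := by
  simp only [opB_apply, opBs_apply, map_add, map_sub, map_smul, op_XZ, op_DZ, op_XD]
  module

theorem ip_zero_left (n : ℤ) (h : KTS) : ip n 0 h = 0 := by
  have := ip_smul_left n 0 0 h
  simpa using this

theorem ip_of_nn {n : ℤ} {f : KTS} (hf : nn n f = 0) (h : KTS) : ip n f h = 0 := by
  unfold ip
  simp [md_eq_zero_of_nn n f hf, I3]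

/-- `⟨w, T w⟩` is purely imaginary. -/
theorem re_ip_T (n : ℤ) (w : KTS) : (ip n w (opT w)).re = 0 := by
  have h1 : ip n (opT w) w = -ip n w (opT w) := ip_T n w w
  rw [← ip_conj] at h1
  have := congrArg Complex.re h1
  simp at this
  linarith

/-- Solutions of the second-order equation `A'A p = (r²(T+2π)² + κ Z²) p`, with `A'` adjoint to
`A` and both commuting with `T`, are independent of `t`: pairing with `T p` and taking real
parts leaves only `4πr² ‖T p‖²`. -/
theorem T_elim (A A' : KTS →ₗ[ℂ] KTS) (r κ : ℝ) (hr : r ≠ 0)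
    (hadj : ∀ n f h, ip n (A' f) h = ip n f (A h))
    (hT : ∀ f, opT (A f) = A (opT f)) (p : KTS)
    (hp : A' (A p) = (r ^ 2 : ℂ) • (opT (opT p) + (4 * Real.pi : ℂ) • opT p
      + (4 * Real.pi ^ 2 : ℂ) • p) + (κ : ℂ) • opZ (opZ p)) : opT p = 0 := by
  refine KTS_eq_zero_of_md _ fun n => md_eq_zero_of_nn n _ ?_
  have h1 : ip n (A' (A p)) (opT p) = ip n (A p) (opT (A p)) := by rw [hadj, hT]
  rw [hp] at h1
  simp only [ip_add_left, ip_smul_left, ip_Z] at h1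
  have e1 := re_ip_T n (opT p)
  have e2 := re_ip_T n p
  have e3 := re_ip_T n (A p)
  have e4 : (ip n (opT (opT p)) (opT p)).re = 0 := by
    rw [← ip_conj, conj_re, e1]
  rw [← h1, ip_self] at e3
  have : ∀ c d : ℂ, (r ^ 2 : ℂ) * (c + (4 * Real.pi : ℂ) * (nn n (opT p) : ℂ)
      + (4 * Real.pi ^ 2 : ℂ) * d) + κ * (2 * Real.pi * I * n * (2 * Real.pi * I * n * d))
      = ((r ^ 2 : ℝ) : ℂ) * c + ((r ^ 2 * (4 * Real.pi * nn n (opT p)) : ℝ) : ℂ)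
        + ((r ^ 2 * (4 * Real.pi ^ 2) - κ * (4 * Real.pi ^ 2 * n ^ 2) : ℝ) : ℂ) * d := by
    intro c d
    push_cast
    linear_combination (κ * (4 * Real.pi ^ 2 * n ^ 2) * d : ℂ) * I_sq
  rw [this] at e3
  simp only [add_re, re_ofReal_mul, e4, e2, ofReal_re] at e3
  have hpi := Real.pi_pos
  have : r ^ 2 * (4 * Real.pi) ≠ 0 := by positivity
  have h5 : (r ^ 2 * (4 * Real.pi)) * nn n (opT p) = 0 := by linarith
  exact (mul_eq_zero.mp h5).resolve_left this

/-- Raising an eigenvector `p` of `A'A` with `A'` shifts the eigenvalue by `σ Z`; the norms of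
the raised vectors are multiplied by the reals `c j`, which must stay nonnegative. If the `c j`
never vanish and become negative, then `p` has no component in mode `n`. -/
theorem ladder (A A' : KTS →ₗ[ℂ] KTS) (n : ℤ) (σ k κ : ℂ)
    (hadj : ∀ f h, ip n (A f) h = ip n f (A' h))
    (hc : ∀ f, A (A' f) = A' (A f) + σ • opZ f)
    (hZ : ∀ f, opZ (A' f) = A' (opZ f)) (p : KTS)
    (hp : A' (A p) = k • p + κ • opZ (opZ p)) (c : ℕ → ℝ)
    (hcj : ∀ j : ℕ, k + κ * (2 * Real.pi * I * n) ^ 2 + (j + 1) * σ * (2 * Real.pi * I * n)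
      = (c j : ℂ))
    (hne : ∀ j, c j ≠ 0) (hneg : ∃ j, c j < 0) : nn n p = 0 := by
  have key : ∀ j : ℕ, A' (A (A'^[j] p)) = k • (A'^[j] p) + κ • opZ (opZ (A'^[j] p))
      + (j * σ) • opZ (A'^[j] p) := by
    intro j
    induction j with
    | zero => simpa using hp
    | succ j ih =>
      rw [Function.iterate_succ_apply', hc, map_add, ih]
      simp only [map_add, map_smul, hZ]
      push_cast
      module
  have step : ∀ j : ℕ, nn n (A'^[j + 1] p) = c j * nn n (A'^[j] p) := by
    intro j
    have h1 := ip_self n (A'^[j + 1] p)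
    rw [Function.iterate_succ_apply', ← hadj, hc, key] at h1
    simp only [ip_add_left, ip_smul_left, ip_Z, ip_self] at h1
    rw [Function.iterate_succ_apply']
    have h2 : ((c j * nn n (A'^[j] p) : ℝ) : ℂ) = (nn n (A' (A'^[j] p)) : ℂ) := by
      rw [← h1]; push_cast; rw [← hcj]; ring
    exact_mod_cast h2.symm
  by_contra h0
  have hpos : ∀ j : ℕ, 0 < nn n (A'^[j] p) := by
    intro j
    refine lt_of_le_of_ne (nn_nonneg n _) (Ne.symm ?_)
    induction j with
    | zero => exact h0
    | succ j ih => rw [step]; exact mul_ne_zero (hne j) ih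
  obtain ⟨j, hj⟩ := hneg
  have h1 := hpos (j + 1)
  rw [step] at h1
  nlinarith [hpos j]

/-- The eigenvalue factors along the ladder are eventually negative. -/
theorem factor_neg (r N : ℝ) (hr : 0 < r) (hN : 0 < N) :
    ∃ j : ℕ, 4 * Real.pi ^ 2 * r ^ 2 - N ^ 2 / 16 - 4 * Real.pi * r * N * (j + 1) < 0 := by
  have hpi := Real.pi_pos
  obtain ⟨j, hj⟩ := exists_nat_gt (4 * Real.pi ^ 2 * r ^ 2 / (4 * Real.pi * r * N))
  rw [div_lt_iff₀ (by positivity)] at hj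
  have : 0 < 4 * Real.pi * r * N := by positivity
  exact ⟨j, by nlinarith [sq_nonneg N]⟩

/-- The system in the variables `p = r f + g`, `q = r f - g`. -/
structure PQ (a r : ℝ) (p q : KTS) : Prop where
  hB : opB a r p = (r : ℂ) • opT q + (2 * Real.pi * r : ℂ) • q - (I / (8 * Real.pi) : ℂ) • opZ q
  hBs : opBs a r q = (r : ℂ) • opT p + (2 * Real.pi * r : ℂ) • p
    + (I / (8 * Real.pi) : ℂ) • opZ p

/-- With `E = (i/8π) Z` this gives `-E² = Z²/(64π²)`. -/
theorem coef (π' : ℂ) (h : π' ≠ 0) : -(I / (8 * π')) ^ 2 = 1 / (64 * π' ^ 2) := by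
  rw [div_pow, I_sq]; field_simp; ring

theorem PQ.second_p {a r : ℝ} {p q : KTS} (h : PQ a r p q) :
    opBs a r (opB a r p) = (r ^ 2 : ℂ) • (opT (opT p) + (4 * Real.pi : ℂ) • opT p
      + (4 * Real.pi ^ 2 : ℂ) • p) + ((1 / (64 * Real.pi ^ 2) : ℝ) : ℂ) • opZ (opZ p) := by
  rw [h.hB]
  simp only [map_add, map_sub, map_smul, ← opT_Bs, ← opZ_Bs]
  rw [h.hBs]
  simp only [map_add, map_smul, op_TZ]
  push_cast
  rw [← coef _ (by exact_mod_cast Real.pi_ne_zero)]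
  module

theorem PQ.second_q {a r : ℝ} {p q : KTS} (h : PQ a r p q) :
    opB a r (opBs a r q) = (r ^ 2 : ℂ) • (opT (opT q) + (4 * Real.pi : ℂ) • opT q
      + (4 * Real.pi ^ 2 : ℂ) • q) + ((1 / (64 * Real.pi ^ 2) : ℝ) : ℂ) • opZ (opZ q) := by
  rw [h.hBs]
  simp only [map_add, map_smul, ← opT_B, ← opZ_B]
  rw [h.hB]
  simp only [map_add, map_sub, map_smul, op_TZ]
  push_cast
  rw [← coef _ (by exact_mod_cast Real.pi_ne_zero)]
  module

theorem PQ.opT_p {a r : ℝ} (hr : r ≠ 0) {p q : KTS} (h : PQ a r p q) : opT p = 0 :=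
  T_elim (opB a r) (opBs a r) r _ hr (ip_Bs a r) (opT_B a r) p h.second_p

theorem PQ.opT_q {a r : ℝ} (hr : r ≠ 0) {p q : KTS} (h : PQ a r p q) : opT q = 0 :=
  T_elim (opBs a r) (opB a r) r _ hr (ip_B a r) (opT_Bs a r) q h.second_q

/-- The numerical value of the ladder factors. -/
theorem factor_eq (r s : ℝ) (n : ℤ) (j : ℕ) :
    (4 * Real.pi ^ 2 * r ^ 2 : ℂ) + ((1 / (64 * Real.pi ^ 2) : ℝ) : ℂ) * (2 * Real.pi * I * n) ^ 2
      + (j + 1) * (s * (2 * I * r)) * (2 * Real.pi * I * n)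
    = ((4 * Real.pi ^ 2 * r ^ 2 - (n : ℝ) ^ 2 / 16 - 4 * Real.pi * r * (s * n) * (j + 1) : ℝ) : ℂ)
    := by
  have hpi : (Real.pi : ℂ) ≠ 0 := by exact_mod_cast Real.pi_ne_zero
  push_cast
  field_simp
  linear_combination (64 * (64 * (j + 1) * s * r * Real.pi * n + n ^ 2) : ℂ) * I_sq

theorem PQ.nn_p_pos {a : ℝ} {r : ℚ} (hr : 0 < r) {p q : KTS} (h : PQ a r p q) {n : ℤ}
    (hn : 0 < n) : nn n p = 0 := by
  have hr' : (0 : ℝ) < r := by exact_mod_cast hr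
  have hT := h.opT_p hr'.ne'
  have h2 := h.second_p
  refine ladder (opB a r) (opBs a r) n (2 * I * (r : ℝ))
    (4 * Real.pi ^ 2 * (r : ℝ) ^ 2) ((1 / (64 * Real.pi ^ 2) : ℝ) : ℂ)
    (ip_B a r n) (opB_comm a r) (opZ_Bs a r) p ?_
    (fun j => 4 * Real.pi ^ 2 * (r : ℝ) ^ 2 - (n : ℝ) ^ 2 / 16
      - 4 * Real.pi * (r : ℝ) * n * (j + 1)) ?_ ?_ ?_
  · rw [h2, hT, map_zero]; module
  · intro j
    have := factor_eq r 1 n j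
    simp only [ofReal_one, one_mul] at this
    exact this
  · intro j
    have := no_resonance r hr n hn.ne' (j + 1)
    exact_mod_cast this
  · exact factor_neg r n hr' (by exact_mod_cast hn)

theorem PQ.nn_q_neg {a : ℝ} {r : ℚ} (hr : 0 < r) {p q : KTS} (h : PQ a r p q) {n : ℤ}
    (hn : n < 0) : nn n q = 0 := by
  have hr' : (0 : ℝ) < r := by exact_mod_cast hr
  have hT := h.opT_q hr'.ne'
  have h2 := h.second_q
  refine ladder (opBs a r) (opB a r) n (((-1 : ℝ) : ℂ) * (2 * I * (r : ℝ)))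
    (4 * Real.pi ^ 2 * (r : ℝ) ^ 2) ((1 / (64 * Real.pi ^ 2) : ℝ) : ℂ)
    (ip_Bs a r n) ?_ (opZ_B a r) q ?_
    (fun j => 4 * Real.pi ^ 2 * (r : ℝ) ^ 2 - (n : ℝ) ^ 2 / 16
      - 4 * Real.pi * (r : ℝ) * ((-1 : ℝ) * n) * (j + 1)) (factor_eq r (-1) n) ?_ ?_
  · intro f
    rw [opB_comm]
    push_cast
    module
  · rw [h2, hT, map_zero]; module
  · intro j
    have := no_resonance r hr (-n) (by omega) (j + 1)
    push_cast at this
    simpa using this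
  · have := factor_neg r (-n) hr' (by exact_mod_cast (by omega : 0 < -n))
    simpa using this

/-- No nonzero central mode of a solution survives. -/
theorem PQ.nn_zero {a : ℝ} {r : ℚ} (hr : 0 < r) {p q : KTS} (h : PQ a r p q) {n : ℤ}
    (hn : n ≠ 0) : nn n p = 0 ∧ nn n q = 0 := by
  have hr' : (0 : ℝ) < r := by exact_mod_cast hr
  have hpi := Real.pi_pos
  have hpi' : (Real.pi : ℂ) ≠ 0 := by exact_mod_cast Real.pi_ne_zero
  rcases lt_or_gt_of_ne hn with hn | hn
  · have hq := h.nn_q_neg hr hn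
    refine ⟨?_, hq⟩
    have e : ip n (opBs a r q) p = 0 := by rw [ip_Bs]; exact ip_of_nn hq _
    rw [h.hBs, h.opT_p hr'.ne'] at e
    simp only [ip_add_left, ip_smul_left, ip_zero_left, ip_Z, ip_self] at e
    have e2 : ((2 * Real.pi * r - n / 4 : ℝ) : ℂ) * (nn n p : ℂ) = 0 := by
      rw [← e]; push_cast; field_simp
      linear_combination (-(8 * n * nn n p) : ℂ) * I_sq
    have e3 : (2 * Real.pi * r - n / 4 : ℝ) * nn n p = 0 := by exact_mod_cast e2
    have hn' : (n : ℝ) < 0 := by exact_mod_cast hn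
    have : (2 * Real.pi * r - n / 4 : ℝ) ≠ 0 := by
      have : 0 < 2 * Real.pi * (r : ℝ) := by positivity
      linarith
    exact (mul_eq_zero.mp e3).resolve_left this
  · have hq := h.nn_p_pos hr hn
    refine ⟨hq, ?_⟩
    have e : ip n (opB a r p) q = 0 := by rw [ip_B]; exact ip_of_nn hq _
    rw [h.hB, h.opT_q hr'.ne'] at e
    simp only [ip_add_left, ip_sub_left, ip_smul_left, ip_zero_left, ip_Z, ip_self] at e
    have e2 : ((2 * Real.pi * r + n / 4 : ℝ) : ℂ) * (nn n q : ℂ) = 0 := by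
      rw [← e]; push_cast; field_simp
      linear_combination ((8 * n * nn n q) : ℂ) * I_sq
    have e3 : (2 * Real.pi * r + n / 4 : ℝ) * nn n q = 0 := by exact_mod_cast e2
    have hn' : (0 : ℝ) < n := by exact_mod_cast hn
    have : (2 * Real.pi * r + n / 4 : ℝ) ≠ 0 := by positivity
    exact (mul_eq_zero.mp e3).resolve_left this

/-! ### The solution space -/

/-- Twice the left-hand side of `-V̄₂ f + V̄₁ g + 2π g = 0`, as an operator on `KTS × KTS`. -/
def L1 (a : ℝ) : KTS × KTS →ₗ[ℂ] KTS :=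
  -((opD - (((a : ℂ) + I) / (8 * Real.pi)) • opZ) ∘ₗ LinearMap.fst ℂ KTS KTS)
    + (opT + I • opX + (4 * Real.pi : ℂ) • LinearMap.id) ∘ₗ LinearMap.snd ℂ KTS KTS

/-- Twice the left-hand side of `r² V₁ f + V₂ g = 0`, as an operator on `KTS × KTS`. -/
def L2 (a r : ℝ) : KTS × KTS →ₗ[ℂ] KTS :=
  (r ^ 2 : ℂ) • ((opT - I • opX) ∘ₗ LinearMap.fst ℂ KTS KTS)
    + (opD - (((a : ℂ) - I) / (8 * Real.pi)) • opZ) ∘ₗ LinearMap.snd ℂ KTS KTS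

theorem L1_apply (a : ℝ) (w : KTS × KTS) : L1 a w =
    -(opD w.1 - (((a : ℂ) + I) / (8 * Real.pi)) • opZ w.1)
      + (opT w.2 + I • opX w.2 + (4 * Real.pi : ℂ) • w.2) := rfl

theorem L2_apply (a r : ℝ) (w : KTS × KTS) : L2 a r w =
    (r ^ 2 : ℂ) • (opT w.1 - I • opX w.1)
      + (opD w.2 - (((a : ℂ) - I) / (8 * Real.pi)) • opZ w.2) := rfl

/-- The solution space inside `KTS × KTS`, for `b = 8π` and `ρ = r²`. -/
def solSub (a r : ℝ) : Submodule ℂ (KTS × KTS) := LinearMap.ker (L1 a) ⊓ LinearMap.ker (L2 a r)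

theorem mem_solSub {a r : ℝ} {w : KTS × KTS} : w ∈ solSub a r ↔ L1 a w = 0 ∧ L2 a r w = 0 := by
  simp [solSub]

theorem SolRho_eq_image (a r : ℝ) : SolRho a (8 * Real.pi) (r ^ 2) =
    (KTS.subtype.prodMap KTS.subtype) '' (solSub a r : Set (KTS × KTS)) := by
  have key : ∀ f g : KTS, (f, g) ∈ solSub a r ↔
      (∀ t x y z : ℝ, -V₂c a (8 * Real.pi) f.1 t x y z + V₁c g.1 t x y z
        + (((8 * Real.pi : ℝ) : ℂ) / 4) * g.1 t x y z = 0) ∧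
      (∀ t x y z : ℝ, ((r ^ 2 : ℝ) : ℂ) * V₁ f.1 t x y z + V₂ a (8 * Real.pi) g.1 t x y z = 0) := by
    intro f g
    rw [mem_solSub]
    refine and_congr ⟨fun h t x y z => ?_, fun h => ?_⟩ ⟨fun h t x y z => ?_, fun h => ?_⟩
    · have h1 : (L1 a (f, g)).1 t x y z = 0 := by rw [h]; rfl
      change -((pY f.1 t x y z + x * pZ f.1 t x y z) - _ * pZ f.1 t x y z)
        + (pT g.1 t x y z + I * pX g.1 t x y z + _ * g.1 t x y z) = 0 at h1
      unfold V₂c V₁c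
      push_cast
      linear_combination (1 / 2 : ℂ) * h1
    · ext t x y z
      have h1 := h t x y z
      change -((pY f.1 t x y z + x * pZ f.1 t x y z) - _ * pZ f.1 t x y z)
        + (pT g.1 t x y z + I * pX g.1 t x y z + _ * g.1 t x y z) = 0
      unfold V₂c V₁c at h1
      push_cast at h1
      linear_combination (2 : ℂ) * h1
    · have h1 : (L2 a r (f, g)).1 t x y z = 0 := by rw [h]; rfl
      change (r ^ 2 : ℂ) * (pT f.1 t x y z - I * pX f.1 t x y z)
        + ((pY g.1 t x y z + x * pZ g.1 t x y z) - _ * pZ g.1 t x y z) = 0 at h1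
      unfold V₁ V₂
      push_cast
      linear_combination (1 / 2 : ℂ) * h1
    · ext t x y z
      have h1 := h t x y z
      change (r ^ 2 : ℂ) * (pT f.1 t x y z - I * pX f.1 t x y z)
        + ((pY g.1 t x y z + x * pZ g.1 t x y z) - _ * pZ g.1 t x y z) = 0
      unfold V₁ V₂ at h1
      push_cast at h1
      linear_combination (2 : ℂ) * h1
  ext ⟨F, G⟩
  constructor
  · rintro ⟨sF, sG, pF, pG, h1, h2⟩
    exact ⟨(⟨F, sF, pF⟩, ⟨G, sG, pG⟩), (key ⟨F, sF, pF⟩ ⟨G, sG, pG⟩).2 ⟨h1, h2⟩, rfl⟩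
  · rintro ⟨⟨f, g⟩, hm, he⟩
    have e1 : f.1 = F := congrArg Prod.fst he
    have e2 : g.1 = G := congrArg Prod.snd he
    subst e1 e2
    obtain ⟨h1, h2⟩ := (key f g).1 hm
    exact ⟨f.2.1, g.2.1, f.2.2, g.2.2, h1, h2⟩

theorem PQ_of_sol {a r : ℝ} {w : KTS × KTS} (h : w ∈ solSub a r) :
    PQ a r ((r : ℂ) • w.1 + w.2) ((r : ℂ) • w.1 - w.2) := by
  obtain ⟨h1, h2⟩ := mem_solSub.1 h
  rw [L1_apply] at h1
  rw [L2_apply] at h2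
  have hs : (((a / (8 * Real.pi) : ℝ)) : ℂ) = (a : ℂ) / (8 * Real.pi) := by push_cast; rfl
  constructor
  · rw [opB_apply, hs]
    simp only [map_add, map_sub, map_smul]
    linear_combination (norm := module) (r : ℂ) • h1 - h2
  · rw [opBs_apply, hs]
    simp only [map_add, map_sub, map_smul]
    linear_combination (norm := module) -(r : ℂ) • h1 - h2

/-! ### The zeroth central mode -/

theorem ip_opT_eK (f : KTS) (k l m : ℤ) :
    ip 0 (opT f) (eK k l m) = 2 * Real.pi * I * k * ip 0 f (eK k l m) := by
  have h2 : (starRingEnd ℂ) 2 = 2 := map_ofNat _ 2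
  rw [ip_T, eK_T, ip_smul_right]; simp [h2]

theorem ip_opX_eK (f : KTS) (k l m : ℤ) :
    ip 0 (opX f) (eK k l m) = 2 * Real.pi * I * l * ip 0 f (eK k l m) := by
  have h2 : (starRingEnd ℂ) 2 = 2 := map_ofNat _ 2
  rw [ip_X, eK_X, ip_smul_right]; simp [h2]

theorem ip_opD_eK (f : KTS) (k l m : ℤ) :
    ip 0 (opD f) (eK k l m) = 2 * Real.pi * I * m * ip 0 f (eK k l m) := by
  have h2 : (starRingEnd ℂ) 2 = 2 := map_ofNat _ 2
  rw [ip_D, eK_D, ip_smul_right]; simp [h2]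

theorem ip_eK_of_l_ne {k l m k' l' m' : ℤ} (h : l ≠ l') :
    ip 0 (eK k l m) (eK k' l' m') = 0 := by
  have h1 := ip_opX_eK (eK k l m) k' l' m'
  rw [eK_X, ip_smul_left] at h1
  have hpi : (Real.pi : ℂ) ≠ 0 := by exact_mod_cast Real.pi_ne_zero
  have h2 : (2 * Real.pi * I * (l - l' : ℂ)) * ip 0 (eK k l m) (eK k' l' m') = 0 := by
    linear_combination h1
  refine (mul_eq_zero.mp h2).resolve_left (mul_ne_zero (by simp [hpi]) ?_)
  exact sub_ne_zero.2 (by exact_mod_cast h)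

theorem ip_eK_of_m_ne {k l m k' l' m' : ℤ} (h : m ≠ m') :
    ip 0 (eK k l m) (eK k' l' m') = 0 := by
  have h1 := ip_opD_eK (eK k l m) k' l' m'
  rw [eK_D, ip_smul_left] at h1
  have hpi : (Real.pi : ℂ) ≠ 0 := by exact_mod_cast Real.pi_ne_zero
  have h2 : (2 * Real.pi * I * (m - m' : ℂ)) * ip 0 (eK k l m) (eK k' l' m') = 0 := by
    linear_combination h1
  refine (mul_eq_zero.mp h2).resolve_left (mul_ne_zero (by simp [hpi]) ?_)
  exact sub_ne_zero.2 (by exact_mod_cast h)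

/-- The `2 × 2` linear system satisfied by the Fourier coefficients of the zeroth central mode
is singular only at `(0,0,0)`, `(0,2,0)` and at `(0,1,±r)`. -/
theorem zero_mode_cases {r : ℝ} (hr : 0 < r) (k l m : ℤ) (F G : ℂ)
    (h1 : -(I * m) * F + (I * k - l + 2) * G = 0)
    (h2 : (r ^ 2 : ℂ) * (I * k + l) * F + I * m * G = 0) :
    (F = 0 ∧ G = 0) ∨ (k = 0 ∧ l = 0 ∧ m = 0 ∧ G = 0) ∨ (k = 0 ∧ l = 2 ∧ m = 0 ∧ F = 0) ∨
      (k = 0 ∧ l = 1 ∧ (m : ℝ) ^ 2 = r ^ 2 ∧ (r ^ 2 : ℂ) * F = -(I * m) * G) := by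
  set d : ℂ := (m ^ 2 + r ^ 2 * (k ^ 2 + l ^ 2 - 2 * l - 2 * I * k) : ℂ) with hd
  have dF : d * F = 0 := by
    rw [hd]
    linear_combination (I * m) * h1 - (I * k - l + 2) * h2
      + (m ^ 2 * F + r ^ 2 * k ^ 2 * F : ℂ) * I_sq
  have dG : d * G = 0 := by
    rw [hd]
    linear_combination -(r ^ 2 * (I * k + l) : ℂ) * h1 - (I * m) * h2
      + (m ^ 2 * G + r ^ 2 * k ^ 2 * G : ℂ) * I_sq
  by_cases hd0 : d = 0
  · right
    have him := congrArg Complex.im hd0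
    have hre := congrArg Complex.re hd0
    have e : d = ((m ^ 2 + r ^ 2 * (k ^ 2 + l ^ 2 - 2 * l) : ℝ) : ℂ)
        + ((-2 * r ^ 2 * k : ℝ) : ℂ) * I := by rw [hd]; push_cast; ring
    rw [e] at him hre
    simp only [add_im, ofReal_im, re_ofReal_mul, im_ofReal_mul, I_im, I_re, add_re, ofReal_re,
      zero_re, zero_im, mul_one, mul_zero, zero_add, add_zero] at him hre
    have hk : k = 0 := by
      have : (k : ℝ) = 0 := by
        rcases mul_eq_zero.1 him with h | h
        · nlinarith
        · exact h
      exact_mod_cast this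
    subst hk
    have hr2 : 0 < r ^ 2 := by positivity
    have hl : (l : ℝ) * (l - 2) ≤ 0 := by
      by_contra! hc
      have := mul_pos hr2 hc
      push_cast at hre
      nlinarith [sq_nonneg (m : ℝ)]
    have hl' : l * (l - 2) ≤ 0 := by exact_mod_cast hl
    have l0 : 0 ≤ l := by nlinarith
    have l2 : l ≤ 2 := by nlinarith
    interval_cases l
    · left
      have hm : m = 0 := by
        have : (m : ℝ) ^ 2 = 0 := by push_cast at hre; linarith
        exact_mod_cast pow_eq_zero_iff (two_ne_zero) |>.1 this
      subst hm
      refine ⟨rfl, rfl, rfl, ?_⟩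
      push_cast at h1
      linear_combination (1 / 2 : ℂ) * h1
    · right; right
      refine ⟨rfl, rfl, ?_, ?_⟩
      · push_cast at hre; linarith
      · push_cast at h2; linear_combination h2
    · right; left
      have hm : m = 0 := by
        have : (m : ℝ) ^ 2 = 0 := by push_cast at hre; linarith
        exact_mod_cast pow_eq_zero_iff (two_ne_zero) |>.1 this
      subst hm
      refine ⟨rfl, rfl, rfl, ?_⟩
      have hrC : (r ^ 2 : ℂ) ≠ 0 := by exact_mod_cast hr2.ne'
      push_cast at h2
      have : (r ^ 2 : ℂ) * F = 0 := by linear_combination (1 / 2 : ℂ) * h2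
      exact (mul_eq_zero.1 this).resolve_left hrC
  · left
    exact ⟨(mul_eq_zero.1 dF).resolve_left hd0, (mul_eq_zero.1 dG).resolve_left hd0⟩

/-- The system satisfied by the Fourier coefficients of the zeroth central mode of a solution. -/
theorem sol_fourier {a r : ℝ} {w : KTS × KTS} (h : w ∈ solSub a r) (k l m : ℤ) :
    -(I * m) * ip 0 w.1 (eK k l m) + (I * k - l + 2) * ip 0 w.2 (eK k l m) = 0 ∧
    (r ^ 2 : ℂ) * (I * k + l) * ip 0 w.1 (eK k l m) + I * m * ip 0 w.2 (eK k l m) = 0 := by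
  obtain ⟨h1, h2⟩ := mem_solSub.1 h
  rw [L1_apply] at h1
  rw [L2_apply] at h2
  have hpi : (2 * Real.pi : ℂ) ≠ 0 := by
    have : (Real.pi : ℂ) ≠ 0 := by exact_mod_cast Real.pi_ne_zero
    simp [this]
  have c1 := congrArg (fun u => ip 0 u (eK k l m)) h1
  have c2 := congrArg (fun u => ip 0 u (eK k l m)) h2
  have hneg : ∀ u : KTS, ip 0 (-u) (eK k l m) = -ip 0 u (eK k l m) := fun u => by
    rw [← neg_one_smul ℂ u, ip_smul_left]; ring
  simp only [hneg, ip_add_left, ip_sub_left, ip_smul_left, ip_zero_left, ip_Z, ip_opT_eK,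
    ip_opX_eK, ip_opD_eK, Int.cast_zero, mul_zero, zero_mul, sub_zero] at c1 c2
  constructor
  · apply mul_left_cancel₀ hpi
    linear_combination c1 - (2 * Real.pi * l * ip 0 w.2 (eK k l m) : ℂ) * I_sq
  · apply mul_left_cancel₀ hpi
    linear_combination c2 + (r ^ 2 * (2 * Real.pi * l * ip 0 w.1 (eK k l m)) : ℂ) * I_sq

theorem nn_add_zero {n : ℤ} {p q : KTS} (hp : nn n p = 0) (hq : nn n q = 0) (c d : ℂ) :
    nn n (c • p + d • q) = 0 := by
  have := ip_self n (c • p + d • q)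
  rw [ip_add_left, ip_smul_left, ip_smul_left, ip_of_nn hp, ip_of_nn hq] at this
  simpa using this.symm

/-- A solution is determined by its coefficients at the singular frequencies. -/
theorem sol_eq_zero {a : ℝ} {r : ℚ} (hr : 0 < r) {w : KTS × KTS} (h : w ∈ solSub a r)
    (c1 : ip 0 w.1 (eK 0 0 0) = 0) (c2 : ip 0 w.2 (eK 0 2 0) = 0)
    (c3 : ∀ m : ℤ, (m : ℝ) ^ 2 = (r : ℝ) ^ 2 → ip 0 w.2 (eK 0 1 m) = 0) : w = 0 := by
  have hr' : (0 : ℝ) < r := by exact_mod_cast hr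
  have hrC : ((r : ℝ) : ℂ) ≠ 0 := by exact_mod_cast hr'.ne'
  have hz : ∀ k l m, ip 0 w.1 (eK k l m) = 0 ∧ ip 0 w.2 (eK k l m) = 0 := by
    intro k l m
    obtain ⟨e1, e2⟩ := sol_fourier h k l m
    rcases zero_mode_cases hr' k l m _ _ e1 e2 with hh | ⟨rfl, rfl, rfl, hh⟩ | ⟨rfl, rfl, rfl, hh⟩
      | ⟨rfl, rfl, hm, hh⟩
    · exact hh
    · exact ⟨c1, hh⟩
    · exact ⟨hh, c2⟩
    · have := c3 m hm
      rw [this, mul_zero] at hh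
      exact ⟨(mul_eq_zero.1 hh).resolve_left (pow_ne_zero 2 hrC), this⟩
  have hPQ := PQ_of_sol h
  have f1 : w.1 = (1 / (2 * (r : ℝ)) : ℂ) • (((r : ℝ) : ℂ) • w.1 + w.2)
      + (1 / (2 * (r : ℝ)) : ℂ) • (((r : ℝ) : ℂ) • w.1 - w.2) := by
    rw [← smul_add, show ((r : ℝ) : ℂ) • w.1 + w.2 + (((r : ℝ) : ℂ) • w.1 - w.2)
      = (2 * (r : ℝ) : ℂ) • w.1 by module, smul_smul, one_div, inv_mul_cancel₀, one_smul]
    exact mul_ne_zero two_ne_zero hrC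
  have f2 : w.2 = (1 / 2 : ℂ) • (((r : ℝ) : ℂ) • w.1 + w.2)
      + (-1 / 2 : ℂ) • (((r : ℝ) : ℂ) • w.1 - w.2) := by module
  refine Prod.ext (KTS_eq_zero _ (fun n hn => ?_) fun k l m => (hz k l m).1)
    (KTS_eq_zero _ (fun n hn => ?_) fun k l m => (hz k l m).2)
  · rw [f1]; exact nn_add_zero (hPQ.nn_zero hr hn).1 (hPQ.nn_zero hr hn).2 _ _
  · rw [f2]; exact nn_add_zero (hPQ.nn_zero hr hn).1 (hPQ.nn_zero hr hn).2 _ _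

/-! ### Counting dimensions -/

/-- The Fourier coefficient at the character `eK k l m`, as a linear functional. -/
def ipL (k l m : ℤ) : KTS →ₗ[ℂ] ℂ where
  toFun f := ip 0 f (eK k l m)
  map_add' f g := ip_add_left 0 f g _
  map_smul' c f := ip_smul_left 0 c f _

theorem ipL_apply (k l m : ℤ) (f : KTS) : ipL k l m f = ip 0 f (eK k l m) := rfl

/-- Linear coordinates on `V` that are injective on `W` and take some vectors of `W` to the standard
basis show that the image of `W` under an injective linear map has dimension `n`. -/
theorem hasDim_of_coords {V V' : Type*} [AddCommGroup V] [Module ℂ V] [AddCommGroup V']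
    [Module ℂ V'] (ι : V →ₗ[ℂ] V') (hι : Function.Injective ι) (W : Submodule ℂ V) {n : ℕ}
    (Φ : V →ₗ[ℂ] (Fin n → ℂ)) (v : Fin n → V) (hv : ∀ i, v i ∈ W)
    (hΦ : ∀ i, Φ (v i) = Pi.single i 1) (hinj : ∀ w ∈ W, Φ w = 0 → w = 0) :
    HasDimOver (ι '' (W : Set V)) n := by
  have hli : LinearIndependent ℂ v := by
    refine LinearIndependent.of_comp Φ ?_
    have : Φ ∘ v = Pi.basisFun ℂ (Fin n) := by
      funext i; simp [hΦ]
    rw [this]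
    exact (Pi.basisFun ℂ (Fin n)).linearIndependent
  refine ⟨ι ∘ v, hli.map' ι (LinearMap.ker_eq_bot.2 hι), ?_⟩
  have hspan : Submodule.span ℂ (Set.range v) = W := by
    refine le_antisymm (Submodule.span_le.2 (Set.range_subset_iff.2 hv)) fun w hw => ?_
    have hs : ∑ i, Φ w i • v i ∈ Submodule.span ℂ (Set.range v) :=
      Submodule.sum_mem _ fun i _ => Submodule.smul_mem _ _ (Submodule.subset_span ⟨i, rfl⟩)
    have : w - ∑ i, Φ w i • v i = 0 := by
      refine hinj _ (W.sub_mem hw (W.sum_mem fun i _ => W.smul_mem _ (hv i))) ?_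
      rw [map_sub, map_sum]
      simp only [map_smul, hΦ]
      funext j
      simp [Pi.single_apply]
    rw [sub_eq_zero.1 this]
    exact hs
  rw [Set.range_comp, ← Submodule.map_span, hspan, Submodule.map_coe]

theorem prodMap_inj : Function.Injective (KTS.subtype.prodMap KTS.subtype) :=
  Function.Injective.prodMap Subtype.val_injective Subtype.val_injective

theorem mem1 (a r : ℝ) : ((eK 0 0 0, 0) : KTS × KTS) ∈ solSub a r := by
  rw [mem_solSub, L1_apply, L2_apply]
  simp [eK_T, eK_X, eK_D, eK_Z]

theorem mem2 (a r : ℝ) : ((0, eK 0 2 0) : KTS × KTS) ∈ solSub a r := by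
  rw [mem_solSub, L1_apply, L2_apply]
  simp only [eK_T, eK_X, eK_D, eK_Z, map_zero]
  constructor
  · have : I * (2 * Real.pi * I * 2) + 4 * Real.pi = (0 : ℂ) := by
      linear_combination (4 * Real.pi : ℂ) * I_sq
    push_cast
    rw [smul_smul]
    linear_combination (norm := module) this • eK 0 2 0
  · simp

/-- The extra pair of solutions, which requires `m = ±r` to be an integer frequency. -/
theorem mem3 (a r : ℝ) (hr : r ≠ 0) (m : ℤ) (hm : (m : ℝ) ^ 2 = r ^ 2) :
    (((-(I * m) / r ^ 2 : ℂ) • eK 0 1 m, eK 0 1 m) : KTS × KTS) ∈ solSub a r := by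
  have hrC : (r : ℂ) ≠ 0 := by exact_mod_cast hr
  have hmC : (m : ℂ) ^ 2 = r ^ 2 := by exact_mod_cast hm
  rw [mem_solSub, L1_apply, L2_apply]
  simp only [map_smul, eK_T, eK_X, eK_D, eK_Z]
  constructor
  · have : -((-(I * m) / r ^ 2) * (2 * Real.pi * I * m)) + I * (2 * Real.pi * I) + 4 * Real.pi
        = (0 : ℂ) := by
      field_simp
      linear_combination (2 * Real.pi * (m ^ 2 + r ^ 2) : ℂ) * I_sq - (2 * Real.pi : ℂ) * hmC
    push_cast
    linear_combination (norm := module) this • eK 0 1 m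
  · have : (r ^ 2 : ℂ) * (-(I * ((-(I * m) / r ^ 2) * (2 * Real.pi * I)))) + 2 * Real.pi * I * m
        = (0 : ℂ) := by
      field_simp
      linear_combination (2 * Real.pi * I * m : ℂ) * I_sq
    push_cast
    linear_combination (norm := module) this • eK 0 1 m

theorem dim_two (a : ℝ) (r : ℚ) (hr : 0 < r) (hnum : ∀ k : ℤ, (r : ℝ) ≠ k) :
    HasDimOver (SolRho a (8 * Real.pi) ((r : ℝ) ^ 2)) 2 := by
  rw [SolRho_eq_image]
  refine hasDim_of_coords _ prodMap_inj _
    (LinearMap.pi ![ipL 0 0 0 ∘ₗ LinearMap.fst ℂ KTS KTS, ipL 0 2 0 ∘ₗ LinearMap.snd ℂ KTS KTS])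
    ![(eK 0 0 0, 0), (0, eK 0 2 0)] ?_ ?_ ?_
  · intro i; fin_cases i
    · exact mem1 a r
    · exact mem2 a r
  · intro i
    funext j
    fin_cases i <;> fin_cases j <;> simp [ipL_apply, ip_eK_self, ip_zero_left]
  · intro w hw h
    refine sol_eq_zero hr hw (congrFun h 0) (congrFun h 1) fun m hm => ?_
    rcases sq_eq_sq_iff_eq_or_eq_neg.1 hm with h1 | h1
    · exact absurd h1.symm (hnum m)
    · exact absurd (by push_cast; linarith) (hnum (-m))

theorem dim_four (a : ℝ) (r : ℤ) (hr : 0 < r) :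
    HasDimOver (SolRho a (8 * Real.pi) ((r : ℝ) ^ 2)) 4 := by
  have hr' : (r : ℝ) ≠ 0 := by exact_mod_cast hr.ne'
  have hne : r ≠ -r := by omega
  rw [SolRho_eq_image]
  refine hasDim_of_coords _ prodMap_inj _
    (LinearMap.pi ![ipL 0 0 0 ∘ₗ LinearMap.fst ℂ KTS KTS, ipL 0 2 0 ∘ₗ LinearMap.snd ℂ KTS KTS,
      ipL 0 1 r ∘ₗ LinearMap.snd ℂ KTS KTS, ipL 0 1 (-r) ∘ₗ LinearMap.snd ℂ KTS KTS])
    ![(eK 0 0 0, 0), (0, eK 0 2 0),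
      ((-(I * r) / ((r : ℝ) : ℂ) ^ 2 : ℂ) • eK 0 1 r, eK 0 1 r),
      ((-(I * (-r : ℤ)) / ((r : ℝ) : ℂ) ^ 2 : ℂ) • eK 0 1 (-r), eK 0 1 (-r))] ?_ ?_ ?_
  · intro i; fin_cases i
    · exact mem1 a r
    · exact mem2 a r
    · exact mem3 a r hr' r rfl
    · exact mem3 a r hr' (-r) (by push_cast; ring)
  · intro i
    funext j
    fin_cases i <;> fin_cases j <;>
      simp [ipL_apply, ip_eK_self, ip_zero_left, ip_eK_of_l_ne, ip_eK_of_m_ne hne,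
        ip_eK_of_m_ne hne.symm]
  · intro w hw h
    have hw' : w ∈ solSub a ((r : ℚ) : ℝ) := by simpa using hw
    refine sol_eq_zero (r := (r : ℚ)) (by exact_mod_cast hr) hw' (congrFun h 0) (congrFun h 1)
      fun m hm => ?_
    push_cast at hm
    rcases sq_eq_sq_iff_eq_or_eq_neg.1 hm with h1 | h1
    · obtain rfl : m = r := by exact_mod_cast h1
      exact congrFun h 2
    · obtain rfl : m = -r := by exact_mod_cast h1
      exact congrFun h 3

end

/-- Holt–Zhang: for `b = 8π` and `ρ > 0` with `√ρ` rational, `𝒮_ρ(a,b)`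
has dimension `4` when `√ρ` is an integer and dimension `2` when `√ρ ∈ ℚ \ ℤ`.  In
particular there are almost Kähler metrics compatible with the same almost complex
structure `J_{a,8π}` whose Hodge numbers `h^{0,1}` differ. -/
theorem hodge_number_h01_varies_with_almost_Kahler_metric
    (a : ℝ) (b : ℝ) (hb : b = 8 * Real.pi)
    (ρ : ℝ) (hρ : 0 < ρ) (hrat : ∃ r : ℚ, Real.sqrt ρ = (r : ℝ)) :
    ((∃ k : ℤ, Real.sqrt ρ = (k : ℝ)) → HasDimOver (SolRho a b ρ) 4) ∧
    (¬ (∃ k : ℤ, Real.sqrt ρ = (k : ℝ)) → HasDimOver (SolRho a b ρ) 2) ∧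
    (∃ ρ₁ ρ₂ : ℝ, 0 < ρ₁ ∧ 0 < ρ₂ ∧ ∃ n₁ n₂ : ℕ, n₁ ≠ n₂ ∧
      HasDimOver (SolRho a b ρ₁) n₁ ∧ HasDimOver (SolRho a b ρ₂) n₂) := by
  subst hb
  obtain ⟨r, hr⟩ := hrat
  have hpos : 0 < Real.sqrt ρ := Real.sqrt_pos.2 hρ
  have hsq : ρ = Real.sqrt ρ ^ 2 := (Real.sq_sqrt hρ.le).symm
  refine ⟨?_, ?_, ?_⟩
  · rintro ⟨k, hk⟩
    rw [hk] at hpos hsq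
    rw [hsq]
    exact dim_four a k (by exact_mod_cast hpos)
  · intro hnum
    rw [hr] at hpos hsq hnum
    rw [hsq]
    exact dim_two a r (by exact_mod_cast hpos) fun k hk => hnum ⟨k, hk⟩
  · refine ⟨((1 : ℤ) : ℝ) ^ 2, ((1 / 2 : ℚ) : ℝ) ^ 2, by norm_num, by norm_num, 4, 2, by norm_num,
      dim_four a 1 one_pos, dim_two a (1 / 2) (by norm_num) fun k hk => ?_⟩
    have h2 : ((2 * k : ℤ) : ℝ) = ((1 : ℤ) : ℝ) := by push_cast at hk ⊢; linarith
    have h3 : 2 * k = 1 := by exact_mod_cast h2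
    omega
end

section
/- Let a ∈ ℝ and b ∈ ℝ\{0}. The ℂ-vector space of smooth KT-periodic functions f : ℝ⁴ → ℂ satisfying V̄₁(f) + (b/4)f = 0 and V̄₂(f) = 0 has dimension 1 if b ∈ 4πℤ (with b ≠ 0), and dimension 0 if b ∉ 4πℤ. Moreover, when b = 4πl with l ∈ ℤ\{0}, the solutions are exactly the functions f(t,x,y,z) = C·e^{2πi l x} with C ∈ ℂ. (This space computes the Hodge number h^{2,0} of (KT⁴, J_{a,b}).) -/
/-!
Both equations are Cauchy–Riemann equations in disguise. If `h : ℝ² → ℂ` satisfies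
`∂₁h + c ∂₂h = 0` with `Im c ≠ 0`, then `dh = ∂₂h · d(z - c y)`, so `h` is an entire function of the
complex coordinate `ζ = z - c y`; if `h` is bounded, Liouville's theorem makes it constant
(`const_of_cauchyRiemann`).

For fixed `(t, x)` a solution `f` is periodic, hence bounded, in `(y, z)`, and `V̄₂ f = 0` is such an
equation with `c = x - (a + i)/b`, so `f` depends on `(t, x)` only. It is then periodic in `(t, x)`,
and `g = e^{-ibx/2} f` is bounded and satisfies `∂ₜg + i ∂ₓg = 0`; so `g` is a constant `C`, and
`f = C e^{ibx/2}` (`sol20_eq_exp`). Periodicity in `x` forces `C = 0` or `b/2 ∈ 2πℤ`.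
-/

open Complex MeasureTheory

/-- The space of smooth KT-periodic functions `f` with `V̄₁(f) + (b/4)f = 0` and
`V̄₂(f) = 0`; it computes the Hodge number `h^{2,0}` of `(KT⁴, J_{a,b})`. -/
def Sol20 (a b : ℝ) : Set F4 :=
  {f | Smooth4 f ∧ KTPeriodic f ∧
    (∀ t x y z : ℝ, V₁c f t x y z + ((b : ℂ) / 4) * f t x y z = 0) ∧
    (∀ t x y z : ℝ, V₂c a b f t x y z = 0)}

/-- Liouville's theorem for the complex structure on `ℝ²` with holomorphic coordinate
`ζ = z - c y`. -/
lemma const_of_cauchyRiemann (h : ℝ × ℝ → ℂ) (hd : Differentiable ℝ h) (c : ℂ) (hc : c.im ≠ 0)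
    (hcr : ∀ y z : ℝ, deriv (fun s => h (s, z)) y + c * deriv (fun s => h (y, s)) z = 0)
    (hbd : ∃ M : ℝ, ∀ p, ‖h p‖ ≤ M) (p q : ℝ × ℝ) : h p = h q := by
  -- The inverse of `(y, z) ↦ z - c y`.
  let L : ℂ →L[ℝ] ℝ × ℝ :=
    ((-(c.im)⁻¹) • Complex.imCLM).prod
      (Complex.reCLM + (c.re * (-(c.im)⁻¹)) • Complex.imCLM)
  have hL : ∀ y z : ℝ, L ((z : ℂ) - c * y) = (y, z) := by
    intro y z
    ext
    · simp [L]
      field_simp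
    · simp [L]
      field_simp
      ring
  have hdiff : Differentiable ℂ (fun ζ => h (L ζ)) := by
    intro ζ
    have h1 : HasFDerivAt h (fderiv ℝ h (L ζ)) (L ζ) := (hd (L ζ)).hasFDerivAt
    have h2 : HasFDerivAt (fun ζ => h (L ζ)) ((fderiv ℝ h (L ζ)).comp L) ζ :=
      h1.comp ζ L.hasFDerivAt
    have e1 : deriv (fun s => h (s, (L ζ).2)) (L ζ).1 = fderiv ℝ h (L ζ) (1, 0) :=
      (h1.comp_hasDerivAt (L ζ).1
        ((hasDerivAt_id (L ζ).1).prodMk (hasDerivAt_const (L ζ).1 (L ζ).2))).deriv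
    have e2 : deriv (fun s => h ((L ζ).1, s)) (L ζ).2 = fderiv ℝ h (L ζ) (0, 1) :=
      (h1.comp_hasDerivAt (L ζ).2
        ((hasDerivAt_const (L ζ).2 (L ζ).1).prodMk (hasDerivAt_id (L ζ).2))).deriv
    have hcr' := hcr (L ζ).1 (L ζ).2
    rw [e1, e2] at hcr'
    set D := fderiv ℝ h (L ζ)
    -- By the equation, the real derivative is multiplication by `∂₂h`.
    have h3 : (D.comp L) =
        ((ContinuousLinearMap.toSpanSingleton ℂ (D (0, 1)) : ℂ →L[ℂ] ℂ).restrictScalars ℝ) := by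
      ext v
      have hv : v = ((L v).2 : ℂ) - c * ((L v).1 : ℂ) := by
        apply Complex.ext
        · simp [L]
          ring
        · simp [L]
          field_simp
      have hLv : L v = (L v).1 • ((1 : ℝ), (0 : ℝ)) + (L v).2 • ((0 : ℝ), (1 : ℝ)) := by
        ext <;> simp
      have hD : D (L v) = ((L v).1 : ℂ) * D (1, 0) + ((L v).2 : ℂ) * D (0, 1) := by
        conv_lhs => rw [hLv, map_add, map_smul, map_smul]
        simp
      have hR : ((ContinuousLinearMap.toSpanSingleton ℂ (D (0, 1)) :
          ℂ →L[ℂ] ℂ).restrictScalars ℝ) v = v * D (0, 1) := by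
        simp
      rw [hR, ContinuousLinearMap.comp_apply, hD]
      conv_rhs => rw [hv]
      linear_combination ((L v).1 : ℂ) * hcr'
    exact (hasFDerivAt_of_restrictScalars ℝ h2 h3.symm).differentiableAt
  have hb : Bornology.IsBounded (Set.range (fun ζ => h (L ζ))) := by
    obtain ⟨M, hM⟩ := hbd
    rw [isBounded_iff_forall_norm_le]
    exact ⟨M, by rintro _ ⟨ζ, rfl⟩; exact hM _⟩
  have := hdiff.apply_eq_apply_of_bounded hb ((p.2 : ℂ) - c * p.1) ((q.2 : ℂ) - c * q.1)
  simpa only [hL] using this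

lemma bounded_of_periodic (h : ℝ × ℝ → ℂ) (hc : Continuous h)
    (h1 : ∀ y z, h (y + 1, z) = h (y, z)) (h2 : ∀ y z, h (y, z + 1) = h (y, z)) :
    ∃ M : ℝ, ∀ p, ‖h p‖ ≤ M := by
  obtain ⟨M, hM⟩ := (isCompact_Icc (a := (0 : ℝ)) (b := 1)).prod
    (isCompact_Icc (a := (0 : ℝ)) (b := 1)) |>.exists_bound_of_continuousOn hc.continuousOn
  refine ⟨M, fun p => ?_⟩
  have e1 : h (Int.fract p.1, p.2) = h p := by
    have hp : Function.Periodic (fun y => h (y, p.2)) 1 := fun y => h1 y p.2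
    simpa only [zsmul_eq_mul, mul_one, Int.self_sub_floor] using hp.sub_zsmul_eq ⌊p.1⌋ (x := p.1)
  have e2 : h (Int.fract p.1, Int.fract p.2) = h (Int.fract p.1, p.2) := by
    have hp : Function.Periodic (fun z => h (Int.fract p.1, z)) 1 := fun z => h2 _ z
    simpa only [zsmul_eq_mul, mul_one, Int.self_sub_floor] using hp.sub_zsmul_eq ⌊p.2⌋ (x := p.2)
  rw [← e1, ← e2]
  exact hM _ ⟨⟨Int.fract_nonneg _, (Int.fract_lt_one _).le⟩,
    ⟨Int.fract_nonneg _, (Int.fract_lt_one _).le⟩⟩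

lemma sol20_indep_yz {a b : ℝ} (hb : b ≠ 0) {f : F4} (hf : f ∈ Sol20 a b) (t x y z : ℝ) :
    f t x y z = f t x 0 0 := by
  obtain ⟨hs, hp, -, h2⟩ := hf
  have hd : Differentiable ℝ (fun p : ℝ × ℝ × ℝ × ℝ => f p.1 p.2.1 p.2.2.1 p.2.2.2) :=
    hs.differentiable (by simp)
  have hd' : Differentiable ℝ (fun p : ℝ × ℝ => f t x p.1 p.2) :=
    hd.comp (g := fun p : ℝ × ℝ × ℝ × ℝ => f p.1 p.2.1 p.2.2.1 p.2.2.2)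
      (f := fun p : ℝ × ℝ => (t, x, p.1, p.2)) (by fun_prop)
  refine const_of_cauchyRiemann (fun p : ℝ × ℝ => f t x p.1 p.2) hd'
    ((x : ℂ) - ((a : ℂ) + Complex.I) / (b : ℂ)) ?_ ?_ ?_ (y, z) (0, 0)
  · simp [Complex.div_ofReal_im, hb]
  · intro y z
    have := h2 t x y z
    simp only [V₂c, pY, pZ] at this
    linear_combination 2 * this
  · exact bounded_of_periodic _ hd'.continuous (fun y z => (hp t x y z).2.2.1)
      (fun y z => (hp t x y z).2.2.2)

lemma sol20_eq_exp {a b : ℝ} (hb : b ≠ 0) {f : F4} (hf : f ∈ Sol20 a b) :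
    ∃ C : ℂ, f = fun (_t x _y _z : ℝ) => C * Complex.exp (Complex.I * (b / 2) * x) := by
  have hi := sol20_indep_yz hb hf
  obtain ⟨hs, hp, h1, -⟩ := hf
  have hd : Differentiable ℝ (fun p : ℝ × ℝ × ℝ × ℝ => f p.1 p.2.1 p.2.2.1 p.2.2.2) :=
    hs.differentiable (by simp)
  have hd' : Differentiable ℝ (fun p : ℝ × ℝ => f p.1 p.2 0 0) :=
    hd.comp (g := fun p : ℝ × ℝ × ℝ × ℝ => f p.1 p.2.1 p.2.2.1 p.2.2.2)
      (f := fun p : ℝ × ℝ => (p.1, p.2, 0, 0)) (by fun_prop)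
  have hexp : ∀ x : ℝ, HasDerivAt (fun s : ℝ => Complex.exp (-(Complex.I * (b / 2) * s)))
      (Complex.exp (-(Complex.I * (b / 2) * x)) * (-(Complex.I * (b / 2)))) x := by
    intro x
    have : HasDerivAt (fun s : ℝ => -(Complex.I * (b / 2) * (s : ℂ)))
        (-(Complex.I * (b / 2))) x := by
      simpa using (Complex.ofRealCLM.hasDerivAt (x := x)).const_mul
        (-(Complex.I * ((b : ℂ) / 2)))
    exact this.cexp
  let g : ℝ × ℝ → ℂ := fun p => Complex.exp (-(Complex.I * (b / 2) * p.2)) * f p.1 p.2 0 0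
  have hg : Differentiable ℝ g := by
    refine Differentiable.mul ?_ hd'
    exact (show Differentiable ℝ (fun s : ℝ => Complex.exp (-(Complex.I * (b / 2) * s))) from
      fun x => (hexp x).differentiableAt).comp differentiable_snd
  have hconst := const_of_cauchyRiemann g hg Complex.I (by simp) ?_ ?_
  · refine ⟨g (0, 0), ?_⟩
    funext t x y z
    rw [hi, hconst (0, 0) (t, x)]
    simp only [g]
    rw [mul_right_comm, ← Complex.exp_add]
    simp
  · intro t x
    have := h1 t x 0 0
    simp only [V₁c, pT, pX] at this
    have ht : DifferentiableAt ℝ (fun s => f s x 0 0) t :=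
      (hd'.comp (f := fun s : ℝ => (s, x)) (by fun_prop)) t
    have hx : DifferentiableAt ℝ (fun s => f t s 0 0) x :=
      (hd'.comp (f := fun s : ℝ => (t, s)) (by fun_prop)) x
    have e1 : deriv (fun s => g (s, x)) t =
        Complex.exp (-(Complex.I * (b / 2) * x)) * deriv (fun s => f s x 0 0) t :=
      (ht.hasDerivAt.const_mul (Complex.exp (-(Complex.I * (b / 2) * x)))).deriv
    have e2 : deriv (fun s => g (t, s)) x = _ := ((hexp x).mul hx.hasDerivAt).deriv
    rw [e1, e2]
    linear_combination (2 * Complex.exp (-(Complex.I * (b / 2) * x))) * this -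
      (Complex.exp (-(Complex.I * (b / 2) * x)) * (b / 2) * f t x 0 0) * Complex.I_sq
  · obtain ⟨M, hM⟩ := bounded_of_periodic (fun p : ℝ × ℝ => f p.1 p.2 0 0) hd'.continuous
      (fun t x => (hp t x 0 0).1) (fun t x => by simpa using (hp t x 0 0).2.1)
    refine ⟨M, fun p => ?_⟩
    have : ‖g p‖ = ‖f p.1 p.2 0 0‖ := by
      simp [g, Complex.norm_exp]
    rw [this]
    exact hM p

lemma sol20_eq_zero {a b : ℝ} (hb : b ≠ 0) (hl : ¬ ∃ l : ℤ, b = 4 * Real.pi * (l : ℝ)) {f : F4}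
    (hf : f ∈ Sol20 a b) : f = 0 := by
  obtain ⟨C, hC⟩ := sol20_eq_exp hb hf
  have hper := (hf.2.1 0 0 0 0).2.1
  simp only [hC] at hper
  by_cases h0 : C = 0
  · subst h0
    rw [hC]
    funext t x y z
    simp
  · exfalso
    have h1 := mul_left_cancel₀ h0 hper
    norm_num at h1
    obtain ⟨n, hn⟩ := Complex.exp_eq_one_iff.mp h1
    have h2 : (b : ℂ) = 4 * Real.pi * n := by
      have : Complex.I * (b : ℂ) = Complex.I * (4 * Real.pi * n) := by
        linear_combination 2 * hn
      exact mul_left_cancel₀ Complex.I_ne_zero this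
    exact hl ⟨n, by exact_mod_cast h2⟩

lemma exp_mem_sol20 (a : ℝ) {b : ℝ} (l : ℤ) (hl : b = 4 * Real.pi * (l : ℝ)) (C : ℂ) :
    (fun (_t x _y _z : ℝ) =>
      C * Complex.exp (2 * Real.pi * Complex.I * (l : ℂ) * (x : ℂ))) ∈ Sol20 a b := by
  refine ⟨?_, ?_, ?_, ?_⟩
  · unfold Smooth4
    have h : ContDiff ℝ (⊤ : ℕ∞) (fun p : ℝ × ℝ × ℝ × ℝ => (p.2.1 : ℂ)) :=
      Complex.ofRealCLM.contDiff.comp (contDiff_fst.comp contDiff_snd)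
    exact contDiff_const.mul (contDiff_const.mul h).cexp
  · intro t x y z
    refine ⟨rfl, ?_, rfl, rfl⟩
    have : 2 * Real.pi * Complex.I * (l : ℂ) * ((x + 1 : ℝ) : ℂ) =
        2 * Real.pi * Complex.I * (l : ℂ) * (x : ℂ) + l * (2 * Real.pi * Complex.I) := by
      push_cast
      ring
    simp only [this, Complex.exp_add, Complex.exp_int_mul_two_pi_mul_I, mul_one]
  · intro t x y z
    have h : HasDerivAt (fun s : ℝ => 2 * Real.pi * Complex.I * (l : ℂ) * (s : ℂ))
        (2 * Real.pi * Complex.I * (l : ℂ)) x := by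
      simpa using (Complex.ofRealCLM.hasDerivAt (x := x)).const_mul
        (2 * Real.pi * Complex.I * (l : ℂ))
    simp only [V₁c, pT, pX, (h.cexp.const_mul C).deriv, deriv_const]
    rw [hl]
    push_cast
    linear_combination (C * Complex.exp (2 * Real.pi * Complex.I * (l : ℂ) * (x : ℂ)) *
      Real.pi * l) * Complex.I_sq
  · intro t x y z
    simp [V₂c, pY, pZ]

lemma sol20_eq_of_integral (a : ℝ) {b : ℝ} (hb : b ≠ 0) (l : ℤ) (hl : b = 4 * Real.pi * (l : ℝ)) :
    Sol20 a b = {f | ∃ C : ℂ, f = fun (_t x _y _z : ℝ) =>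
        C * Complex.exp (2 * Real.pi * Complex.I * (l : ℂ) * (x : ℂ))} := by
  ext f
  constructor
  · intro hf
    obtain ⟨C, hC⟩ := sol20_eq_exp hb hf
    refine ⟨C, ?_⟩
    rw [hC]
    funext t x y z
    congr 2
    rw [hl]
    push_cast
    ring
  · rintro ⟨C, rfl⟩
    exact exp_mem_sol20 a l hl C

/-- for `b ≠ 0`, the space computing `h^{2,0}` has dimension `1` when
`b ∈ 4πℤ` and dimension `0` when `b ∉ 4πℤ`; moreover for `b = 4πl`, `l ∈ ℤ \ {0}`, the
solutions are exactly the functions `C·e^{2πilx}`. -/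
theorem hodge_number_h20_KT
    (a b : ℝ) (hb : b ≠ 0) :
    ((∃ l : ℤ, b = 4 * Real.pi * (l : ℝ)) → HasDimOver (Sol20 a b) 1) ∧
    (¬ (∃ l : ℤ, b = 4 * Real.pi * (l : ℝ)) → HasDimOver (Sol20 a b) 0) ∧
    (∀ l : ℤ, l ≠ 0 → b = 4 * Real.pi * (l : ℝ) →
      Sol20 a b = {f | ∃ C : ℂ, f = fun (_t x _y _z : ℝ) =>
        C * Complex.exp (2 * Real.pi * Complex.I * (l : ℂ) * (x : ℂ))}) := by
  refine ⟨?_, ?_, fun l _ hl => sol20_eq_of_integral a hb l hl⟩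
  · rintro ⟨l, hl⟩
    let e : F4 := fun (_t x _y _z : ℝ) =>
      Complex.exp (2 * Real.pi * Complex.I * (l : ℂ) * (x : ℂ))
    refine ⟨fun _ => e, ?_, ?_⟩
    · have he : e ≠ 0 := fun h =>
        Complex.exp_ne_zero _ (congrFun (congrFun (congrFun (congrFun h 0) 0) 0) 0)
      exact LinearIndependent.of_subsingleton 0 he
    · rw [sol20_eq_of_integral a hb l hl, Set.range_const]
      ext f
      rw [SetLike.mem_coe, Submodule.mem_span_singleton]
      exact ⟨fun ⟨C, hC⟩ => ⟨C, hC.symm⟩, fun ⟨C, hC⟩ => ⟨C, hC.symm⟩⟩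
  · intro hl
    refine ⟨Fin.elim0, linearIndependent_empty_type, ?_⟩
    rw [Set.range_eq_empty, Submodule.span_empty]
    ext f
    constructor
    · intro hf
      have h0 : f = 0 := by simpa using hf
      subst h0
      refine ⟨contDiff_const, fun t x y z => ⟨rfl, rfl, rfl, rfl⟩, ?_, ?_⟩ <;> intro t x y z <;>
        simp [V₁c, V₂c, pT, pX, pY, pZ]
    · intro hf
      simpa using sol20_eq_zero hb hl hf
end

section
/- Let p, q be coprime integers with p ≠ 0 and 1 ≤ q ≤ 5. Write p² = 2^{α₀} · p₁^{α₁} ⋯ p_s^{α_s} · q₁^{β₁} ⋯ q_t^{β_t}, where the p_i are distinct primes ≡ 3 (mod 4) and the q_j are distinct primes ≡ 1 (mod 4). Then the number of pairs (l,m) ∈ ℤ² with (ql − p)² + (qm)² = p² equals 4·(β₁+1)⋯(β_t+1) if q = 1; 2·(β₁+1)⋯(β_t+1) if q = 2; and (β₁+1)⋯(β_t+1) if q ∈ {3,4,5}. -/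
/-!
The map `(l, m) ↦ (q l - p, q m)` identifies the set to be counted with the integer points `(x, y)`
of the circle `x² + y² = p²` such that `q ∣ x + p` and `q ∣ y`.

All points of this circle are counted in the Gaussian integers, as the elements of norm `p²`.
Multiplication by `1 + i` shows that norms `2 n` and `n` are attained equally often. A prime
`r ≡ 3 (mod 4)` is inert, so elements of norm `r² n` are the `r`-multiples of those of norm `n`.
A prime `r ≡ 1 (mod 4)` splits as `π π̄` with `π ∤ π̄`, and for `r ∤ n` every element of norm `r ^ b n`
is uniquely `π ^ k π̄ ^ (b - k) w` with `0 ≤ k ≤ b` and `w` of norm `n`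
(`ncard_normSet_split_pow`). As there are four units, the circle carries `4 ∏ (βⱼ + 1)` points.

The congruence conditions cut this number by symmetry. For `2 ≤ q ≤ 5` and `p` prime to `q`, exactly
one of `x`, `y` is divisible by `q`, so the swap `(x, y) ↦ (y, x)` shows that `q ∣ y` holds for half
of the points. For `3 ≤ q ≤ 5` exactly one of `q ∣ x + p`, `q ∣ x - p` then holds, and `x ↦ -x`
yields another factor of one half; for `q = 2` the condition `q ∣ x + p` is automatic.
-/

/-! ### Gaussian integers of given norm -/

/-- The set of Gaussian integers of norm `n`. -/
def normSet (n : ℤ) : Set GaussianInt := {z | z.norm = n}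

lemma finite_normSet (n : ℤ) : (normSet n).Finite := by
  have hinj : Function.Injective (fun z : GaussianInt => (z.re, z.im)) := by
    intro z w h
    simp only [Prod.mk.injEq] at h
    exact Zsqrtd.ext h.1 h.2
  refine Set.Finite.of_injOn (f := fun z : GaussianInt => (z.re, z.im))
    (t := Set.Icc (-n) n ×ˢ Set.Icc (-n) n) ?_ hinj.injOn
    ((Set.finite_Icc _ _).prod (Set.finite_Icc _ _))
  intro z hz
  have hz : z.norm = n := hz
  rw [Zsqrtd.norm_def] at hz
  simp only [Set.mem_prod, Set.mem_Icc]
  refine ⟨⟨?_, ?_⟩, ?_, ?_⟩ <;>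
    nlinarith [Int.le_self_sq z.re, Int.le_self_sq z.im, Int.le_self_sq (-z.re),
      Int.le_self_sq (-z.im), sq_nonneg z.re, sq_nonneg z.im]

lemma ncard_normSet_one : (normSet 1).ncard = 4 := by
  have h : normSet 1 = (({⟨1, 0⟩, ⟨-1, 0⟩, ⟨0, 1⟩, ⟨0, -1⟩} : Finset GaussianInt) :
      Set GaussianInt) := by
    ext ⟨x, y⟩
    simp only [normSet, Set.mem_ofPred_eq, Zsqrtd.norm_def, Finset.coe_insert,
      Finset.coe_singleton, Set.mem_insert_iff, Set.mem_singleton_iff, Zsqrtd.ext_iff]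
    constructor
    · intro h
      have hx1 : x ≤ 1 := by nlinarith [mul_self_nonneg y]
      have hx2 : -1 ≤ x := by nlinarith [mul_self_nonneg y]
      have hy1 : y ≤ 1 := by nlinarith
      have hy2 : -1 ≤ y := by nlinarith
      interval_cases x <;> interval_cases y <;> simp_all
    · rintro (⟨rfl, rfl⟩ | ⟨rfl, rfl⟩ | ⟨rfl, rfl⟩ | ⟨rfl, rfl⟩) <;> norm_num
  rw [h, Set.ncard_coe_finset]
  decide

/-- If `c` divides every element of norm `c.norm * n`, then multiplication by `c` is a bijection
from the elements of norm `n` to those of norm `c.norm * n`. -/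
lemma normSet_mul_eq_image {c : GaussianInt} (hc : c ≠ 0) (n : ℤ)
    (hdvd : ∀ z ∈ normSet (c.norm * n), c ∣ z) :
    normSet (c.norm * n) = (fun w => c * w) '' normSet n := by
  have hc0 : c.norm ≠ 0 := fun h => hc ((Zsqrtd.norm_eq_zero_iff (by norm_num) c).1 h)
  ext z
  constructor
  · intro hz
    obtain ⟨w, rfl⟩ := hdvd z hz
    refine ⟨w, ?_, rfl⟩
    have hz : (c * w).norm = c.norm * n := hz
    rw [Zsqrtd.norm_mul] at hz
    exact mul_left_cancel₀ hc0 hz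
  · rintro ⟨w, hw, rfl⟩
    have hw : w.norm = n := hw
    change (c * w).norm = _
    rw [Zsqrtd.norm_mul, hw]

lemma ncard_normSet_mul {c : GaussianInt} (hc : c ≠ 0) (n : ℤ)
    (hdvd : ∀ z ∈ normSet (c.norm * n), c ∣ z) :
    (normSet (c.norm * n)).ncard = (normSet n).ncard := by
  rw [normSet_mul_eq_image hc n hdvd]
  exact Set.ncard_image_of_injective _ (mul_right_injective₀ hc)

/-! ### The ramified prime -/

lemma ncard_normSet_two_mul (n : ℤ) : (normSet (2 * n)).ncard = (normSet n).ncard := by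
  have h2 : (⟨1, 1⟩ : GaussianInt).norm = 2 := by norm_num [Zsqrtd.norm_def]
  rw [← h2]
  refine ncard_normSet_mul (by simp [Zsqrtd.ext_iff]) n ?_
  intro z hz
  have hz : z.norm = _ * n := hz
  rw [h2, Zsqrtd.norm_def] at hz
  -- `z / (1 + i) = (x + y) / 2 + i (y - x) / 2`, and `x ≡ y (mod 2)` because the norm is even
  have hpar : (z.re + z.im) % 2 = 0 := by
    have h : (z.re + z.im) ^ 2 = 2 * (n + z.re * z.im) := by linear_combination hz
    have : (2 : ℤ) ∣ z.re + z.im := Int.prime_two.dvd_of_dvd_pow ⟨_, h⟩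
    omega
  refine ⟨⟨(z.re + z.im) / 2, (z.im - z.re) / 2⟩, ?_⟩
  ext
  · simp
    omega
  · simp
    omega

lemma ncard_normSet_two_pow (a : ℕ) : (normSet (2 ^ a)).ncard = 4 := by
  induction a with
  | zero => simpa using ncard_normSet_one
  | succ a ih => rw [pow_succ', ncard_normSet_two_mul, ih]

/-! ### Inert primes -/

lemma inert_dvd_of_dvd_norm {r : ℕ} (hr : r.Prime) (h3 : r % 4 = 3) {z : GaussianInt}
    (h : (r : ℤ) ∣ z.norm) : (r : GaussianInt) ∣ z := by
  have : Fact r.Prime := ⟨hr⟩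
  have hp : Prime (r : GaussianInt) := GaussianInt.prime_of_nat_prime_of_mod_four_eq_three r h3
  have h1 : (r : GaussianInt) ∣ z * star z := by
    rw [← Zsqrtd.norm_eq_mul_conj]
    exact_mod_cast (Int.cast_dvd_cast (α := GaussianInt) _ _ h)
  rcases hp.dvd_or_dvd h1 with h | ⟨w, hw⟩
  · exact h
  · exact ⟨star w, by rw [← star_star z, hw]; simp⟩

/-- Nonemptiness of the set of elements of norm `r ^ a * n` takes the place of evenness of `a`, which it
implies; it is passed on to `n` so that the lemma can be applied to one prime after another. -/
lemma ncard_normSet_inert_pow {r : ℕ} (hr : r.Prime) (h3 : r % 4 = 3) {n : ℤ}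
    (hn : ¬ (r : ℤ) ∣ n) (a : ℕ) (hne : (normSet ((r : ℤ) ^ a * n)).Nonempty) :
    (normSet ((r : ℤ) ^ a * n)).ncard = (normSet n).ncard ∧ (normSet n).Nonempty := by
  have hr0 : (r : ℤ) ≠ 0 := by exact_mod_cast hr.ne_zero
  have hnorm : (r : GaussianInt).norm = (r : ℤ) ^ 2 := by rw [Zsqrtd.norm_natCast, sq]
  induction a using Nat.strong_induction_on with
  | _ a ih =>
    match a with
    | 0 => simpa using hne
    | 1 =>
      obtain ⟨z, hz⟩ := hne
      have hz : z.norm = (r : ℤ) ^ 1 * n := hz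
      obtain ⟨w, rfl⟩ := inert_dvd_of_dvd_norm hr h3 (z := z) ⟨n, by rw [hz, pow_one]⟩
      rw [Zsqrtd.norm_mul, hnorm] at hz
      refine absurd ⟨w.norm, mul_left_cancel₀ hr0 ?_⟩ hn
      linear_combination -hz
    | a + 2 =>
      have hc : (r : GaussianInt) ≠ 0 := by exact_mod_cast hr.ne_zero
      have hdvd : ∀ z ∈ normSet ((r : GaussianInt).norm * ((r : ℤ) ^ a * n)),
          (r : GaussianInt) ∣ z := by
        intro z hz
        have hz : z.norm = _ := hz
        refine inert_dvd_of_dvd_norm hr h3 ?_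
        rw [hz, hnorm, sq, mul_assoc]
        exact dvd_mul_right _ _
      have he : (r : ℤ) ^ (a + 2) * n = (r : GaussianInt).norm * ((r : ℤ) ^ a * n) := by
        rw [hnorm]; ring
      rw [he] at hne ⊢
      rw [ncard_normSet_mul hc _ hdvd]
      rw [normSet_mul_eq_image hc _ hdvd] at hne
      exact ih a (by omega) hne.of_image

/-! ### Split primes -/

lemma prime_of_norm_eq_prime {z : GaussianInt} {r : ℕ} (hr : r.Prime) (hz : z.norm = r) :
    Prime z := by
  rw [← irreducible_iff_prime]
  refine ⟨fun hu => ?_, fun a b hab => ?_⟩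
  · rw [← Zsqrtd.norm_eq_one_iff, hz] at hu
    exact hr.one_lt.ne' (by simpa using hu)
  · rw [← Zsqrtd.norm_eq_one_iff, ← Zsqrtd.norm_eq_one_iff]
    have h : a.norm.natAbs * b.norm.natAbs = r := by
      rw [← Int.natAbs_mul, ← Zsqrtd.norm_mul, ← hab, hz, Int.natAbs_natCast]
    rcases (Nat.dvd_prime hr).1 ⟨_, h.symm⟩ with h1 | h1
    · exact Or.inl h1
    · right
      rw [h1] at h
      exact Nat.eq_of_mul_eq_mul_left hr.pos (by omega)

lemma exists_split_prime {r : ℕ} (hr : r.Prime) (h1 : r % 4 = 1) :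
    ∃ π : GaussianInt, π.norm = r ∧ ¬ π ∣ star π := by
  have : Fact r.Prime := ⟨hr⟩
  obtain ⟨a, b, hab⟩ := Nat.Prime.sq_add_sq (p := r) (by omega)
  have hnorm : (⟨a, b⟩ : GaussianInt).norm = r := by
    rw [Zsqrtd.norm_def, ← hab]; push_cast; ring
  refine ⟨⟨a, b⟩, hnorm, ?_⟩
  rintro ⟨w, hw⟩
  -- `π` divides `π + π̄ = 2 a`, so `r` divides `4 a²`, hence `a`; as `a² ≤ r`, this forces `a = 0`
  have h2 : (⟨a, b⟩ : GaussianInt) * (1 + w) = ((2 * a : ℕ) : GaussianInt) := by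
    rw [mul_add, ← hw]
    ext <;> simp
    ring
  have h3 := congrArg Zsqrtd.norm h2
  rw [Zsqrtd.norm_mul, hnorm, Zsqrtd.norm_natCast] at h3
  have h4 : r ∣ (2 * a) * (2 * a) := by
    have : (r : ℤ) ∣ ((2 * a * (2 * a) : ℕ) : ℤ) := ⟨(1 + w).norm, by rw [h3]; push_cast; ring⟩
    exact_mod_cast this
  have h5 : r ∣ 2 * a := by
    rcases hr.dvd_mul.1 h4 with h | h <;> exact h
  have h6 : r ∣ a := by
    rcases hr.dvd_mul.1 h5 with h | h
    · have := Nat.le_of_dvd (by norm_num) h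
      have := hr.two_le
      omega
    · exact h
  have h7 : a = 0 := by
    by_contra h0
    have := Nat.le_of_dvd (by omega) h6
    have := hr.two_le
    nlinarith
  rw [h7] at hab
  exact hr.prime.not_isSquare ⟨b, by rw [← hab]; ring⟩

lemma exists_factor_of_mem_normSet {π : GaussianInt} {r : ℕ} (hr : r.Prime) (hπ : π.norm = r)
    (n : ℤ) (b : ℕ) : ∀ z ∈ normSet ((r : ℤ) ^ b * n),
      ∃ k ≤ b, ∃ w ∈ normSet n, π ^ k * star π ^ (b - k) * w = z := by
  have hp : Prime π := prime_of_norm_eq_prime hr hπ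
  have hr0 : (r : ℤ) ≠ 0 := by exact_mod_cast hr.ne_zero
  induction b with
  | zero =>
    intro z hz
    exact ⟨0, le_rfl, z, by simpa using hz, by simp⟩
  | succ b ih =>
    intro z hz
    have hz : z.norm = (r : ℤ) ^ (b + 1) * n := hz
    have hdvd : π ∣ z * star z := by
      rw [← Zsqrtd.norm_eq_mul_conj, hz, pow_succ', mul_assoc, ← hπ]
      rw [Int.cast_mul, Zsqrtd.norm_eq_mul_conj π, mul_assoc]
      exact dvd_mul_right _ _
    have hred : ∀ c w : GaussianInt, c.norm = r → z = c * w → w ∈ normSet ((r : ℤ) ^ b * n) := by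
      intro c w hc hzw
      rw [hzw, Zsqrtd.norm_mul, hc] at hz
      refine mul_left_cancel₀ hr0 ?_
      rw [hz]; ring
    rcases hp.dvd_or_dvd hdvd with ⟨v, hv⟩ | ⟨v, hv⟩
    · obtain ⟨k, hk, w, hw, he⟩ := ih v (hred π v hπ hv)
      refine ⟨k + 1, by omega, w, hw, ?_⟩
      rw [hv, ← he, Nat.add_sub_add_right]
      ring
    · have hv' : z = star π * star v := by
        rw [← star_star z, hv, star_mul, mul_comm]
      obtain ⟨k, hk, w, hw, he⟩ := ih (star v) (hred (star π) _ (by rw [Zsqrtd.norm_conj, hπ]) hv')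
      refine ⟨k, by omega, w, hw, ?_⟩
      rw [hv', ← he, Nat.succ_sub hk, Nat.succ_eq_add_one]
      ring

lemma ncard_normSet_split_pow {r : ℕ} (hr : r.Prime) (h1 : r % 4 = 1) {n : ℤ}
    (hn : ¬ (r : ℤ) ∣ n) (b : ℕ) :
    (normSet ((r : ℤ) ^ b * n)).ncard = (b + 1) * (normSet n).ncard := by
  obtain ⟨π, hπ, hnot⟩ := exists_split_prime hr h1
  have hp : Prime π := prime_of_norm_eq_prime hr hπ
  have hs0 : star π ≠ 0 := star_ne_zero.2 hp.ne_zero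
  have hndvd : ∀ w ∈ normSet n, ¬ π ∣ w := by
    rintro w hw ⟨v, rfl⟩
    have hw : (π * v).norm = n := hw
    rw [Zsqrtd.norm_mul, hπ] at hw
    exact hn ⟨_, hw.symm⟩
  -- the exponent of `π` in `π ^ k * star π ^ (b - k) * w` is exactly `k`
  have hlt : ∀ k ≤ b, ∀ k' ≤ b, ∀ w ∈ normSet n, ∀ w' : GaussianInt,
      π ^ k * star π ^ (b - k) * w = π ^ k' * star π ^ (b - k') * w' → ¬ k < k' := by
    intro k hk k' hk' w hw w' he hkk
    obtain ⟨d, rfl⟩ := Nat.exists_eq_add_of_lt hkk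
    have h : star π ^ (b - k) * w = π * (π ^ d * star π ^ (b - (k + d + 1)) * w') := by
      refine mul_left_cancel₀ (pow_ne_zero k hp.ne_zero) ?_
      rw [← mul_assoc, he]; ring
    rcases hp.dvd_or_dvd ⟨_, h⟩ with h | h
    · exact hnot (hp.dvd_of_dvd_pow h)
    · exact hndvd w hw h
  have himg : normSet ((r : ℤ) ^ b * n) =
      (fun x : ℕ × GaussianInt => π ^ x.1 * star π ^ (b - x.1) * x.2) ''
        (Set.Iic b ×ˢ normSet n) := by
    ext z
    constructor
    · intro hz
      obtain ⟨k, hk, w, hw, he⟩ := exists_factor_of_mem_normSet hr hπ n b z hz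
      exact ⟨(k, w), ⟨hk, hw⟩, he⟩
    · rintro ⟨⟨k, w⟩, ⟨hk, hw⟩, rfl⟩
      have hk : k ≤ b := hk
      have hw : w.norm = n := hw
      have hpow : ∀ (c : GaussianInt) (j : ℕ), (c ^ j).norm = c.norm ^ j :=
        fun c j => map_pow Zsqrtd.normMonoidHom c j
      change (π ^ k * star π ^ (b - k) * w).norm = _
      rw [Zsqrtd.norm_mul, Zsqrtd.norm_mul, hpow, hpow, Zsqrtd.norm_conj, hπ, hw, ← pow_add,
        Nat.add_sub_cancel' hk]
  rw [himg, Set.InjOn.ncard_image, Set.ncard_prod, Set.ncard_eq_toFinset_card']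
  · simp
  · rintro ⟨k, w⟩ ⟨hk, hw⟩ ⟨k', w'⟩ ⟨hk', hw'⟩ he
    have he : π ^ k * star π ^ (b - k) * w = π ^ k' * star π ^ (b - k') * w' := he
    have h1 := hlt k hk k' hk' w hw w' he
    have h2 := hlt k' hk' k hk w' hw' w he.symm
    obtain rfl : k = k' := by omega
    have := mul_left_cancel₀
      (mul_ne_zero (pow_ne_zero k hp.ne_zero) (pow_ne_zero (b - k) hs0)) he
    rw [this]

/-! ### Products of prime powers -/

lemma prime_not_dvd_prod {ι : Type*} {f e : ι → ℕ} {r : ℕ} (hr : r.Prime) (T : Finset ι)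
    (hf : ∀ i ∈ T, (f i).Prime) (hne : ∀ i ∈ T, f i ≠ r) :
    ¬ (r : ℤ) ∣ ∏ i ∈ T, (f i : ℤ) ^ e i := by
  intro h
  obtain ⟨i, hi, hd⟩ := (Nat.prime_iff_prime_int.1 hr).exists_mem_finset_dvd h
  have hd := (Nat.prime_iff_prime_int.1 hr).dvd_of_dvd_pow hd
  exact hne i hi ((Nat.prime_dvd_prime_iff_eq hr (hf i hi)).1 (Int.natCast_dvd_natCast.1 hd)).symm

lemma ncard_normSet_inert_prod {ι : Type*} {f e : ι → ℕ} (hf : ∀ i, (f i).Prime)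
    (h3 : ∀ i, f i % 4 = 3) (hinj : Function.Injective f) {n : ℤ}
    (hn : ∀ i, ¬ (f i : ℤ) ∣ n) (T : Finset ι)
    (hne : (normSet ((∏ i ∈ T, (f i : ℤ) ^ e i) * n)).Nonempty) :
    (normSet ((∏ i ∈ T, (f i : ℤ) ^ e i) * n)).ncard = (normSet n).ncard := by
  classical
  induction T using Finset.induction_on with
  | empty => simp
  | insert i T hi ih =>
    rw [Finset.prod_insert hi, mul_assoc] at hne ⊢
    have hd : ¬ (f i : ℤ) ∣ (∏ i ∈ T, (f i : ℤ) ^ e i) * n := by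
      intro h
      rcases (Nat.prime_iff_prime_int.1 (hf i)).dvd_or_dvd h with h | h
      · refine prime_not_dvd_prod (hf i) T (fun j _ => hf j) (fun j hj he => ?_) h
        exact hi (hinj he ▸ hj)
      · exact hn i h
    obtain ⟨h1, h2⟩ := ncard_normSet_inert_pow (hf i) (h3 i) hd (e i) hne
    rw [h1, ih h2]

lemma ncard_normSet_split_prod {ι : Type*} {f e : ι → ℕ} (hf : ∀ i, (f i).Prime)
    (h1 : ∀ i, f i % 4 = 1) (hinj : Function.Injective f) {n : ℤ}
    (hn : ∀ i, ¬ (f i : ℤ) ∣ n) (T : Finset ι) :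
    (normSet ((∏ i ∈ T, (f i : ℤ) ^ e i) * n)).ncard =
      (∏ i ∈ T, (e i + 1)) * (normSet n).ncard := by
  classical
  induction T using Finset.induction_on with
  | empty => simp
  | insert i T hi ih =>
    rw [Finset.prod_insert hi, Finset.prod_insert hi, mul_assoc]
    have hd : ¬ (f i : ℤ) ∣ (∏ i ∈ T, (f i : ℤ) ^ e i) * n := by
      intro h
      rcases (Nat.prime_iff_prime_int.1 (hf i)).dvd_or_dvd h with h | h
      · refine prime_not_dvd_prod (hf i) T (fun j _ => hf j) (fun j hj he => ?_) h
        exact hi (hinj he ▸ hj)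
      · exact hn i h
    rw [ncard_normSet_split_pow (hf i) (h1 i) hd, ih, mul_assoc]

lemma not_dvd_two_pow {r : ℕ} (hr : r.Prime) (h2 : r ≠ 2) (a : ℕ) : ¬ (r : ℤ) ∣ 2 ^ a := by
  intro h
  have h : (r : ℤ) ∣ ((2 : ℕ) : ℤ) := (Nat.prime_iff_prime_int.1 hr).dvd_of_dvd_pow h
  exact h2 ((Nat.prime_dvd_prime_iff_eq hr Nat.prime_two).1 (Int.natCast_dvd_natCast.1 h))

/-! ### Points of the circle satisfying the congruences -/

/-- The integer points of the circle of radius `|p|` about the origin. -/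
def circlePoints (p : ℤ) : Set (ℤ × ℤ) := {v | v.1 ^ 2 + v.2 ^ 2 = p ^ 2}

lemma circlePoints_eq_image (p : ℤ) :
    circlePoints p = (fun z : GaussianInt => (z.re, z.im)) '' normSet (p ^ 2) := by
  ext ⟨x, y⟩
  simp only [circlePoints, normSet, Set.mem_ofPred_eq, Set.mem_image, Zsqrtd.norm_def]
  constructor
  · intro h
    exact ⟨⟨x, y⟩, by linear_combination h, rfl⟩
  · rintro ⟨z, hz, he⟩
    simp only [Prod.mk.injEq] at he
    rw [← he.1, ← he.2]
    linear_combination hz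

lemma finite_circlePoints (p : ℤ) : (circlePoints p).Finite := by
  rw [circlePoints_eq_image]
  exact (finite_normSet _).image _

lemma ncard_circlePoints (p : ℤ) : (circlePoints p).ncard = (normSet (p ^ 2)).ncard := by
  rw [circlePoints_eq_image]
  refine Set.ncard_image_of_injective _ fun z w h => ?_
  simp only [Prod.mk.injEq] at h
  exact Zsqrtd.ext h.1 h.2

lemma ncard_eq_two_mul_of_involution {X : Type*} {T U : Set X} (hT : T.Finite) {σ : X → X}
    (hσ : Function.Involutive σ) (hUT : U ⊆ T) (hmaps : ∀ x ∈ T, σ x ∈ T)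
    (hx : ∀ x ∈ T, x ∉ U ↔ σ x ∈ U) : T.ncard = 2 * U.ncard := by
  have h1 : T \ U = σ '' U := by
    ext x
    constructor
    · rintro ⟨hxT, hxU⟩
      exact ⟨σ x, (hx x hxT).1 hxU, hσ x⟩
    · rintro ⟨y, hy, rfl⟩
      have hyT := hmaps y (hUT hy)
      exact ⟨hyT, (hx _ hyT).2 (by rwa [hσ y])⟩
  have h2 := Set.ncard_sdiff_add_ncard_of_subset hUT hT
  rw [h1, Set.ncard_image_of_injective _ hσ.injective] at h2
  omega

lemma dvd_add_of_two {p x y : ℤ} (h : x ^ 2 + y ^ 2 = p ^ 2) (hy : 2 ∣ y) : 2 ∣ x + p := by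
  obtain ⟨c, rfl⟩ := hy
  refine Int.prime_two.dvd_of_dvd_pow (n := 2) ⟨p ^ 2 + x * p - 2 * c ^ 2, ?_⟩
  linear_combination h

/-- For `q = 4` the equation is read modulo `8`, where `4 ∣ y` becomes `2 * y = 0` and `2 ∤ p` becomes
`4 * p ≠ 0`; for the other values of `q` it is read modulo `q`. -/
lemma not_dvd_snd_iff {p q x y : ℤ} (hcop : IsCoprime p q) (hq2 : 2 ≤ q) (hq5 : q ≤ 5)
    (h : x ^ 2 + y ^ 2 = p ^ 2) : ¬ q ∣ y ↔ q ∣ x := by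
  have hred : ∀ m : ℕ, (x : ZMod m) ^ 2 + (y : ZMod m) ^ 2 = (p : ZMod m) ^ 2 := by
    intro m
    exact_mod_cast congrArg (Int.cast : ℤ → ZMod m) h
  have hnd : ∀ d : ℤ, ¬ IsUnit d → d ∣ q → ¬ d ∣ p := fun d hd hdq hdp =>
    hd (hcop.isUnit_of_dvd' hdp hdq)
  have hz : ∀ (m : ℕ) (a : ℤ), (a : ZMod m) = 0 ↔ (m : ℤ) ∣ a :=
    fun m a => ZMod.intCast_zmod_eq_zero_iff_dvd a m
  interval_cases q
  · have key : ∀ x y p : ZMod 2, p ≠ 0 → x ^ 2 + y ^ 2 = p ^ 2 → (¬ y = 0 ↔ x = 0) := by decide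
    have := key x y p (by rw [Ne, hz]; exact hnd 2 (by decide) (by decide)) (hred 2)
    simpa only [hz, Nat.cast_ofNat] using this
  · have key : ∀ x y p : ZMod 3, p ≠ 0 → x ^ 2 + y ^ 2 = p ^ 2 → (¬ y = 0 ↔ x = 0) := by decide
    have := key x y p (by rw [Ne, hz]; exact hnd 3 (by decide) (by decide)) (hred 3)
    simpa only [hz, Nat.cast_ofNat] using this
  · have key : ∀ x y p : ZMod 8, 4 * p ≠ 0 → x ^ 2 + y ^ 2 = p ^ 2 →
        (¬ 2 * y = 0 ↔ 2 * x = 0) := by decide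
    have h2 := hnd 2 (by decide) (by decide)
    have h4 : ((4 * p : ℤ) : ZMod 8) ≠ 0 := by rw [Ne, hz]; push_cast; omega
    have hx := hz 8 (2 * x)
    have hy := hz 8 (2 * y)
    push_cast at h4 hx hy
    have := key x y p h4 (hred 8)
    rw [hx, hy] at this
    omega
  · have key : ∀ x y p : ZMod 5, p ≠ 0 → x ^ 2 + y ^ 2 = p ^ 2 → (¬ y = 0 ↔ x = 0) := by decide
    have := key x y p (by rw [Ne, hz]; exact hnd 5 (by decide) (by decide)) (hred 5)
    simpa only [hz, Nat.cast_ofNat] using this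

/-- If `q` is prime it divides `(x + p) (x - p) = -y²` but not both factors; if `q = 4`, then `x` and
`p` are odd. -/
lemma not_dvd_add_iff {p q x y : ℤ} (hcop : IsCoprime p q) (hq3 : 3 ≤ q) (hq5 : q ≤ 5)
    (h : x ^ 2 + y ^ 2 = p ^ 2) (hy : q ∣ y) : ¬ q ∣ x + p ↔ q ∣ -x + p := by
  have hnd : ∀ d : ℤ, ¬ IsUnit d → d ∣ q → ¬ d ∣ p := fun d hd hdq hdp =>
    hd (hcop.isUnit_of_dvd' hdp hdq)
  have hmul : q ∣ (x + p) * (-x + p) := by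
    have he : (x + p) * (-x + p) = y * y := by linear_combination -h
    exact he ▸ hy.mul_right y
  have hprime : Prime q → q % 2 = 1 → (¬ q ∣ x + p ↔ q ∣ -x + p) := by
    intro hqp hodd
    refine ⟨fun h1 => (hqp.dvd_or_dvd hmul).resolve_left h1, fun h2 h1 => ?_⟩
    have h3 : q ∣ 2 * p := by
      have := dvd_add h1 h2
      rwa [show x + p + (-x + p) = 2 * p by ring] at this
    rcases hqp.dvd_or_dvd h3 with h3 | h3
    · have := Int.le_of_dvd (by norm_num) h3
      omega
    · exact hnd q hqp.not_isUnit dvd_rfl h3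
  interval_cases q
  · exact hprime Int.prime_three (by norm_num)
  · have hp2 := hnd 2 (by decide) (by decide)
    have hx2 : (2 : ℤ) ∣ x + p := dvd_add_of_two h (by omega)
    omega
  · exact hprime (Nat.prime_iff_prime_int.1 Nat.prime_five) (by norm_num)

lemma ncard_circlePoints_dvd_snd {p q : ℤ} (hcop : IsCoprime p q) (hq2 : 2 ≤ q) (hq5 : q ≤ 5) :
    (circlePoints p).ncard = 2 * (circlePoints p ∩ {v | q ∣ v.2}).ncard := by
  refine ncard_eq_two_mul_of_involution (finite_circlePoints p) (σ := Prod.swap)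
    Prod.swap_swap Set.inter_subset_left ?_ ?_
  · rintro ⟨x, y⟩ h
    have h : x ^ 2 + y ^ 2 = p ^ 2 := h
    change y ^ 2 + x ^ 2 = p ^ 2
    linarith
  · rintro ⟨x, y⟩ h
    have h : x ^ 2 + y ^ 2 = p ^ 2 := h
    have h' : y ^ 2 + x ^ 2 = p ^ 2 := by linarith
    simpa [circlePoints, h, h'] using not_dvd_snd_iff hcop hq2 hq5 h

lemma ncard_circlePoints_dvd_add {p q : ℤ} (hcop : IsCoprime p q) (hq3 : 3 ≤ q) (hq5 : q ≤ 5) :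
    (circlePoints p ∩ {v | q ∣ v.2}).ncard =
      2 * (circlePoints p ∩ {v | q ∣ v.1 + p ∧ q ∣ v.2}).ncard := by
  refine ncard_eq_two_mul_of_involution ((finite_circlePoints p).inter_of_left _)
    (σ := fun v => (-v.1, v.2)) (fun v => by simp) ?_ ?_ ?_
  · rintro v ⟨h, -, h2⟩
    exact ⟨h, h2⟩
  · rintro ⟨x, y⟩ ⟨h, h2⟩
    have h : x ^ 2 + y ^ 2 = p ^ 2 := h
    refine ⟨?_, h2⟩
    change (-x) ^ 2 + y ^ 2 = p ^ 2
    linarith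
  · rintro ⟨x, y⟩ ⟨h, h2⟩
    have h : x ^ 2 + y ^ 2 = p ^ 2 := h
    have h2 : q ∣ y := h2
    simpa [circlePoints, h, h2] using not_dvd_add_iff hcop hq3 hq5 h h2

lemma ncard_pairs_eq {p q : ℤ} (hq : q ≠ 0) :
    Set.ncard {lm : ℤ × ℤ | (q * lm.1 - p) ^ 2 + (q * lm.2) ^ 2 = p ^ 2} =
      (circlePoints p ∩ {v | q ∣ v.1 + p ∧ q ∣ v.2}).ncard := by
  have hinj : Function.Injective (fun lm : ℤ × ℤ => (q * lm.1 - p, q * lm.2)) := by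
    rintro ⟨l, m⟩ ⟨l', m'⟩ h
    simp only [Prod.mk.injEq] at h
    rw [mul_left_cancel₀ hq h.2, mul_left_cancel₀ hq (sub_left_injective h.1)]
  rw [← Set.ncard_image_of_injective _ hinj]
  congr 1
  ext ⟨x, y⟩
  constructor
  · rintro ⟨⟨l, m⟩, h, he⟩
    simp only [Prod.mk.injEq] at he
    obtain ⟨rfl, rfl⟩ := he
    exact ⟨h, ⟨l, by ring⟩, ⟨m, rfl⟩⟩
  · rintro ⟨h, ⟨l, hl⟩, ⟨m, hm⟩⟩
    have h : x ^ 2 + y ^ 2 = p ^ 2 := h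
    have hl : x + p = q * l := hl
    have hm : y = q * m := hm
    have hx : q * l - p = x := by linarith
    refine ⟨(l, m), ?_, ?_⟩
    · simp only [Set.mem_ofPred_eq, hx, ← hm, h]
    · simp only [hx, ← hm]

open scoped BigOperators

/-- Holt–Zhang / Gauss circle counting: for coprime `p, q` with `p ≠ 0`
and `1 ≤ q ≤ 5`, writing `p² = 2^α₀ · ∏ pᵢ^αᵢ · ∏ qⱼ^βⱼ` with the `pᵢ` distinct primes
`≡ 3 (mod 4)` and the `qⱼ` distinct primes `≡ 1 (mod 4)`, the number of integer pairs
`(l,m)` with `(ql − p)² + (qm)² = p²` equals `4·∏(βⱼ+1)` if `q = 1`, `2·∏(βⱼ+1)` if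
`q = 2`, and `∏(βⱼ+1)` if `q ∈ {3,4,5}`. -/
theorem lattice_points_on_circle_count
    (p q : ℤ) (hcop : IsCoprime p q) (hp : p ≠ 0) (hq1 : 1 ≤ q) (hq5 : q ≤ 5)
    (α₀ s t : ℕ) (pr : Fin s → ℕ) (α : Fin s → ℕ) (qr : Fin t → ℕ) (β : Fin t → ℕ)
    (hprP : ∀ i, Nat.Prime (pr i)) (hpr3 : ∀ i, pr i % 4 = 3)
    (hprInj : Function.Injective pr)
    (hqrP : ∀ j, Nat.Prime (qr j)) (hqr1 : ∀ j, qr j % 4 = 1)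
    (hqrInj : Function.Injective qr)
    (hfact : p ^ 2 = 2 ^ α₀ * (∏ i, (pr i : ℤ) ^ α i) * ∏ j, (qr j : ℤ) ^ β j) :
    Set.ncard {lm : ℤ × ℤ | (q * lm.1 - p) ^ 2 + (q * lm.2) ^ 2 = p ^ 2} =
      (if q = 1 then 4 else if q = 2 then 2 else 1) * ∏ j, (β j + 1) := by
  have hcircle : (circlePoints p).ncard = 4 * ∏ j, (β j + 1) := by
    have he : p ^ 2 = (∏ i, (pr i : ℤ) ^ α i) * ((∏ j, (qr j : ℤ) ^ β j) * 2 ^ α₀) := by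
      rw [hfact]; ring
    -- `p` itself has norm `p²`
    have hne : (normSet (p ^ 2)).Nonempty := by
      refine ⟨⟨p, 0⟩, ?_⟩
      simp [normSet, Zsqrtd.norm_def, sq]
    have hq : ∀ j, ¬ (qr j : ℤ) ∣ 2 ^ α₀ := fun j =>
      not_dvd_two_pow (hqrP j) (by have := hqr1 j; omega) _
    have hpq : ∀ i, ¬ (pr i : ℤ) ∣ (∏ j, (qr j : ℤ) ^ β j) * 2 ^ α₀ := by
      intro i h
      rcases (Nat.prime_iff_prime_int.1 (hprP i)).dvd_or_dvd h with h | h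
      · refine prime_not_dvd_prod (hprP i) _ (fun j _ => hqrP j) (fun j _ he => ?_) h
        have := hqr1 j
        have := hpr3 i
        omega
      · exact not_dvd_two_pow (hprP i) (by have := hpr3 i; omega) _ h
    rw [ncard_circlePoints, he]
    rw [he] at hne
    rw [ncard_normSet_inert_prod hprP hpr3 hprInj hpq _ hne,
      ncard_normSet_split_prod hqrP hqr1 hqrInj hq, ncard_normSet_two_pow, mul_comm]
  rw [ncard_pairs_eq (by omega)]
  by_cases h1 : q = 1
  · subst h1
    simpa using hcircle
  · have hS := ncard_circlePoints_dvd_snd hcop (by omega) hq5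
    by_cases h2 : q = 2
    · subst h2
      have hEq : circlePoints p ∩ {v | 2 ∣ v.1 + p ∧ 2 ∣ v.2} =
          circlePoints p ∩ {v | 2 ∣ v.2} := by
        ext ⟨x, y⟩
        constructor
        · rintro ⟨h, -, h2⟩
          exact ⟨h, h2⟩
        · rintro ⟨h, h2⟩
          exact ⟨h, dvd_add_of_two h h2, h2⟩
      rw [hEq, if_neg h1, if_pos rfl]
      omega
    · have hA := ncard_circlePoints_dvd_add hcop (by omega) hq5
      rw [if_neg h1, if_neg h2]
      omega
end

section
/- Let d ∈ ℚ with d ≠ 0 and set b = 8πd. Then there do not exist integers k and n with n ≠ 0 and a nonpositive integer N such that (π²/n)·(k − (n/b)i − d·i)·(k + (n/b)i − d·i) = 4πN, where i is the imaginary unit. (Consequently, when b/(8π) is rational, the sectors ℋ_{k,m,n} with n ≠ 0 contribute no ∂̄-harmonic (0,1)-forms on the Kodaira–Thurston manifold.) -/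
/-!
For `k, n, N` as in the equation, the imaginary part forces `k = 0`, and the real part becomes
`64 d⁴ π² + 256 N n d² π - n² = 0`. If `N = 0` this makes `π` rational. Otherwise `π` is a root of
`A X² + B X - C` with nonzero integers `A, B, C`, which contradicts the following degree-two case
of Lindemann's theorem (`pi_not_quadratic`).

Let `π'` be the other root and `s = π + π' = -B / A`. Twice the real part of
`(1 + exp (iπ)) (1 + exp (iπ')) = 0` reads
`2 + ∑ exp w = 0`, with `w` ranging over `±iπ, ±iπ', ±is`. These six exponents are the roots of an
integer polynomial with nonzero constant term, and their power sums become integers when the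
exponents are scaled by `A`. Such a relation is impossible (`intCast_add_sum_exp_ne_zero`): by
`LindemannWeierstrass.exp_polynomial_approx`, the numbers `exp w` are extremely close to
`p * g(w) / n` with `p` a large prime, `p ∤ n` and `g` an integer polynomial, so that an integer
not divisible by `p` would have absolute value less than `1`.
-/

open Complex

open Polynomial in
/-- If the power sums of the family `w` are integers after scaling by `A`, then so is
`∑ g(w i)` for an integer polynomial `g`, up to a power of `A`. -/
lemma exists_int_sum_aeval {ι : Type*} [Fintype ι] (w : ι → ℂ) (A : ℤ)
    (hw : ∀ j : ℕ, ∃ m : ℤ, (A : ℂ) ^ j * ∑ i, w i ^ j = m)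
    (g : ℤ[X]) (M : ℕ) (hg : g.natDegree ≤ M) :
    ∃ m : ℤ, (A : ℂ) ^ M * ∑ i, aeval (w i) g = m := by
  choose m hm using hw
  refine ⟨∑ j ∈ Finset.range (M + 1), g.coeff j * A ^ (M - j) * m j, ?_⟩
  have h1 : ∀ i, aeval (w i) g = ∑ j ∈ Finset.range (M + 1), (g.coeff j : ℂ) * w i ^ j := by
    intro i
    rw [aeval_eq_sum_range' (Nat.lt_succ_of_le hg)]
    simp
  simp_rw [h1]
  rw [Finset.sum_comm, Finset.mul_sum]
  push_cast
  refine Finset.sum_congr rfl fun j hj => ?_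
  have hj' : j ≤ M := Nat.lt_succ_iff.mp (Finset.mem_range.mp hj)
  rw [← hm j, ← Finset.mul_sum]
  nth_rewrite 1 [← Nat.sub_add_cancel hj']
  rw [pow_add]
  ring

open Polynomial Filter Topology in
/-- The arithmetic half of Lindemann's argument: if the `w i` are roots of an integer polynomial
not vanishing at `0` and their power sums are integers up to powers of `A`, then `∑ exp (w i)` is
not a nonzero integer. -/
lemma intCast_add_sum_exp_ne_zero {ι : Type*} [Fintype ι] (w : ι → ℂ) (A K : ℤ) (hA : A ≠ 0)
    (hK : K ≠ 0) (hw : ∀ j : ℕ, ∃ m : ℤ, (A : ℂ) ^ j * ∑ i, w i ^ j = m)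
    (f : ℤ[X]) (hf : f.eval 0 ≠ 0) (hroot : ∀ i, aeval (w i) f = 0) :
    (K : ℂ) + ∑ i, Complex.exp (w i) ≠ 0 := by
  intro hsum
  obtain ⟨c, hc⟩ := LindemannWeierstrass.exp_polynomial_approx f hf
  have hf0 : f ≠ 0 := by rintro rfl; simp at hf
  set e := f.natDegree with he
  set D : ℝ := |(A : ℝ)| ^ e * c with hD
  have hlim : Tendsto (fun q : ℕ => (Fintype.card ι : ℝ) * D * (D ^ q / (q.factorial : ℝ)))
      atTop (𝓝 0) := by
    simpa using (FloorSemiring.tendsto_pow_div_factorial_atTop D).const_mul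
      ((Fintype.card ι : ℝ) * D)
  obtain ⟨q₀, hq₀⟩ := eventually_atTop.mp (hlim.eventually (gt_mem_nhds one_pos))
  obtain ⟨p, hp_ge, hp⟩ := Nat.exists_infinite_primes
    (q₀ + (eval 0 f).natAbs + A.natAbs + K.natAbs + 1)
  obtain ⟨n, hn, g, hg, happ⟩ := hc p (by omega) hp
  obtain ⟨m, hm⟩ := exists_int_sum_aeval w A hw g (p * e) (hg.trans (Nat.sub_le _ _))
  have hpi : Prime (p : ℤ) := Nat.prime_iff_prime_int.mp hp
  -- The integer that is both prime to `p` and small.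
  have hndvd : ¬ (p : ℤ) ∣ A ^ (p * e) * (n * K) + p * m := by
    rw [dvd_add_left (dvd_mul_right _ _)]
    intro h
    rcases hpi.dvd_or_dvd h with h | h
    · have := Nat.le_of_dvd (Int.natAbs_pos.mpr hA)
        (Int.natCast_dvd.mp (hpi.dvd_of_dvd_pow h))
      omega
    · rcases hpi.dvd_or_dvd h with h | h
      · exact hn h
      · have := Nat.le_of_dvd (Int.natAbs_pos.mpr hK) (Int.natCast_dvd.mp h)
        omega
  have hkey : ((A ^ (p * e) * (n * K) + p * m : ℤ) : ℂ) =
      -((A : ℂ) ^ (p * e) * ∑ i, (n • Complex.exp (w i) - p • aeval (w i) g)) := by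
    have hs : ∑ i, Complex.exp (w i) = -(K : ℂ) := by linear_combination hsum
    push_cast
    rw [← hm]
    simp only [zsmul_eq_mul, nsmul_eq_mul, Finset.sum_sub_distrib, ← Finset.mul_sum, hs]
    ring
  have hbound : ‖((A ^ (p * e) * (n * K) + p * m : ℤ) : ℂ)‖ < 1 := by
    rw [hkey, norm_neg, norm_mul, norm_pow, Complex.norm_intCast]
    have h1 : ‖∑ i, (n • Complex.exp (w i) - p • aeval (w i) g)‖ ≤
        Fintype.card ι * (c ^ p / ((p - 1).factorial : ℝ)) := by
      refine (norm_sum_le _ _).trans ?_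
      refine (Finset.sum_le_card_nsmul _ _ (c ^ p / ((p - 1).factorial : ℝ)) ?_).trans ?_
      · intro i _
        exact happ ((mem_aroots).mpr ⟨hf0, hroot i⟩)
      · simp
    refine (mul_le_mul_of_nonneg_left h1 (by positivity)).trans_lt ?_
    refine lt_of_eq_of_lt ?_ (hq₀ (p - 1) (by omega))
    have hDp : D ^ p = D * D ^ (p - 1) := by
      rw [← pow_succ', Nat.sub_add_cancel hp.one_le]
    calc |(A : ℝ)| ^ (p * e) * (Fintype.card ι * (c ^ p / ((p - 1).factorial : ℝ)))
        = Fintype.card ι * (D ^ p / ((p - 1).factorial : ℝ)) := by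
          rw [hD, mul_pow, ← pow_mul, mul_comm e p]; ring
      _ = _ := by rw [hDp]; ring
  rw [Complex.norm_intCast] at hbound
  have h0 : A ^ (p * e) * (n * K) + p * m = 0 := by
    rw [← Int.abs_lt_one_iff]
    exact_mod_cast hbound
  exact hndvd (h0 ▸ dvd_zero _)

lemma exists_int_pow_add_pow {u v : ℂ} {a b : ℤ} (hs : u + v = a) (hp : u * v = b) (j : ℕ) :
    ∃ m : ℤ, u ^ j + v ^ j = m := by
  induction j using Nat.strong_induction_on with
  | _ j ih =>
    match j with
    | 0 => exact ⟨2, by norm_num⟩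
    | 1 => exact ⟨a, by simpa using hs⟩
    | j + 2 =>
      obtain ⟨m₁, h₁⟩ := ih (j + 1) (by omega)
      obtain ⟨m₀, h₀⟩ := ih j (by omega)
      refine ⟨a * m₁ - b * m₀, ?_⟩
      push_cast
      rw [← h₁, ← h₀, ← hs, ← hp]
      ring

open Polynomial in
/-- The degree-two case of the transcendence of `π`, for a quadratic with all coefficients nonzero.
The condition `B ≠ 0` keeps the exponents `±is`, `s = -B / A`, away from `0`. -/
lemma pi_not_quadratic (A B C : ℤ) (hA : A ≠ 0) (hB : B ≠ 0) (hC : C ≠ 0) :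
    (A : ℝ) * Real.pi ^ 2 + B * Real.pi - C ≠ 0 := by
  intro h
  have hAC : (A : ℂ) ≠ 0 := by exact_mod_cast hA
  have h' : (A : ℂ) * (Real.pi : ℂ) ^ 2 + B * (Real.pi : ℂ) - C = 0 := by exact_mod_cast h
  -- `t` is the conjugate `π'` of `π`, and `s = π + π'`.
  set s : ℂ := -B / A with hs
  set t : ℂ := s - Real.pi with ht
  have hAs : (A : ℂ) * s = -B := by rw [hs]; field_simp
  have hAt : (A : ℂ) * t = -B - A * Real.pi := by rw [ht, mul_sub, hAs]
  let w : Fin 6 → ℂ := ![Real.pi * I, -(Real.pi * I), t * I, -(t * I), s * I, -(s * I)]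
  have hsum : (A * Real.pi : ℂ) + A * t = (-B : ℤ) := by rw [hAt]; push_cast; ring
  have hprod : (A * Real.pi : ℂ) * (A * t) = (-(A * C) : ℤ) := by
    rw [hAt]; push_cast; linear_combination (-(A : ℂ)) * h'
  have hw : ∀ j : ℕ, ∃ m : ℤ, (A : ℂ) ^ j * ∑ i, w i ^ j = m := by
    intro j
    obtain ⟨m₁, h₁⟩ := exists_int_pow_add_pow hsum hprod j
    obtain ⟨m₂, h₂⟩ := exists_int_pow_add_pow (u := I) (v := -I) (a := 0) (b := 1)
      (by simp) (by simp) j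
    refine ⟨m₂ * (m₁ + (-B) ^ j), ?_⟩
    push_cast
    rw [← h₁, ← h₂, ← hAs]
    simp only [w, Fin.sum_univ_six, Matrix.cons_val, ← mul_neg, mul_pow]
    ring
  let f : ℤ[X] := (Polynomial.C (A ^ 4) * X ^ 4 +
    Polynomial.C (A ^ 2 * (B ^ 2 + 2 * A * C)) * X ^ 2 + Polynomial.C (A ^ 2 * C ^ 2)) *
    (Polynomial.C (A ^ 2) * X ^ 2 + Polynomial.C (B ^ 2))
  have hf : f.eval 0 ≠ 0 := by simp [f, hA, hB, hC]
  have hfac : ∀ r : ℂ, aeval r f = ((A * r) ^ 2 + (A * Real.pi) ^ 2) *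
      ((A * r) ^ 2 + (A * t) ^ 2) * ((A * r) ^ 2 + (A * s) ^ 2) := by
    intro r
    have e1 : (A * Real.pi : ℂ) ^ 2 + (A * t) ^ 2 = B ^ 2 + 2 * A * C := by
      push_cast at hsum hprod
      linear_combination ((A * Real.pi : ℂ) + A * t - B) * hsum - 2 * hprod
    have e2 : (A * Real.pi : ℂ) ^ 2 * (A * t) ^ 2 = A ^ 2 * C ^ 2 := by
      rw [← mul_pow, hprod]; push_cast; ring
    have e3 : ((A * r) ^ 2 + (A * Real.pi) ^ 2) * ((A * r) ^ 2 + (A * t) ^ 2) =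
        (A : ℂ) ^ 4 * r ^ 4 + A ^ 2 * (B ^ 2 + 2 * A * C) * r ^ 2 + A ^ 2 * C ^ 2 := by
      linear_combination (A * r) ^ 2 * e1 + e2
    rw [e3, hAs]
    have two : aeval r (2 : ℤ[X]) = (2 : ℂ) := map_ofNat _ 2
    simp [f, two, mul_pow]
  have hroot : ∀ i, aeval (w i) f = 0 := by
    have hsq : ∀ a : ℂ, (A * (a * I)) ^ 2 + (A * a) ^ 2 = 0 := by
      intro a; linear_combination (A * a) ^ 2 * I_sq
    have hsq' : ∀ a : ℂ, (A * -(a * I)) ^ 2 + (A * a) ^ 2 = 0 := by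
      intro a; linear_combination (A * a) ^ 2 * I_sq
    intro i
    rw [hfac]
    fin_cases i <;> simp [w, hsq, hsq', -mul_neg, -neg_mul]
  refine intCast_add_sum_exp_ne_zero w A 2 hA two_ne_zero hw f hf hroot ?_
  have hπ : Complex.exp (Real.pi * I) = -1 := Complex.exp_pi_mul_I
  have hπ' : Complex.exp (-(Real.pi * I)) = -1 := by rw [Complex.exp_neg, hπ]; norm_num
  have ht1 : Complex.exp (t * I) = -Complex.exp (s * I) := by
    rw [show t * I = s * I + -(Real.pi * I) by rw [ht]; ring, Complex.exp_add, hπ']; ring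
  have ht2 : Complex.exp (-(t * I)) = -Complex.exp (-(s * I)) := by
    rw [show -(t * I) = -(s * I) + Real.pi * I by rw [ht]; ring, Complex.exp_add, hπ]; ring
  simp only [w, Fin.sum_univ_six, Matrix.cons_val, hπ, hπ', ht1, ht2]
  push_cast
  ring

/-- Holt–Zhang: when `d ∈ ℚ \ {0}` and `b = 8πd`, there are no integers
`k`, `n ≠ 0` and nonpositive integer `N` with
`(π²/n)·(k − (n/b)i − d·i)·(k + (n/b)i − d·i) = 4πN`; hence the sectors `ℋ_{k,m,n}` with
`n ≠ 0` contribute no `∂̄`-harmonic `(0,1)`-forms on the Kodaira–Thurston manifold. -/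
theorem no_infinite_orbit_solutions_of_rational_d
    (d : ℚ) (hd : d ≠ 0) (b : ℝ) (hb : b = 8 * Real.pi * (d : ℝ)) :
    ¬ ∃ (k n N : ℤ), n ≠ 0 ∧ N ≤ 0 ∧
      ((Real.pi : ℂ) ^ 2 / (n : ℂ)) *
        ((k : ℂ) - ((n : ℂ) / (b : ℂ)) * Complex.I - (d : ℂ) * Complex.I) *
        ((k : ℂ) + ((n : ℂ) / (b : ℂ)) * Complex.I - (d : ℂ) * Complex.I) =
      4 * (Real.pi : ℂ) * (N : ℂ) := by
  rintro ⟨k, n, N, hn, -, h⟩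
  have hπ : Real.pi ≠ 0 := Real.pi_ne_zero
  have hπC : (Real.pi : ℂ) ≠ 0 := by exact_mod_cast hπ
  have hnC : (n : ℂ) ≠ 0 := by exact_mod_cast hn
  have hdC : (d : ℂ) ≠ 0 := by exact_mod_cast hd
  have hdR : (d : ℝ) ≠ 0 := by exact_mod_cast hd
  have hbC : (b : ℂ) = 8 * Real.pi * d := by rw [hb]; push_cast; ring
  rw [hbC] at h
  have hpoly : 64 * (Real.pi : ℂ) ^ 2 * d ^ 2 * (k ^ 2 - d ^ 2) + n ^ 2 -
      256 * Real.pi * N * n * d ^ 2 - 128 * Real.pi ^ 2 * d ^ 3 * k * I = 0 := by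
    field_simp at h
    ring_nf at h ⊢
    simp only [I_sq] at h
    linear_combination h
  -- The real and imaginary parts of the equation, cleared of denominators.
  have hform : (((64 * Real.pi ^ 2 * d ^ 2 * (k ^ 2 - d ^ 2) + n ^ 2 -
      256 * Real.pi * N * n * d ^ 2 : ℝ) : ℂ)) +
      ((-(128 * Real.pi ^ 2 * d ^ 3 * k) : ℝ) : ℂ) * I = 0 := by
    push_cast
    linear_combination hpoly
  rw [← Complex.mk_eq_add_mul_I, Complex.ext_iff] at hform
  obtain ⟨hre, him⟩ := hform
  simp only [Complex.zero_re, Complex.zero_im] at hre him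
  have hk : (k : ℝ) = 0 := by simpa [hπ, hdR] using him
  rw [hk] at hre
  rcases eq_or_ne N 0 with rfl | hN
  · -- Here `(8 d² π)² = n²`, so `π` is rational.
    have hsq : (8 * (d : ℝ) ^ 2 * Real.pi) ^ 2 = (n : ℝ) ^ 2 := by
      push_cast at hre
      linear_combination -hre
    rcases sq_eq_sq_iff_eq_or_eq_neg.mp hsq with h1 | h1
    · refine irrational_pi ⟨n / (8 * d ^ 2), ?_⟩
      push_cast
      field_simp
      linear_combination -h1
    · refine irrational_pi ⟨-n / (8 * d ^ 2), ?_⟩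
      push_cast
      field_simp
      linear_combination -h1
  · have hnum : d.num ≠ 0 := Rat.num_ne_zero.mpr hd
    have hden : (d.den : ℤ) ≠ 0 := by exact_mod_cast d.den_nz
    have hdenR : (d.den : ℝ) ≠ 0 := by exact_mod_cast d.den_nz
    have hdd : (d : ℝ) * d.den = d.num := by exact_mod_cast Rat.mul_den_eq_num d
    refine pi_not_quadratic (64 * d.num ^ 4) (256 * N * n * d.num ^ 2 * d.den ^ 2)
      (n ^ 2 * d.den ^ 4) (by positivity) (by positivity) (by positivity) ?_
    push_cast
    rw [← hdd]
    linear_combination (-(d.den : ℝ) ^ 4) * hre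
end

section
/- Let k, l, m ∈ ℤ with m ≠ 0 and let b ∈ ℝ. The linear system over ℂ given by −m·f + (k + il − (b/(4π))i)·g = 0 and (k − il)·f + m·g = 0 admits a nonzero solution (f,g) ∈ ℂ² if and only if k = 0 and b·l = 4π(l² + m²). In that case the solution space is one-dimensional, spanned by (f,g) = (m, il). -/
/-!
Write `β = b / (4π)`. Since `m ≠ 0`, the second equation determines `g` from `f`, so a nonzero
solution has `f ≠ 0`, and substituting into the first equation shows that the determinant
`m² + (k + il - iβ)(k - il) = (m² + k² + l² - βl) - iβk` vanishes. Its imaginary part gives `βk = 0`;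
its real part excludes `β = 0` because `m ≠ 0`. Hence `k = 0` and `βl = l² + m²`.
Conversely, under these conditions `(m, il)` is a solution, and every solution is `f / m` times it.
-/

open Complex

/-- for integers `k, l, m` with `m ≠ 0` and `b ∈ ℝ`, the linear system
`−m·f + (k + il − (b/(4π))i)·g = 0`, `(k − il)·f + m·g = 0` has a nonzero solution
`(f,g) ∈ ℂ²` iff `k = 0` and `b·l = 4π(l² + m²)`; in that case the solution space is
one-dimensional, spanned by `(m, il)`. -/
theorem finite_orbit_harmonic_system
    (k l m : ℤ) (hm : m ≠ 0) (b : ℝ) :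
    ((∃ fg : ℂ × ℂ, fg ≠ 0 ∧
        -(m : ℂ) * fg.1 +
          ((k : ℂ) + Complex.I * (l : ℂ) - ((b : ℂ) / (4 * (Real.pi : ℂ))) * Complex.I) * fg.2 = 0 ∧
        ((k : ℂ) - Complex.I * (l : ℂ)) * fg.1 + (m : ℂ) * fg.2 = 0) ↔
      (k = 0 ∧ b * (l : ℝ) = 4 * Real.pi * ((l : ℝ) ^ 2 + (m : ℝ) ^ 2))) ∧
    (k = 0 → b * (l : ℝ) = 4 * Real.pi * ((l : ℝ) ^ 2 + (m : ℝ) ^ 2) →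
      {fg : ℂ × ℂ |
        -(m : ℂ) * fg.1 +
          ((k : ℂ) + Complex.I * (l : ℂ) - ((b : ℂ) / (4 * (Real.pi : ℂ))) * Complex.I) * fg.2 = 0 ∧
        ((k : ℂ) - Complex.I * (l : ℂ)) * fg.1 + (m : ℂ) * fg.2 = 0} =
      {fg : ℂ × ℂ | ∃ c : ℂ, fg = (c * (m : ℂ), c * (Complex.I * (l : ℂ)))}) := by
  have hmC : (m : ℂ) ≠ 0 := by exact_mod_cast hm
  have hmR : (m : ℝ) ≠ 0 := by exact_mod_cast hm
  have hpi : (4 * Real.pi : ℝ) ≠ 0 := by positivity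
  obtain ⟨β, hβ⟩ : ∃ β : ℝ, β = b / (4 * Real.pi) := ⟨_, rfl⟩
  have hβC : (b : ℂ) / (4 * (Real.pi : ℂ)) = (β : ℂ) := by rw [hβ]; push_cast; rfl
  have hb : b = 4 * Real.pi * β := by rw [hβ]; field_simp
  have hiff : b * (l : ℝ) = 4 * Real.pi * ((l : ℝ) ^ 2 + (m : ℝ) ^ 2) ↔
      β * (l : ℝ) = (l : ℝ) ^ 2 + (m : ℝ) ^ 2 := by
    rw [hb, mul_assoc]
    exact mul_right_inj' hpi
  rw [hiff, hβC]
  -- Under the arithmetic conditions, every multiple of `(m, il)` solves the system.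
  have hsol : k = 0 → β * (l : ℝ) = (l : ℝ) ^ 2 + (m : ℝ) ^ 2 → ∀ c : ℂ,
      -(m : ℂ) * (c * (m : ℂ)) +
          ((k : ℂ) + Complex.I * (l : ℂ) - (β : ℂ) * Complex.I) * (c * (Complex.I * (l : ℂ))) = 0 ∧
        ((k : ℂ) - Complex.I * (l : ℂ)) * (c * (m : ℂ)) + (m : ℂ) * (c * (Complex.I * (l : ℂ))) = 0 := by
    intro hk h c
    have hC : (β : ℂ) * (l : ℂ) = (l : ℂ) ^ 2 + (m : ℂ) ^ 2 := by exact_mod_cast h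
    subst hk
    push_cast
    constructor
    · linear_combination c * hC + c * ((l : ℂ) ^ 2 - β * l) * Complex.I_sq
    · ring
  refine ⟨⟨?_, ?_⟩, ?_⟩
  · rintro ⟨⟨f, g⟩, hne, h1, h2⟩
    simp only at h1 h2
    have hf : f ≠ 0 := by
      rintro rfl
      have hg : g = 0 := by simpa [hmC] using h2
      exact hne (by simp [hg])
    have hdet : (m : ℂ) ^ 2 +
        ((k : ℂ) + Complex.I * (l : ℂ) - (β : ℂ) * Complex.I) * ((k : ℂ) - Complex.I * (l : ℂ)) = 0 := by
      apply (mul_eq_zero.mp _).resolve_right hf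
      linear_combination (-(m : ℂ)) * h1 +
        ((k : ℂ) + Complex.I * (l : ℂ) - (β : ℂ) * Complex.I) * h2
    have hre : (m : ℝ) ^ 2 + k ^ 2 + l ^ 2 - β * l = 0 := by
      have h := congrArg Complex.re hdet
      simp [pow_two] at h
      linarith
    have him : β * (k : ℝ) = 0 := by
      have h := congrArg Complex.im hdet
      simp [pow_two] at h
      linarith
    have hβ0 : β ≠ 0 := by
      rintro rfl
      have : 0 < (m : ℝ) ^ 2 := by positivity
      nlinarith [sq_nonneg (k : ℝ), sq_nonneg (l : ℝ)]
    have hk : (k : ℝ) = 0 := (mul_eq_zero.mp him).resolve_left hβ0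
    refine ⟨by exact_mod_cast hk, ?_⟩
    rw [hk] at hre
    linarith
  · rintro ⟨hk, h⟩
    refine ⟨((m : ℂ), Complex.I * (l : ℂ)), ?_, ?_⟩
    · intro h0
      exact hmC (congrArg Prod.fst h0)
    · simpa only [one_mul] using hsol hk h 1
  · intro hk h
    ext ⟨f, g⟩
    simp only [Set.mem_ofPred_eq, Prod.mk.injEq]
    constructor
    · rintro ⟨-, h2⟩
      refine ⟨f / m, by field_simp, ?_⟩
      subst hk
      push_cast at h2
      field_simp
      linear_combination h2
    · rintro ⟨c, rfl, rfl⟩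
      exact hsol hk h c
end
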